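/- Let m and d be integers with 0 ≤ m ≤ d−1, let p be a prime, for each 0 ≤ ℓ ≤ m let r_ℓ = p^{e_ℓ} be a power of p with integer e_ℓ ≥ 0, and let c_0, …, c_m ≥ 0 be integers. Set N_ℓ = (r_ℓ−1)(d+1+c_ℓ−m). For each 0 ≤ ℓ ≤ m and 0 ≤ j ≤ c_ℓ let Σ_{ℓ,j} be a subcomplex of Δ_{N_ℓ} that is Tverberg unavoidable (with respect to r_ℓ-partitions) with respect to every continuous map Δ_{N_ℓ} → ℝ^d, where Σ_{ℓ,0} = Δ_{N_ℓ}. Assume that p(d−m) is even, or m = 0. Then for every collection of continuous maps f_0: Δ_{N_0} → ℝ^d, …, f_m: Δ_{N_m} → ℝ^d there exist an m-dimensional affine subspace L of ℝ^d and, for each 0 ≤ ℓ ≤ m, r_ℓ pairwise disjoint faces σ_1^ℓ, …, σ_{r_ℓ}^ℓ, all belonging to the subcomplex Σ_{ℓ,0} ∩ ⋯ ∩ Σ_{ℓ,c_ℓ}, such that f_ℓ(σ_j^ℓ) ∩ L ≠ ∅ for all 1 ≤ j ≤ r_ℓ. (A constraint topological transversal Tverberg theorem.) -/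

import Mathlib

/-!
The transversal is read off a common zero of a system of equivariant functions, which a Borsuk–Ulam
theorem for elementary abelian `p`-groups on products of joins of `ℤ/p` provides.

*The system.* Put `q = 1` if `p = 2` and `q = 2` otherwise, and suppose first that `d - m = q k`.
The unknowns are `k` complex functionals `z i` on `ℝ^d` (real ones if `p = 2`), parametrized by
joins of `ℤ/p`, and for each `ℓ` a family of `p ^ e ℓ` points `X ℓ g` of the simplex with pairwise
disjoint supports, indexed by `g : (ℤ/p)^{e ℓ}` and parametrized by a product of `e ℓ` joins of
total dimension at most `N ℓ` by means of a staircase subdivision of the product. The functionals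
are required to be orthogonal and, for odd `p`, isotropic, so that their real and imaginary parts
are `d - m` linearly independent real functionals. The values of `z i ∘ f ℓ` on the points `X ℓ g`
are required to depend neither on `g`, which is the vanishing of nontrivial Fourier coefficients
over `(ℤ/p)^{e ℓ}`, nor on `ℓ`. Then all points `f ℓ (X ℓ g)` lie on one `m`-dimensional affine
subspace. Each constraint complex `Σ` contributes one more real function, which is nonnegative,
vanishes exactly on `Σ` and is required to be constant on each family. If this constant were
positive, the supports of the points would be a Tverberg partition of a constant map with no face in
`Σ`. For `m = 0` there are no functionals, and the coordinates of `f` are treated as further real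
functions instead, which makes the parity of `d` irrelevant.

*The zero.* Each function is equivariant with respect to a character of the group, and the
characters are triangular: each has a leading coordinate. If the functions had no common zero, one
could label the points by the sectors of the plane containing the function values. The labels yield
invariant cocycles (a coboundary in degree one for `p = 2`, its Bockstein in degree two for odd `p`)
representing Euler classes, and the product of these cocycles would vanish on all sufficiently small
simplices. In the cohomology of the classifying space this product is a product of linear forms, in
which the monomial of the leading terms has a nonzero coefficient. This coefficient can be extracted
on cochains, by slant operators made of prism operators along cones from one join to the next one
and of the elements `g - 1` and `1 + g + ⋯ + g ^ (p - 1)` of the group ring. They are compatible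
with invariant coboundaries, strip off one Euler cocycle each, and only see small simplices when the
cones are subdivided finely. So the coefficient would be both zero and a product of nonzero elements
of `ℤ/p`.
-/

open scoped BigOperators

noncomputable section

/-- The standard `N`-dimensional simplex, realized in Euclidean space `ℝ^{N+1}`. -/
def stdSimp (N : ℕ) : Set (EuclideanSpace ℝ (Fin (N + 1))) :=
  {x | (∀ i, 0 ≤ x i) ∧ ∑ i, x i = 1}

/-- The face of the standard simplex spanned by the vertex set `S`. -/
def simpFace (N : ℕ) (S : Finset (Fin (N + 1))) : Set (EuclideanSpace ℝ (Fin (N + 1))) :=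
  {x ∈ stdSimp N | ∀ i, x i ≠ 0 → i ∈ S}

/-- A subcomplex of the simplex `Δ_N`: a collection of nonempty vertex sets closed
under passing to nonempty subsets. -/
def IsSubcomplex (N : ℕ) (K : Set (Finset (Fin (N + 1)))) : Prop :=
  (∀ T ∈ K, T.Nonempty) ∧ ∀ T ∈ K, ∀ S : Finset (Fin (N + 1)), S ⊆ T → S.Nonempty → S ∈ K

/-- A Tverberg `r`-partition of a map `f : Δ_N → ℝ^d`: a family of `r` pairwise disjoint
faces whose images under `f` have a common point. -/
def IsTverbergPartition {N d : ℕ}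
    (f : EuclideanSpace ℝ (Fin (N + 1)) → EuclideanSpace ℝ (Fin d))
    (r : ℕ) (σ : Fin r → Finset (Fin (N + 1))) : Prop :=
  (∀ j, (σ j).Nonempty) ∧ (∀ j j', j ≠ j' → Disjoint (σ j) (σ j')) ∧
    (⋂ j, f '' simpFace N (σ j)).Nonempty

/-- A subcomplex `K` of `Δ_N` is Tverberg unavoidable with respect to `r`-partitions of `f`
if every Tverberg `r`-partition of `f` has at least one face lying in `K`. -/
def TverbergUnavoidable {N d : ℕ}
    (f : EuclideanSpace ℝ (Fin (N + 1)) → EuclideanSpace ℝ (Fin d))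
    (r : ℕ) (K : Set (Finset (Fin (N + 1)))) : Prop :=
  ∀ σ : Fin r → Finset (Fin (N + 1)), IsTverbergPartition f r σ → ∃ j, σ j ∈ K

namespace TransversalTverberg

/-! ### Cochains on ordered simplices -/

section Cochains

variable {R V W : Type*} [CommRing R]

/-- Simplicial cochains of all degrees on the full simplex with vertex set `V`. A list of length
`n + 1` is an ordered, possibly degenerate, `n`-simplex; the empty list carries a junk value. -/
abbrev Cochain (R V : Type*) := List V → R

/-- The contraction of cochains with a vertex: `x` is prepended to every simplex. -/
def contract (x : V) : Module.End R (Cochain R V) := LinearMap.funLeft R R (List.cons x)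

/-- The value of the coboundary of a cochain on a given simplex. Unfolding the recursion gives the
alternating sum over the faces. -/
def coboundaryAt : List V → Cochain R V →ₗ[R] R
  | [] => 0
  | x :: l => LinearMap.proj l - coboundaryAt l ∘ₗ contract x

/-- The simplicial coboundary operator. -/
def coboundary : Module.End R (Cochain R V) := LinearMap.pi coboundaryAt

/-- The value on a given simplex of the prism operator of `φ` and `ψ`. -/
def prismAt (φ ψ : V → V) : List V → Cochain R V →ₗ[R] R
  | [] => 0
  | x :: l => LinearMap.proj (φ x :: ψ x :: l.map ψ) - prismAt φ ψ l ∘ₗ contract (φ x)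

/-- The prism operator of two vertex maps: the alternating sum over `j` of the values on
`φ x₀, …, φ xⱼ, ψ xⱼ, …, ψ xₙ`. -/
def prism (φ ψ : V → V) : Module.End R (Cochain R V) := LinearMap.pi (prismAt φ ψ)

/-- The value of a cup product on a given simplex, see `cup`. -/
def cupAt : ℕ → List V → Cochain R V →ₗ[R] Cochain R V →ₗ[R] R
  | _, [] => 0
  | 0, x :: l => (LinearMap.mul R R).compl₁₂ (LinearMap.proj [x]) (LinearMap.proj (x :: l))
  | k + 1, x :: l => cupAt k l ∘ₗ contract x

/-- The cup product `a ⌣ b`, where `a` is used in degree `k` only: `a` on the first `k + 1` vertices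
times `b` on the remaining ones, the vertex number `k` being shared. -/
def cup (k : ℕ) : Cochain R V →ₗ[R] Module.End R (Cochain R V) :=
  LinearMap.mk₂ R (fun a b l => cupAt k l a b) (fun _ _ _ => by ext; simp)
    (fun _ _ _ => by ext; simp) (fun _ _ _ => by ext; simp) (fun _ _ _ => by ext; simp)

/-- The unit of the cup product: `1` on vertices and zero in the other degrees. -/
def unitCochain : Cochain R V := fun l => if l.length = 1 then 1 else 0

/-- The pullback of cochains along a vertex map. -/
def pullback (g : V → W) : Cochain R W →ₗ[R] Cochain R V := LinearMap.funLeft R R (List.map g)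

@[simp] theorem contract_apply (x : V) (ω : Cochain R V) (l : List V) :
    contract x ω l = ω (x :: l) := rfl

@[simp] theorem pullback_apply (g : V → W) (ω : Cochain R W) (l : List V) :
    pullback g ω l = ω (l.map g) := rfl

@[simp] theorem coboundary_nil (ω : Cochain R V) : coboundary ω [] = 0 := rfl

theorem coboundary_cons (ω : Cochain R V) (x : V) (l : List V) :
    coboundary ω (x :: l) = ω l - coboundary (contract x ω) l := rfl

@[simp] theorem prism_nil (φ ψ : V → V) (ω : Cochain R V) : prism φ ψ ω [] = 0 := rfl

theorem prism_cons (φ ψ : V → V) (ω : Cochain R V) (x : V) (l : List V) :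
    prism φ ψ ω (x :: l) = ω (φ x :: ψ x :: l.map ψ) - prism φ ψ (contract (φ x) ω) l := rfl

@[simp] theorem cup_nil (k : ℕ) (a b : Cochain R V) : cup k a b [] = 0 := by cases k <;> rfl

@[simp] theorem cup_zero_cons (a b : Cochain R V) (x : V) (l : List V) :
    cup 0 a b (x :: l) = a [x] * b (x :: l) := rfl

theorem cup_succ_cons (k : ℕ) (a b : Cochain R V) (x : V) (l : List V) :
    cup (k + 1) a b (x :: l) = cup k (contract x a) b l := rfl

theorem contract_pullback (x : V) (g : V → W) (ω : Cochain R W) :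
    contract x (pullback g ω) = pullback g (contract (g x) ω) := rfl

theorem contract_coboundary (x : V) (ω : Cochain R V) :
    contract x (coboundary ω) = ω - coboundary (contract x ω) := rfl

theorem contract_prism (x : V) (φ ψ : V → V) (ω : Cochain R V) :
    contract x (prism φ ψ ω) =
      pullback ψ (contract (ψ x) (contract (φ x) ω)) - prism φ ψ (contract (φ x) ω) := rfl

theorem contract_cup_zero (x : V) (a b : Cochain R V) :
    contract x (cup 0 a b) = a [x] • contract x b := rfl

theorem contract_cup_succ (x : V) (k : ℕ) (a b : Cochain R V) :
    contract x (cup (k + 1) a b) = cup k (contract x a) b := rfl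

theorem coboundary_apply_congr {ω ω' : Cochain R V} {l : List V}
    (h : ∀ t, t.length + 1 = l.length → ω t = ω' t) : coboundary ω l = coboundary ω' l := by
  induction l generalizing ω ω' with
  | nil => rfl
  | cons x l ih =>
    rw [coboundary_cons, coboundary_cons, h l rfl, ih (ω := contract x ω) (ω' := contract x ω')
      fun t ht => h (x :: t) (congrArg Nat.succ ht)]

theorem coboundary_unitCochain : coboundary (unitCochain : Cochain R V) = 0 := by
  funext l
  rcases l with _ | ⟨x, _ | ⟨y, l⟩⟩
  · rfl
  · simp [coboundary_cons, unitCochain]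
  · cases l with
    | nil => simp [coboundary_cons, unitCochain]
    | cons z l =>
      refine (coboundary_apply_congr (ω' := 0) fun t ht => ?_).trans (by simp)
      simp only [List.length_cons] at ht
      exact if_neg (by omega)

theorem cup_congr_left (k : ℕ) {a a' : Cochain R V} (b : Cochain R V)
    (h : ∀ t, t.length = k + 1 → a t = a' t) : cup k a b = cup k a' b := by
  funext l
  induction k generalizing a a' l with
  | zero => cases l <;> simp [h]
  | succ k ih =>
    cases l with
    | nil => rw [cup_nil, cup_nil]
    | cons x l =>
      simp only [cup_succ_cons]
      exact ih (fun t ht => h (x :: t) (by simp [ht])) l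

theorem coboundary_pullback (g : V → W) (ω : Cochain R W) :
    coboundary (pullback g ω) = pullback g (coboundary ω) := by
  funext l
  induction l generalizing ω with
  | nil => rfl
  | cons x l ih => simpa [coboundary_cons, contract_pullback] using ih (contract (g x) ω)

theorem commute_pullback_coboundary (g : V → V) :
    Commute (pullback g : Module.End R (Cochain R V)) coboundary :=
  LinearMap.ext fun ω => (coboundary_pullback g ω).symm

theorem pullback_cup (g : V → W) (k : ℕ) (a b : Cochain R W) :
    pullback g (cup k a b) = cup k (pullback g a) (pullback g b) := by
  funext l
  induction k generalizing a l with
  | zero => cases l <;> simp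
  | succ k ih =>
    cases l with
    | nil => simp
    | cons x l => simpa [cup_succ_cons, contract_pullback] using ih (contract (g x) a) l

theorem commute_pullback_prism {g φ ψ : V → V} (hφ : Function.Commute φ g)
    (hψ : Function.Commute ψ g) :
    Commute (pullback g : Module.End R (Cochain R V)) (prism φ ψ) := by
  ext ω l
  induction l generalizing ω with
  | nil => rfl
  | cons x l ih =>
    simpa [prism_cons, contract_pullback, hφ.eq, hψ.eq, hψ.comp_eq] using ih (contract (g (φ x)) ω)

theorem pullback_pullback {U : Type*} (g : U → V) (h : V → W) (ω : Cochain R W) :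
    pullback g (pullback h ω) = pullback (h ∘ g) ω := by
  funext l; simp

theorem pullback_mul_pullback (g h : V → V) :
    (pullback g * pullback h : Module.End R (Cochain R V)) = pullback (h ∘ g) :=
  LinearMap.ext (pullback_pullback g h)

theorem pullback_pow (g : V → V) (k : ℕ) :
    (pullback g ^ k : Module.End R (Cochain R V)) = pullback g^[k] := by
  induction k with
  | zero => ext ω l; simp
  | succ k ih => rw [pow_succ, ih, pullback_mul_pullback, Function.iterate_succ']

theorem pullback_id : (pullback id : Module.End R (Cochain R V)) = 1 := by ext ω l; simp

theorem pullback_unitCochain (g : V → V) :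
    pullback g (unitCochain : Cochain R V) = unitCochain := by
  funext l; simp [unitCochain]

theorem prism_mul_coboundary_add (φ ψ : V → V) :
    (prism φ ψ * coboundary + coboundary * prism φ ψ : Module.End R (Cochain R V)) =
      pullback ψ - pullback φ := by
  ext ω l
  induction l generalizing ω with
  | nil => simp
  | cons x l ih =>
    have hpull := congrFun (coboundary_pullback ψ (contract (ψ x) (contract (φ x) ω))) l
    have htail := ih (contract (φ x) ω)
    simp only [LinearMap.add_apply, LinearMap.sub_apply, Module.End.mul_apply, Pi.add_apply,
      Pi.sub_apply, pullback_apply, List.map_cons, prism_cons, coboundary_cons, contract_prism,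
      contract_coboundary, contract_apply, map_sub] at hpull htail ⊢
    linear_combination htail - hpull

theorem coboundary_cup (k : ℕ) (a : Cochain R V) {b : Cochain R V} (hb : b [] = 0) :
    coboundary (cup k a b) =
      cup (k + 1) (coboundary a) b + (-1 : R) ^ k • cup k a (coboundary b) := by
  funext l
  induction k generalizing a l with
  | zero =>
    cases l with
    | nil => simp
    | cons x l =>
      rw [coboundary_cons, contract_cup_zero, map_smul]
      cases l <;> simp [hb, cup_succ_cons, coboundary_cons]; ring
  | succ k ih =>
    cases l with
    | nil => simp
    | cons x l =>
      simp only [coboundary_cons, contract_cup_succ, ih, Pi.add_apply, Pi.smul_apply,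
        cup_succ_cons, contract_coboundary, map_sub, LinearMap.sub_apply, Pi.sub_apply,
        smul_eq_mul]
      ring

end Cochains

/-! ### Slant operators on cochains -/

section Slant

variable {R V : Type*} [CommRing R] {p : ℕ}

/-- The element `g - 1` of the group ring, for `g` acting by pullback. -/
def diffOp (g : V → V) : Module.End R (Cochain R V) := pullback g - 1

/-- The norm `1 + g + ⋯ + g ^ (p - 1)`, for `g` acting by pullback. -/
def normOp (p : ℕ) (g : V → V) : Module.End R (Cochain R V) :=
  ∑ k ∈ Finset.range p, pullback g ^ k

/-- The sum of the prism operators of consecutive maps `φ₀, φ₁, …, φₙ`, a homotopy between the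
pullbacks along `φ₀` and `φₙ`. -/
def prismSum (φ : ℕ → V → V) (n : ℕ) : Module.End R (Cochain R V) :=
  ∑ s ∈ Finset.range n, prism (φ (s + 1)) (φ s)

/-- The slant operator of a free `ℤ/p`-generator `g`, built from `Q = prismSum φ n` and
`Q' = prismSum φ' n` as `(g - 1) Q` for `p = 2` and `(g - 1) Q N Q'` for odd `p`. When `φ` and `φ'`
are discretized cones over the complex, it amounts to evaluation on the next one or two cells of the
standard resolution, and it lowers the degree by one or two respectively. -/
def slant (p : ℕ) (g : V → V) (φ φ' : ℕ → V → V) (n : ℕ) : Module.End R (Cochain R V) :=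
  if p = 2 then diffOp g * prismSum φ n
  else diffOp g * prismSum φ n * (normOp p g * prismSum φ' n)

theorem commute_diffOp_coboundary (g : V → V) :
    Commute (diffOp g : Module.End R (Cochain R V)) coboundary :=
  (commute_pullback_coboundary g).sub_left (Commute.one_left _)

theorem commute_normOp_coboundary (g : V → V) :
    Commute (normOp p g : Module.End R (Cochain R V)) coboundary :=
  Commute.sum_left _ _ _ fun _ _ => (commute_pullback_coboundary g).pow_left _

theorem prismSum_mul_coboundary_add (φ : ℕ → V → V) (n : ℕ) :
    (prismSum φ n * coboundary + coboundary * prismSum φ n : Module.End R (Cochain R V)) =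
      pullback (φ 0) - pullback (φ n) := by
  rw [prismSum, Finset.sum_mul, Finset.mul_sum, ← Finset.sum_add_distrib]
  simp only [prism_mul_coboundary_add]
  exact Finset.sum_range_sub' (fun s => pullback (φ s)) n

theorem mul_prismSum_mul_coboundary {T : Module.End R (Cochain R V)} {φ : ℕ → V → V} {n : ℕ}
    (hT : Commute T coboundary) (hφ₀ : φ 0 = id) (hφₙ : T * pullback (φ n) = 0) :
    T * prismSum φ n * coboundary = T - coboundary * (T * prismSum φ n) := by
  have hQ := prismSum_mul_coboundary_add (R := R) φ n
  rw [hφ₀, pullback_id, ← eq_sub_iff_add_eq] at hQ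
  rw [mul_assoc, hQ, mul_sub, mul_sub, hφₙ, mul_one, sub_zero, ← mul_assoc, hT.eq, mul_assoc]

theorem diffOp_mul_normOp {g : V → V} (hg : g^[p] = id) :
    (diffOp g * normOp p g : Module.End R (Cochain R V)) = 0 := by
  rw [diffOp, normOp, mul_geom_sum, pullback_pow, hg, pullback_id, sub_self]

theorem normOp_mul_diffOp {g : V → V} (hg : g^[p] = id) :
    (normOp p g * diffOp g : Module.End R (Cochain R V)) = 0 := by
  rw [diffOp, normOp, geom_sum_mul, pullback_pow, hg, pullback_id, sub_self]

theorem normOp_mul_slant {g : V → V} (hg : g^[p] = id) (φ φ' : ℕ → V → V) (n : ℕ) :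
    (normOp p g * slant p g φ φ' n : Module.End R (Cochain R V)) = 0 := by
  unfold slant
  split_ifs
  · rw [← mul_assoc, normOp_mul_diffOp hg, zero_mul]
  · rw [← mul_assoc, ← mul_assoc (normOp p g) (diffOp g), normOp_mul_diffOp hg, zero_mul, zero_mul]

theorem diffOp_mul_pullback_of_comp_eq {g φ : V → V} (h : φ ∘ g = φ) :
    (diffOp g * pullback φ : Module.End R (Cochain R V)) = 0 := by
  rw [diffOp, sub_mul, pullback_mul_pullback, h, one_mul, sub_self]

theorem pullback_pow_apply_of_invariant {g : V → V} {ω : Cochain R V} (h : pullback g ω = ω)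
    (k : ℕ) : (pullback g ^ k) ω = ω := by
  rw [Module.End.pow_apply]
  exact Function.iterate_fixed h k

theorem normOp_apply_of_invariant [CharP R p] {g : V → V} {ω : Cochain R V}
    (h : pullback g ω = ω) : normOp p g ω = 0 := by
  rw [normOp, LinearMap.sum_apply, Finset.sum_congr rfl fun k _ =>
    pullback_pow_apply_of_invariant h k]
  ext l; simp

theorem normOp_mul_pullback_of_comp_eq [CharP R p] {g φ : V → V} (h : φ ∘ g = φ) :
    (normOp p g * pullback φ : Module.End R (Cochain R V)) = 0 :=
  LinearMap.ext fun ω => normOp_apply_of_invariant <| by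
    rw [← Module.End.mul_apply, pullback_mul_pullback, h]

theorem normOp_two [CharP R 2] (g : V → V) :
    (normOp 2 g : Module.End R (Cochain R V)) = diffOp g := by
  have hneg : (-1 : Module.End R (Cochain R V)) = 1 := by
    ext ω l
    exact CharTwo.neg_eq (ω l)
  rw [normOp, Finset.sum_range_succ, Finset.sum_range_one, pow_zero, pow_one, diffOp,
    sub_eq_add_neg, hneg, add_comm]

theorem slant_two_coboundary [CharP R 2] {g : V → V} {φ φ' : ℕ → V → V} {n : ℕ} (hφ₀ : φ 0 = id)
    (hφₙ : φ n ∘ g = φ n) {η : Cochain R V} (hη : normOp 2 g η = 0) :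
    slant 2 g φ φ' n (coboundary η) = -coboundary (slant 2 g φ φ' n η) := by
  have h := mul_prismSum_mul_coboundary (commute_diffOp_coboundary (R := R) g) hφ₀
    (diffOp_mul_pullback_of_comp_eq hφₙ)
  rw [slant, if_pos rfl, ← Module.End.mul_apply, h, LinearMap.sub_apply, ← normOp_two g, hη,
    zero_sub, Module.End.mul_apply]

theorem slant_coboundary_of_ne_two [CharP R p] (hp : p ≠ 2) {g : V → V} (hg : g^[p] = id)
    {φ φ' : ℕ → V → V} {n : ℕ} (hφ₀ : φ 0 = id) (hφ₀' : φ' 0 = id) (hφₙ : φ n ∘ g = φ n)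
    (hφₙ' : φ' n ∘ g = φ' n) {η : Cochain R V} (hη : normOp p g η = 0) :
    slant p g φ φ' n (coboundary η) = coboundary (slant p g φ φ' n η) := by
  have hA := mul_prismSum_mul_coboundary (commute_diffOp_coboundary (R := R) g) hφ₀
    (diffOp_mul_pullback_of_comp_eq hφₙ)
  have hN := mul_prismSum_mul_coboundary (commute_normOp_coboundary (R := R) (p := p) g) hφ₀'
    (normOp_mul_pullback_of_comp_eq hφₙ')
  have key : slant p g φ φ' n * coboundary =
      diffOp g * prismSum φ n * normOp p g + coboundary * slant (R := R) p g φ φ' n := by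
    rw [slant, if_neg hp, mul_assoc (diffOp g * prismSum φ n), hN, mul_sub,
      ← mul_assoc _ coboundary, hA, sub_mul, ← mul_assoc (diffOp g) (normOp p g),
      diffOp_mul_normOp hg, zero_mul, zero_sub, sub_neg_eq_add, mul_assoc coboundary]
  rw [← Module.End.mul_apply, key, LinearMap.add_apply, Module.End.mul_apply, hη, map_zero,
    zero_add, Module.End.mul_apply]

/-- On cochains of norm zero, such as `g`-invariant ones, the slant operator commutes with the
coboundary up to a scalar: `Q` anticommutes with the coboundary up to `1 - φₙ`; the terms `1` are
killed by `N η = 0` and `(g - 1) N = 0` (for `p = 2` one has `N = g - 1`), and the terms `φₙ` by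
their `g`-invariance. -/
theorem exists_smul_eq_slant_coboundary [CharP R p] {g : V → V} (hg : g^[p] = id)
    {φ φ' : ℕ → V → V} {n : ℕ} (hφ₀ : φ 0 = id) (hφ₀' : φ' 0 = id) (hφₙ : φ n ∘ g = φ n)
    (hφₙ' : φ' n ∘ g = φ' n) {η : Cochain R V} (hη : normOp p g η = 0) :
    ∃ c : R, slant p g φ φ' n (coboundary η) = c • coboundary (slant p g φ φ' n η) := by
  by_cases hp : p = 2
  · subst hp
    exact ⟨-1, by rw [slant_two_coboundary hφ₀ hφₙ hη, neg_one_smul]⟩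
  · exact ⟨1, by rw [slant_coboundary_of_ne_two hp hg hφ₀ hφ₀' hφₙ hφₙ' hη, one_smul]⟩

theorem slant_apply_nil (g : V → V) (φ φ' : ℕ → V → V) (n : ℕ) (η : Cochain R V) :
    slant p g φ φ' n η [] = 0 := by
  have hdiff (ω : Cochain R V) : diffOp g ω [] = 0 := by simp [diffOp]
  unfold slant
  split_ifs <;> simp only [Module.End.mul_apply, hdiff]

theorem commute_pullback_prismSum {h : V → V} {φ : ℕ → V → V}
    (hφ : ∀ s, Function.Commute (φ s) h) (n : ℕ) :
    Commute (pullback h : Module.End R (Cochain R V)) (prismSum φ n) :=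
  Commute.sum_right _ _ _ fun _ _ => commute_pullback_prism (hφ _) (hφ _)

theorem commute_pullback_slant {g h : V → V} {φ φ' : ℕ → V → V} (n : ℕ)
    (hgh : Function.Commute g h) (hφ : ∀ s, Function.Commute (φ s) h)
    (hφ' : ∀ s, Function.Commute (φ' s) h) :
    Commute (pullback h : Module.End R (Cochain R V)) (slant p g φ φ' n) := by
  have hpull : Commute (pullback h : Module.End R (Cochain R V)) (pullback g) := by
    rw [commute_iff_eq, pullback_mul_pullback, pullback_mul_pullback, hgh.comp_eq]
  have hdiff : Commute (pullback h : Module.End R (Cochain R V)) (diffOp g) :=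
    hpull.sub_right (Commute.one_right _)
  have hnorm : Commute (pullback h : Module.End R (Cochain R V)) (normOp p g) :=
    Commute.sum_right _ _ _ fun _ _ => hpull.pow_right _
  unfold slant
  split_ifs
  · exact hdiff.mul_right (commute_pullback_prismSum hφ n)
  · exact (hdiff.mul_right (commute_pullback_prismSum hφ n)).mul_right
      (hnorm.mul_right (commute_pullback_prismSum hφ' n))

end Slant

/-! ### Normalized classes and the Bockstein cocycle -/

section Normalized

variable {R V W : Type*} [CommRing R]

theorem cup_cons_of_contract_eq_zero (k : ℕ) {a : Cochain R V} {x : V} (h : contract x a = 0)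
    (b : Cochain R V) (l : List V) : cup k a b (x :: l) = 0 := by
  cases k with
  | zero =>
    have hx : a [x] = 0 := congrFun h []
    rw [cup_zero_cons, hx, zero_mul]
  | succ k => rw [cup_succ_cons, h, map_zero, LinearMap.zero_apply, Pi.zero_apply]

/-- Normalized cochains: those vanishing on all simplices with a repeated consecutive vertex. -/
def IsNormalized (c : Cochain R W) : Prop := ∀ l w l', c (l ++ w :: w :: l') = 0

protected theorem IsNormalized.contract {c : Cochain R W} (hc : IsNormalized c) (x : W) :
    IsNormalized (contract x c) := fun l => hc (x :: l)

theorem IsNormalized.contract_contract {c : Cochain R W} (hc : IsNormalized c) (x : W) :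
    contract x (contract x c) = 0 := funext (hc [] x)

theorem prism_eq_zero_of_contract {φ ψ : V → V} {ω : Cochain R V}
    (h : ∀ x, contract (φ x) ω = 0) : prism φ ψ ω = 0 := by
  funext l
  cases l with
  | nil => rfl
  | cons x l =>
    have hx : ω (φ x :: ψ x :: l.map ψ) = 0 := congrFun (h x) _
    rw [prism_cons, hx, h, map_zero, Pi.zero_apply, sub_zero, Pi.zero_apply]

theorem prism_unitCochain (φ ψ : V → V) : prism φ ψ (unitCochain : Cochain R V) = 0 := by
  funext l
  cases l with
  | nil => rfl
  | cons x l =>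
    rw [prism_cons, prism_eq_zero_of_contract (ω := contract (φ x) unitCochain) fun y => ?_]
    · simp [unitCochain]
    · funext t
      simp [unitCochain]

theorem prism_cup_pullback {φ ψ : V → V} {u : V → W} (hφ : ∀ x, u (φ x) = u x)
    (hψ : ∀ x, u (ψ x) = u x) {c : Cochain R W} (hc : IsNormalized c) (k : ℕ) (ω : Cochain R V) :
    prism φ ψ (cup k (pullback u c) ω) = (-1 : R) ^ k • cup k (pullback u c) (prism φ ψ ω) := by
  funext l
  induction k generalizing c l with
  | zero =>
    cases l with
    | nil => simp
    | cons x l =>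
      rw [prism_cons, contract_cup_zero, map_smul]
      simp [hφ, prism_cons, mul_sub]
  | succ k ih =>
    cases l with
    | nil => simp
    | cons x l =>
      have hzero : contract (ψ x) (pullback u (contract (u x) c)) = 0 := by
        rw [contract_pullback, hψ, hc.contract_contract, map_zero]
      rw [prism_cons, contract_cup_succ, cup_succ_cons, contract_pullback, hφ,
        cup_cons_of_contract_eq_zero k hzero, ih (hc.contract _), zero_sub, Pi.smul_apply,
        Pi.smul_apply, cup_succ_cons, contract_pullback, pow_succ, mul_neg_one, neg_smul]

/-- When `u` is constant along `φ`, only the first term of the prism operator contributes. -/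
theorem prism_cup_succ_pullback {φ ψ : V → V} {u : V → W} {w : W} (hφ : ∀ x, u (φ x) = w)
    {c : Cochain R W} (hc : IsNormalized c) (k : ℕ) (ω : Cochain R V) :
    prism φ ψ (cup (k + 1) (pullback u c) ω) =
      pullback ψ (cup k (pullback u (contract w c)) ω) := by
  funext l
  cases l with
  | nil => simp
  | cons x l =>
    rw [prism_cons, contract_cup_succ, cup_succ_cons, contract_pullback, hφ,
      prism_eq_zero_of_contract fun y => funext fun t => ?_]
    · simp
    · refine cup_cons_of_contract_eq_zero k ?_ ω t
      rw [contract_pullback, hφ, hc.contract_contract, map_zero]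

theorem prismSum_unitCochain (φ : ℕ → V → V) (n : ℕ) :
    prismSum φ n (unitCochain : Cochain R V) = 0 := by
  simp [prismSum, prism_unitCochain]

theorem prismSum_cup_pullback {φ : ℕ → V → V} {u : V → W} (hφ : ∀ s x, u (φ s x) = u x)
    {c : Cochain R W} (hc : IsNormalized c) (k n : ℕ) (ω : Cochain R V) :
    prismSum φ n (cup k (pullback u c) ω) =
      (-1 : R) ^ k • cup k (pullback u c) (prismSum φ n ω) := by
  simp only [prismSum, LinearMap.sum_apply, prism_cup_pullback (hφ _) (hφ _) hc, map_sum,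
    Finset.smul_sum]

theorem prismSum_cup_succ_pullback {φ : ℕ → V → V} {n : ℕ} (hn : n ≠ 0) (hφ₀ : φ 0 = id)
    {u : V → W} {w : W} (hφ : ∀ s x, u (φ (s + 1) x) = w) {c : Cochain R W} (hc : IsNormalized c)
    (k : ℕ) (ω : Cochain R V) :
    prismSum φ n (cup (k + 1) (pullback u c) ω) = cup k (pullback u (contract w c)) ω := by
  obtain ⟨n, rfl⟩ := Nat.exists_eq_succ_of_ne_zero hn
  have hpos (s : ℕ) : pullback (φ (s + 1)) (cup k (pullback u (contract w c)) ω) = 0 := by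
    funext l
    cases l with
    | nil => simp
    | cons x l =>
      refine cup_cons_of_contract_eq_zero k ?_ ω _
      rw [contract_pullback, hφ, hc.contract_contract, map_zero]
  rw [prismSum, LinearMap.sum_apply]
  simp only [prism_cup_succ_pullback (hφ _) hc]
  rw [Finset.sum_range_succ', Finset.sum_eq_zero fun s _ => hpos s, zero_add, hφ₀, pullback_id,
    Module.End.one_apply]

theorem commute_pullback_cup {g : V → V} {a : Cochain R V} (ha : pullback g a = a) (k : ℕ) :
    Commute (pullback g) (cup k a) :=
  LinearMap.ext fun ω => (pullback_cup g k a ω).trans (by rw [ha]; rfl)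

end Normalized

section Bockstein

variable {V : Type*} {p : ℕ}

/-- The failure of additivity of the representatives of least absolute value of the differences
`b - a` and `c - b`. -/
def bocksteinDefect (a b c : ZMod p) : ℤ :=
  (b - a).valMinAbs + (c - b).valMinAbs - (c - a).valMinAbs

/-- The Bockstein cocycle of `ℤ/p`: the defect of integer representatives, divided by `p`. -/
def bockstein (a b c : ZMod p) : ZMod p := (bocksteinDefect a b c / (p : ℤ) : ℤ)

theorem dvd_bocksteinDefect (a b c : ZMod p) : (p : ℤ) ∣ bocksteinDefect a b c := by
  rw [← ZMod.intCast_zmod_eq_zero_iff_dvd]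
  simp [bocksteinDefect]

@[simp] theorem bockstein_self_left (a b : ZMod p) : bockstein a a b = 0 := by
  simp [bockstein, bocksteinDefect]

@[simp] theorem bockstein_self_right (a b : ZMod p) : bockstein a b b = 0 := by
  simp [bockstein, bocksteinDefect]

theorem bockstein_add_right (a b c t : ZMod p) :
    bockstein (a + t) (b + t) (c + t) = bockstein a b c := by
  simp [bockstein, bocksteinDefect]

theorem bockstein_cocycle [NeZero p] (a b c d : ZMod p) :
    bockstein b c d - (bockstein a c d - (bockstein a b d - bockstein a b c)) = 0 := by
  have hp : (p : ℤ) ≠ 0 := by exact_mod_cast NeZero.ne p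
  have hint : bocksteinDefect b c d / (p : ℤ) - (bocksteinDefect a c d / (p : ℤ) -
      (bocksteinDefect a b d / (p : ℤ) - bocksteinDefect a b c / (p : ℤ))) = 0 := by
    apply mul_left_cancel₀ hp
    simp only [mul_sub, Int.mul_ediv_cancel' (dvd_bocksteinDefect _ _ _)]
    simp only [bocksteinDefect]
    ring
  simpa [bockstein] using congrArg (Int.cast : ℤ → ZMod p) hint

theorem sum_range_natCast_zmod [NeZero p] {M : Type*} [AddCommMonoid M] (F : ZMod p → M) :
    ∑ k ∈ Finset.range p, F (k : ZMod p) = ∑ z, F z :=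
  Finset.sum_nbij' (fun k => (k : ZMod p)) ZMod.val (by simp)
    (fun z _ => Finset.mem_range.2 (ZMod.val_lt z))
    (fun _ hk => ZMod.val_cast_of_lt (Finset.mem_range.1 hk)) (by simp) (by simp)

theorem sum_bockstein [NeZero p] (a b : ZMod p) :
    ∑ k ∈ Finset.range p, bockstein 0 (a + (k : ZMod p)) (b + (k : ZMod p)) = b - a := by
  have hp : (p : ℤ) ≠ 0 := by exact_mod_cast NeZero.ne p
  have htranslate (a : ZMod p) : ∑ k ∈ Finset.range p, (a + (k : ZMod p)).valMinAbs =
      ∑ z : ZMod p, z.valMinAbs := by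
    rw [sum_range_natCast_zmod fun z : ZMod p => (a + z).valMinAbs]
    exact Equiv.sum_comp (Equiv.addLeft a) ZMod.valMinAbs
  have hint : (p : ℤ) * ∑ k ∈ Finset.range p,
      bocksteinDefect (0 : ZMod p) (a + (k : ZMod p)) (b + (k : ZMod p)) / (p : ℤ) =
        p * (b - a).valMinAbs := by
    simp only [Finset.mul_sum, Int.mul_ediv_cancel' (dvd_bocksteinDefect _ _ _)]
    simp only [bocksteinDefect, sub_zero, add_sub_add_right_eq_sub]
    rw [Finset.sum_sub_distrib, Finset.sum_add_distrib, htranslate, htranslate]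
    simp
  have hcast := congrArg (Int.cast : ℤ → ZMod p) (mul_left_cancel₀ hp hint)
  rwa [ZMod.coe_valMinAbs, Int.cast_sum] at hcast

/-- The generators of the cohomology of `ℤ/p` as cochains on the simplex with vertex set `ℤ/p`. The
degree-one generator and its Bockstein are gathered in one function since their degrees differ. -/
def universalEulerCochain : Cochain (ZMod p) (ZMod p)
  | [a, b] => b - a
  | [a, b, c] => bockstein a b c
  | _ => 0

/-- The Euler class of a label function `s : V → ℤ/p`. -/
def eulerCocycle (s : V → ZMod p) : Cochain (ZMod p) V := pullback s universalEulerCochain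

theorem isNormalized_universalEulerCochain :
    IsNormalized (universalEulerCochain (p := p)) := by
  rintro (_ | ⟨a, _ | ⟨b, _ | ⟨c, _ | ⟨d, l⟩⟩⟩⟩) w (_ | ⟨e, _ | _⟩) <;>
    simp [universalEulerCochain]

theorem pullback_add_universalEulerCochain (t : ZMod p) :
    pullback (· + t) universalEulerCochain = universalEulerCochain := by
  funext l
  rcases l with _ | ⟨x, _ | ⟨y, _ | ⟨z, _ | ⟨w, l⟩⟩⟩⟩ <;>
    simp [universalEulerCochain, bockstein_add_right]

theorem pullback_eulerCocycle {s : V → ZMod p} {g : V → V} {t : ZMod p}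
    (h : ∀ x, s (g x) = s x + t) : pullback g (eulerCocycle s) = eulerCocycle s := by
  have hs : s ∘ g = (· + t) ∘ s := funext h
  rw [eulerCocycle, pullback_pullback, hs, ← pullback_pullback, pullback_add_universalEulerCochain]

/-- The degree of the Euler class of a character of `ℤ/p`: one for the real character of `ℤ/2`, and
two for the complex characters of `ℤ/p` with `p` odd. -/
def eulerDegree (p : ℕ) : ℕ := if p = 2 then 1 else 2

theorem eulerDegree_two : eulerDegree 2 = 1 := rfl

theorem eulerDegree_of_ne_two (hp : p ≠ 2) : eulerDegree p = 2 := if_neg hp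

theorem neg_one_pow_eulerDegree : (-1 : ZMod p) ^ eulerDegree p = 1 := by
  by_cases hp : p = 2
  · subst hp
    decide
  · rw [eulerDegree_of_ne_two hp, neg_one_sq]

theorem coboundary_universalEulerCochain [NeZero p] {l : List (ZMod p)}
    (hl : l.length = eulerDegree p + 2) : coboundary universalEulerCochain l = 0 := by
  unfold eulerDegree at hl
  split_ifs at hl <;>
  rcases l with _ | ⟨x, _ | ⟨y, _ | ⟨z, _ | ⟨w, _ | ⟨v, l⟩⟩⟩⟩⟩ <;> simp at hl <;>
  simp [coboundary_cons, universalEulerCochain, bockstein_cocycle]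

theorem coboundary_eulerCocycle [NeZero p] (s : V → ZMod p) {l : List V}
    (hl : l.length = eulerDegree p + 2) : coboundary (eulerCocycle s) l = 0 := by
  rw [eulerCocycle, coboundary_pullback, pullback_apply,
    coboundary_universalEulerCochain (by simpa using hl)]

theorem diffOp_cup_contract {g : V → V} {u : V → ZMod p} (hu : ∀ x, u (g x) = u x + 1)
    {ω : Cochain (ZMod p) V} (hω : pullback g ω = ω) (hnil : ω [] = 0) :
    diffOp g (cup 0 (pullback u (contract 0 universalEulerCochain)) ω) = ω := by
  funext l
  cases l with
  | nil => simp [diffOp, hnil]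
  | cons x l =>
    have hx : ω (g x :: l.map g) = ω (x :: l) := congrFun hω (x :: l)
    simp [diffOp, universalEulerCochain, hu, hx, add_mul]

theorem iterate_label {g : V → V} {u : V → ZMod p} (hu : ∀ x, u (g x) = u x + 1) (k : ℕ) (x : V) :
    u (g^[k] x) = u x + k := by
  have h : Function.Semiconj u g (1 + ·) := fun y => (hu y).trans (add_comm _ _)
  rw [(h.iterate_right k).eq, add_left_iterate, nsmul_one, add_comm]

theorem normOp_cup_contract [NeZero p] {g : V → V} {u : V → ZMod p} (hu : ∀ x, u (g x) = u x + 1)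
    {ω : Cochain (ZMod p) V} (hω : pullback g ω = ω) :
    normOp p g (cup 1 (pullback u (contract 0 universalEulerCochain)) ω) =
      cup 1 (eulerCocycle u) ω := by
  have hpow (k : ℕ) (a : Cochain (ZMod p) V) :
      (pullback g ^ k) (cup 1 a ω) = cup 1 (pullback g^[k] a) ω := by
    have hω' := pullback_pow_apply_of_invariant hω k
    rw [pullback_pow] at hω' ⊢
    rw [pullback_cup, hω']
  simp only [normOp, LinearMap.sum_apply, hpow]
  rw [← LinearMap.sum_apply, ← map_sum]
  refine cup_congr_left 1 ω fun t ht => ?_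
  obtain ⟨x, y, rfl⟩ := List.length_eq_two.1 ht
  simpa [universalEulerCochain, eulerCocycle, iterate_label hu] using sum_bockstein (u x) (u y)

theorem slant_cup_eulerCocycle [NeZero p] {g : V → V} {φ φ' : ℕ → V → V} {n : ℕ} (hn : n ≠ 0)
    (hφ₀ : φ 0 = id) (hφ₀' : φ' 0 = id) {u : V → ZMod p} (hφ : ∀ s x, u (φ (s + 1) x) = 0)
    (hφ' : ∀ s x, u (φ' (s + 1) x) = 0) (hu : ∀ x, u (g x) = u x + 1) {ω : Cochain (ZMod p) V}
    (hω : pullback g ω = ω) (hnil : ω [] = 0) :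
    slant p g φ φ' n (cup (eulerDegree p) (eulerCocycle u) ω) = ω := by
  have hE := isNormalized_universalEulerCochain (p := p)
  have hdiff : diffOp g (prismSum φ n (cup 1 (eulerCocycle u) ω)) = ω := by
    rw [eulerCocycle, prismSum_cup_succ_pullback hn hφ₀ hφ hE, diffOp_cup_contract hu hω hnil]
  by_cases hp : p = 2
  · subst hp
    rw [slant, if_pos rfl, Module.End.mul_apply, eulerDegree_two, hdiff]
  · have hnorm : normOp p g (prismSum φ' n (cup 2 (eulerCocycle u) ω)) =
        cup 1 (eulerCocycle u) ω := by
      rw [eulerCocycle, prismSum_cup_succ_pullback hn hφ₀' hφ' hE, normOp_cup_contract hu hω,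
        eulerCocycle]
    rw [slant, if_neg hp, eulerDegree_of_ne_two hp]
    simp only [Module.End.mul_apply, hnorm, hdiff]

/-- The signs of the prism operators cancel: for odd `p` the Euler class has even degree. -/
theorem commute_slant_cup_eulerCocycle {g : V → V} {φ φ' : ℕ → V → V} (n : ℕ) {u : V → ZMod p}
    (hφ : ∀ s x, u (φ s x) = u x) (hφ' : ∀ s x, u (φ' s x) = u x) (hu : ∀ x, u (g x) = u x) :
    Commute (slant p g φ φ' n) (cup (eulerDegree p) (eulerCocycle u)) := by
  have hprism {φ : ℕ → V → V} (hφ : ∀ s x, u (φ s x) = u x) :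
      Commute (prismSum φ n) (cup (eulerDegree p) (eulerCocycle u)) := by
    refine LinearMap.ext fun ω => ?_
    simp only [Module.End.mul_apply, eulerCocycle]
    rw [prismSum_cup_pullback hφ isNormalized_universalEulerCochain, neg_one_pow_eulerDegree,
      one_smul]
  have hpull : Commute (pullback g) (cup (eulerDegree p) (eulerCocycle u)) :=
    commute_pullback_cup (pullback_eulerCocycle (t := 0) (by simpa using hu)) _
  have hdiff : Commute (diffOp g) (cup (eulerDegree p) (eulerCocycle u)) :=
    hpull.sub_left (Commute.one_left _)
  have hnorm : Commute (normOp p g) (cup (eulerDegree p) (eulerCocycle u)) :=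
    Commute.sum_left _ _ _ fun _ _ => hpull.pow_left _
  unfold slant
  split_ifs
  · exact hdiff.mul_left (hprism hφ)
  · exact (hdiff.mul_left (hprism hφ)).mul_left (hnorm.mul_left (hprism hφ'))

theorem slant_unitCochain (g : V → V) (φ φ' : ℕ → V → V) (n : ℕ) :
    slant p g φ φ' n (unitCochain : Cochain (ZMod p) V) = 0 := by
  unfold slant
  split_ifs <;> simp only [Module.End.mul_apply, prismSum_unitCochain, map_zero]

end Bockstein

/-! ### Evaluation of products of Euler classes -/

section CupProducts

variable {R V J : Type*} [CommRing R]

/-- The iterated cup product with the cochains `e j` of degree `k`, for `j` in the list `js`. -/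
def cupProd (k : ℕ) (e : J → Cochain R V) (js : List J) : Module.End R (Cochain R V) :=
  (js.map fun j => cup k (e j)).prod

theorem cupProd_nil (k : ℕ) (e : J → Cochain R V) : cupProd k e [] = 1 := rfl

theorem cupProd_cons (k : ℕ) (e : J → Cochain R V) (j : J) (js : List J) :
    cupProd k e (j :: js) = cup k (e j) * cupProd k e js := by
  rw [cupProd, List.map_cons, List.prod_cons, cupProd]

theorem cupProd_append (k : ℕ) (e : J → Cochain R V) (js js' : List J) :
    cupProd k e (js ++ js') = cupProd k e js * cupProd k e js' := by
  rw [cupProd, List.map_append, List.prod_append, cupProd, cupProd]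

theorem cupProd_apply_nil (k : ℕ) (e : J → Cochain R V) (js : List J) {ω : Cochain R V}
    (hω : ω [] = 0) : cupProd k e js ω [] = 0 := by
  cases js with
  | nil => exact hω
  | cons j js => rw [cupProd_cons, Module.End.mul_apply, cup_nil]

theorem pullback_cupProd {g : V → V} {e : J → Cochain R V} (he : ∀ j, pullback g (e j) = e j)
    (k : ℕ) (js : List J) {ω : Cochain R V} (hω : pullback g ω = ω) :
    pullback g (cupProd k e js ω) = cupProd k e js ω := by
  have hcomm : Commute (pullback g) (cupProd k e js) :=
    Commute.list_prod_right _ _ <| List.forall_mem_map.2 fun j _ => commute_pullback_cup (he j) k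
  rw [← Module.End.mul_apply, hcomm.eq, Module.End.mul_apply, hω]

theorem unitCochain_nil : (unitCochain : Cochain R V) [] = 0 := rfl

theorem coboundary_cup_of_cocycle {k : ℕ} {a b : Cochain R V}
    (ha : ∀ t, t.length = k + 2 → coboundary a t = 0) (hb : b [] = 0) :
    coboundary (cup k a b) = (-1 : R) ^ k • cup k a (coboundary b) := by
  rw [coboundary_cup k a hb, cup_congr_left (k + 1) b (a' := 0) ha, map_zero,
    LinearMap.zero_apply, zero_add]

theorem coboundary_cup_of_sub {k : ℕ} {a a' η b : Cochain R V}
    (hη : ∀ t, t.length = k + 2 → coboundary η t = a t - a' t) (hb : b [] = 0)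
    (hδb : coboundary b = 0) :
    coboundary (cup k η b) = cup (k + 1) a b - cup (k + 1) a' b := by
  rw [coboundary_cup k η hb, hδb, map_zero, smul_zero, add_zero,
    cup_congr_left (k + 1) b (a' := a - a') hη, map_sub, LinearMap.sub_apply]

theorem coboundary_cupProd_unitCochain {k : ℕ} {e : J → Cochain R V}
    (he : ∀ j t, t.length = k + 2 → coboundary (e j) t = 0) (js : List J) :
    coboundary (cupProd k e js unitCochain) = 0 := by
  induction js with
  | nil => exact coboundary_unitCochain
  | cons j js ih =>
    rw [cupProd_cons, Module.End.mul_apply,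
      coboundary_cup_of_cocycle (he j) (cupProd_apply_nil k e js unitCochain_nil), ih, map_zero,
      smul_zero]

end CupProducts

section Evaluation

variable {V I J : Type*} {p : ℕ}

/-- Commuting maps `g i` of order dividing `p`, that is, an action of `(ℤ/p)^I`, together with
labels `u i` which are shifted by `1` under `g i` and fixed under the other generators. -/
structure IsLabelledAction (g : I → V → V) (u : I → V → ZMod p) : Prop where
  iterate : ∀ i, (g i)^[p] = id
  commute : ∀ i j, Function.Commute (g i) (g j)
  label_self : ∀ i x, u i (g i x) = u i x + 1
  label_of_ne : ∀ i j x, i ≠ j → u j (g i x) = u j x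

/-- A discretized cone in direction `i`: a path of maps from the identity to a `g i`-invariant map,
of `i`-th label zero after the first step, and compatible with all other coordinates. -/
structure IsCone (g : I → V → V) (u : I → V → ZMod p) (i : I) (φ : ℕ → V → V) (n : ℕ) : Prop where
  zero : φ 0 = id
  comp_eq : φ n ∘ g i = φ n
  label_self : ∀ s x, u i (φ (s + 1) x) = 0
  label_of_ne : ∀ j, j ≠ i → ∀ s x, u j (φ s x) = u j x
  commute : ∀ j, j ≠ i → ∀ s, Function.Commute (φ s) (g j)

/-- The properties of the slant operators for the `i`-th coordinate of a `(ℤ/p)^I`-action that are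
used in the evaluation of products of Euler classes. -/
structure IsSlantOperator (g : I → V → V) (u : I → V → ZMod p) (i : I)
    (D : Module.End (ZMod p) (Cochain (ZMod p) V)) : Prop where
  commute_pullback : ∀ j, j ≠ i → Commute (pullback (g j)) D
  exists_smul_eq : ∀ η, normOp p (g i) η = 0 →
    ∃ c : ZMod p, D (coboundary η) = c • coboundary (D η)
  normOp_mul : normOp p (g i) * D = 0
  apply_nil : ∀ η, D η [] = 0
  cup_self : ∀ ω, pullback (g i) ω = ω → ω [] = 0 →
    D (cup (eulerDegree p) (eulerCocycle (u i)) ω) = ω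
  commute_cup : ∀ j, j ≠ i → Commute D (cup (eulerDegree p) (eulerCocycle (u j)))
  apply_unitCochain : D unitCochain = 0

theorem isSlantOperator_slant [NeZero p] {g : I → V → V} {u : I → V → ZMod p}
    (h : IsLabelledAction g u) {i : I} {φ φ' : ℕ → V → V} {n : ℕ} (hn : n ≠ 0)
    (hφ : IsCone g u i φ n) (hφ' : IsCone g u i φ' n) :
    IsSlantOperator g u i (slant p (g i) φ φ' n) where
  commute_pullback j hj :=
    commute_pullback_slant n (h.commute i j) (hφ.commute j hj) (hφ'.commute j hj)
  exists_smul_eq _ := exists_smul_eq_slant_coboundary (h.iterate i) hφ.zero hφ'.zero hφ.comp_eq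
    hφ'.comp_eq
  normOp_mul := normOp_mul_slant (h.iterate i) φ φ' n
  apply_nil := slant_apply_nil (g i) φ φ' n
  cup_self _ := slant_cup_eulerCocycle hn hφ.zero hφ'.zero hφ.label_self hφ'.label_self
    (h.label_self i)
  commute_cup j hj := commute_slant_cup_eulerCocycle n (hφ.label_of_ne j hj)
    (hφ'.label_of_ne j hj) fun x => h.label_of_ne i j x hj.symm
  apply_unitCochain := slant_unitCochain (g i) φ φ' n

theorem prod_slant_coboundary {g : I → V → V} {u : I → V → ZMod p} {i : I}
    {Ds : List (Module.End (ZMod p) (Cochain (ZMod p) V))}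
    (hD : ∀ D ∈ Ds, IsSlantOperator g u i D) {η : Cochain (ZMod p) V}
    (hη : normOp p (g i) η = 0) :
    normOp p (g i) (Ds.prod η) = 0 ∧
      ∃ c : ZMod p, Ds.prod (coboundary η) = c • coboundary (Ds.prod η) := by
  induction Ds with
  | nil => exact ⟨hη, 1, by simp⟩
  | cons D Ds ih =>
    obtain ⟨hnorm, c, hc⟩ := ih fun D' h => hD D' (List.mem_cons_of_mem D h)
    have hD₀ := hD D List.mem_cons_self
    obtain ⟨c', hc'⟩ := hD₀.exists_smul_eq _ hnorm
    simp only [List.prod_cons, Module.End.mul_apply]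
    refine ⟨?_, c * c', by rw [hc, map_smul, hc', smul_smul]⟩
    rw [← Module.End.mul_apply, hD₀.normOp_mul, LinearMap.zero_apply]

/-- The composite of the operators of all coordinates in the given list, those of the head acting
first. -/
def totalSlant (Ds : I → List (Module.End (ZMod p) (Cochain (ZMod p) V))) :
    List I → Module.End (ZMod p) (Cochain (ZMod p) V)
  | [] => 1
  | i :: is => totalSlant Ds is * (Ds i).prod

theorem totalSlant_coboundary {g : I → V → V} {u : I → V → ZMod p}
    {Ds : I → List (Module.End (ZMod p) (Cochain (ZMod p) V))}
    (hD : ∀ i, ∀ D ∈ Ds i, IsSlantOperator g u i D) {is : List I} (his : is.Nodup)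
    {η : Cochain (ZMod p) V} (hη : ∀ i ∈ is, normOp p (g i) η = 0) (hnil : η [] = 0) :
    totalSlant Ds is η [] = 0 ∧
      ∃ c : ZMod p, totalSlant Ds is (coboundary η) = c • coboundary (totalSlant Ds is η) := by
  induction is generalizing η with
  | nil => exact ⟨hnil, 1, by simp [totalSlant]⟩
  | cons i is ih =>
    rw [List.nodup_cons] at his
    obtain ⟨-, c, hc⟩ := prod_slant_coboundary (hD i) (hη i List.mem_cons_self)
    have hnil' : (Ds i).prod η [] = 0 := by
      rcases hDs : Ds i with _ | ⟨D, L⟩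
      · exact hnil
      · rw [List.prod_cons, Module.End.mul_apply]
        exact (hD i D (hDs ▸ List.mem_cons_self)).apply_nil _
    have hnorm : ∀ j ∈ is, normOp p (g j) ((Ds i).prod η) = 0 := by
      intro j hj
      have hcomm : Commute (normOp p (g j)) (Ds i).prod :=
        Commute.list_prod_right _ _ fun D hDi => Commute.sum_left _ _ _ fun _ _ =>
          ((hD i D hDi).commute_pullback j (ne_of_mem_of_not_mem hj his.1)).pow_left _
      rw [← Module.End.mul_apply, hcomm.eq, Module.End.mul_apply,
        hη j (List.mem_cons_of_mem i hj), map_zero]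
    obtain ⟨hnil'', c', hc'⟩ := ih his.2 hnorm hnil'
    refine ⟨hnil'', c * c', ?_⟩
    rw [totalSlant, Module.End.mul_apply, Module.End.mul_apply, hc, map_smul, hc', smul_smul]

variable [Fintype I]

/-- The standard cocycle representing the Euler class of the character `a` of `(ℤ/p)^I`. -/
def characterCocycle (u : I → V → ZMod p) (a : I → ZMod p) : Cochain (ZMod p) V :=
  ∑ i, a i • eulerCocycle (u i)

theorem characterCocycle_eq_add [DecidableEq I] (u : I → V → ZMod p) (a : I → ZMod p) (i : I) :
    characterCocycle u a =
      a i • eulerCocycle (u i) + characterCocycle u (Function.update a i 0) := by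
  rw [characterCocycle, characterCocycle, ← Finset.add_sum_erase _ _ (Finset.mem_univ i),
    ← Finset.add_sum_erase _ (fun j => Function.update a i 0 j • _) (Finset.mem_univ i),
    Function.update_self, zero_smul, zero_add]
  refine congrArg _ (Finset.sum_congr rfl fun j hj => ?_)
  rw [Function.update_of_ne (Finset.ne_of_mem_erase hj)]

theorem pullback_characterCocycle {g : I → V → V} {u : I → V → ZMod p}
    (h : IsLabelledAction g u) (a : I → ZMod p) (i : I) :
    pullback (g i) (characterCocycle u a) = characterCocycle u a := by
  simp only [characterCocycle, map_sum, map_smul]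
  refine Finset.sum_congr rfl fun j _ => congrArg _ ?_
  by_cases hj : i = j
  · subst hj
    exact pullback_eulerCocycle (h.label_self i)
  · exact pullback_eulerCocycle (t := 0) fun x => by rw [h.label_of_ne i j x hj, add_zero]

theorem coboundary_characterCocycle [NeZero p] (u : I → V → ZMod p) (a : I → ZMod p) {l : List V}
    (hl : l.length = eulerDegree p + 2) : coboundary (characterCocycle u a) l = 0 := by
  simp only [characterCocycle, map_sum, map_smul, Finset.sum_apply, Pi.smul_apply,
    coboundary_eulerCocycle _ hl, smul_zero, Finset.sum_const_zero]

section

variable {g : I → V → V} {u : I → V → ZMod p} {i : I}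

theorem IsSlantOperator.commute_characterCocycle {D : Module.End (ZMod p) (Cochain (ZMod p) V)}
    (hD : IsSlantOperator g u i D) {a : I → ZMod p} (ha : a i = 0) :
    Commute D (cup (eulerDegree p) (characterCocycle u a)) := by
  simp only [characterCocycle, map_sum, map_smul]
  refine Commute.sum_right _ _ _ fun j _ => ?_
  by_cases hj : j = i
  · rw [hj, ha, zero_smul]
    exact Commute.zero_right D
  · exact (hD.commute_cup j hj).smul_right (a j)

theorem IsSlantOperator.apply_cup_characterCocycle [DecidableEq I]
    {D : Module.End (ZMod p) (Cochain (ZMod p) V)} (hD : IsSlantOperator g u i D)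
    (a : I → ZMod p) {ω : Cochain (ZMod p) V} (hω : pullback (g i) ω = ω) (hnil : ω [] = 0) :
    D (cup (eulerDegree p) (characterCocycle u a) ω) =
      a i • ω + cup (eulerDegree p) (characterCocycle u (Function.update a i 0)) (D ω) := by
  have hrest := hD.commute_characterCocycle (Function.update_self i 0 a)
  rw [characterCocycle_eq_add u a i, map_add, map_smul, LinearMap.add_apply, map_add,
    LinearMap.smul_apply, map_smul, hD.cup_self ω hω hnil, ← Module.End.mul_apply, hrest.eq,
    Module.End.mul_apply]

/-- The case of too few factors is part of the statement only for the sake of the induction. -/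
theorem prod_slant_cupProd (hg : IsLabelledAction g u) (α : J → I → ZMod p)
    {ω : Cochain (ZMod p) V} (hω : pullback (g i) ω = ω) (hnil : ω [] = 0) (js : List J)
    (Ds : List (Module.End (ZMod p) (Cochain (ZMod p) V)))
    (hD : ∀ D ∈ Ds, IsSlantOperator g u i D) (hDω : ∀ D ∈ Ds, D ω = 0)
    (hlen : js.length ≤ Ds.length) :
    Ds.prod (cupProd (eulerDegree p) (fun j => characterCocycle u (α j)) js ω) =
      if js.length = Ds.length then (js.map fun j => α j i).prod • ω else 0 := by
  classical
  induction js generalizing Ds with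
  | nil =>
    rcases Ds.eq_nil_or_concat with rfl | ⟨Ds, D, rfl⟩
    · simp [cupProd_nil]
    · simp [cupProd_nil, hDω D (by simp)]
  | cons j js ih =>
    rcases Ds.eq_nil_or_concat with rfl | ⟨Ds, D, rfl⟩
    · simp at hlen
    have hD' : ∀ D ∈ Ds, IsSlantOperator g u i D := fun D' h => hD D' (by simp [h])
    have hDω' : ∀ D ∈ Ds, D ω = 0 := fun D' h => hDω D' (by simp [h])
    simp only [List.length_cons, List.length_concat] at hlen
    have hrest := LinearMap.congr_fun (Commute.list_prod_left Ds _ fun D' h =>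
      (hD' D' h).commute_characterCocycle (Function.update_self i 0 (α j))).eq
    simp only [Module.End.mul_apply] at hrest
    have hzero := ih (Ds.concat D) hD hDω (by simp; omega)
    rw [if_neg (by simp; omega), List.prod_concat, Module.End.mul_apply] at hzero
    rw [List.prod_concat, Module.End.mul_apply, cupProd_cons, Module.End.mul_apply,
      (hD D (by simp)).apply_cup_characterCocycle _
        (pullback_cupProd (fun j => pullback_characterCocycle hg _ i) _ _ hω)
        (cupProd_apply_nil _ _ _ hnil),
      map_add, map_smul, hrest, hzero, map_zero, add_zero, ih Ds hD' hDω' (by omega)]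
    simp [smul_smul]

theorem totalSlant_cupProd_characterCocycle (hg : IsLabelledAction g u) (α : J → I → ZMod p)
    {Ds : I → List (Module.End (ZMod p) (Cochain (ZMod p) V))}
    (hD : ∀ i, ∀ D ∈ Ds i, IsSlantOperator g u i D) {js : I → List J}
    (hlen : ∀ i, (js i).length = (Ds i).length) {is : List I}
    (his : is.Pairwise fun i i' => ∀ j ∈ js i', α j i = 0) :
    totalSlant Ds is
        (cupProd (eulerDegree p) (fun j => characterCocycle u (α j)) (is.flatMap js) unitCochain) =
      (is.map fun i => ((js i).map fun j => α j i).prod).prod • unitCochain := by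
  induction is with
  | nil => simp [totalSlant, cupProd_nil]
  | cons i is ih =>
    rw [List.pairwise_cons] at his
    have hkill : ∀ D ∈ Ds i, D (cupProd (eulerDegree p) (fun j => characterCocycle u (α j))
        (is.flatMap js) unitCochain) = 0 := by
      intro D hDi
      have hcomm : Commute D (cupProd (eulerDegree p) (fun j => characterCocycle u (α j))
          (is.flatMap js)) := by
        refine Commute.list_prod_right _ _ (List.forall_mem_map.2 fun j hj => ?_)
        obtain ⟨i', hi', hj⟩ := List.mem_flatMap.1 hj
        exact (hD i D hDi).commute_characterCocycle (his.1 i' hi' j hj)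
      rw [← Module.End.mul_apply, hcomm.eq, Module.End.mul_apply, (hD i D hDi).apply_unitCochain,
        map_zero]
    rw [List.flatMap_cons, cupProd_append, totalSlant, Module.End.mul_apply, Module.End.mul_apply,
      prod_slant_cupProd hg α
        (pullback_cupProd (fun j => pullback_characterCocycle hg _ i) _ _ (pullback_unitCochain _))
        (cupProd_apply_nil _ _ _ unitCochain_nil) (js i) (Ds i) (hD i) hkill (hlen i).le,
      if_pos (hlen i), map_smul, ih his.2, smul_smul, List.map_cons, List.prod_cons]

end

/-- The difference of integer representatives of the increment of `s` and of the combination of the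
increments of the `u i` with coefficients `a i`, corrected to be a multiple of `p`. -/
def characterDefect (s : V → ZMod p) (u : I → V → ZMod p) (a : I → ZMod p) (x y : V) : ℤ :=
  (s y - s x).valMinAbs - ∑ i, (a i).valMinAbs * (u i y - u i x).valMinAbs -
    ((s y - ∑ i, a i * u i y).valMinAbs - (s x - ∑ i, a i * u i x).valMinAbs)

/-- For a label `s` shifted by the character `a`, an invariant cochain whose coboundary is the
difference of the Euler cocycle of `s` and the standard cocycle of `a`. The degree-zero part serves
`p = 2` and the degree-one part serves odd `p`. -/
def characterHomotopy (s : V → ZMod p) (u : I → V → ZMod p) (a : I → ZMod p) : Cochain (ZMod p) V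
  | [x] => s x - ∑ i, a i * u i x
  | [x, y] => (characterDefect s u a x y / (p : ℤ) : ℤ)
  | _ => 0

theorem dvd_characterDefect (s : V → ZMod p) (u : I → V → ZMod p) (a : I → ZMod p) (x y : V) :
    (p : ℤ) ∣ characterDefect s u a x y := by
  rw [← ZMod.intCast_zmod_eq_zero_iff_dvd, characterDefect]
  push_cast
  simp only [mul_sub, Finset.sum_sub_distrib]
  ring

theorem pullback_characterHomotopy {g : I → V → V} {u : I → V → ZMod p}
    (hg : IsLabelledAction g u) {s : V → ZMod p} {a : I → ZMod p}
    (hs : ∀ i x, s (g i x) = s x + a i) (i : I) :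
    pullback (g i) (characterHomotopy s u a) = characterHomotopy s u a := by
  classical
  have hu (j : I) (x : V) : u j (g i x) = u j x + if j = i then 1 else 0 := by
    split_ifs with h
    · rw [h, hg.label_self]
    · rw [hg.label_of_ne i j x (Ne.symm h), add_zero]
  funext l
  rcases l with _ | ⟨x, _ | ⟨y, _ | ⟨z, l⟩⟩⟩ <;>
    simp [characterHomotopy, characterDefect, hs, hu, mul_add, Finset.sum_add_distrib]

theorem characterDefect_div_cocycle [NeZero p] (s : V → ZMod p) (u : I → V → ZMod p)
    (a : I → ZMod p) (x y z : V) :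
    characterDefect s u a y z / (p : ℤ) -
        (characterDefect s u a x z / (p : ℤ) - characterDefect s u a x y / (p : ℤ)) =
      bocksteinDefect (s x) (s y) (s z) / (p : ℤ) -
        ∑ i, (a i).valMinAbs * (bocksteinDefect (u i x) (u i y) (u i z) / (p : ℤ)) := by
  have hp : (p : ℤ) ≠ 0 := by exact_mod_cast NeZero.ne p
  apply mul_left_cancel₀ hp
  simp only [mul_sub, Finset.mul_sum, mul_left_comm (p : ℤ),
    Int.mul_ediv_cancel' (dvd_characterDefect _ _ _ _ _),
    Int.mul_ediv_cancel' (dvd_bocksteinDefect _ _ _)]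
  simp only [characterDefect, bocksteinDefect, mul_add, mul_sub, Finset.sum_add_distrib,
    Finset.sum_sub_distrib]
  ring

theorem coboundary_characterHomotopy [NeZero p] (s : V → ZMod p) (u : I → V → ZMod p)
    (a : I → ZMod p) {l : List V} (hl : l.length = eulerDegree p + 1) :
    coboundary (characterHomotopy s u a) l = eulerCocycle s l - characterCocycle u a l := by
  unfold eulerDegree at hl
  split_ifs at hl
  · obtain ⟨x, y, rfl⟩ := List.length_eq_two.1 hl
    simp [coboundary_cons, characterHomotopy, characterCocycle, eulerCocycle,
      universalEulerCochain, mul_sub, Finset.sum_sub_distrib]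
    ring
  · obtain ⟨x, y, z, rfl⟩ := List.length_eq_three.1 hl
    simpa [coboundary_cons, characterHomotopy, characterCocycle, eulerCocycle,
      universalEulerCochain, bockstein] using
        congrArg (Int.cast : ℤ → ZMod p) (characterDefect_div_cocycle s u a x y z)

theorem exists_eulerDegree_eq_succ (p : ℕ) : ∃ k, eulerDegree p = k + 1 :=
  Nat.exists_eq_succ_of_ne_zero (by unfold eulerDegree; split_ifs <;> decide)

theorem exists_cupProd_eq_add_coboundary [NeZero p] {g : I → V → V} {u : I → V → ZMod p}
    (hg : IsLabelledAction g u) {α : J → I → ZMod p} {s : J → V → ZMod p}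
    (hs : ∀ j i x, s j (g i x) = s j x + α j i) (js : List J) :
    ∃ ξ : Cochain (ZMod p) V, ξ [] = 0 ∧ (∀ i, pullback (g i) ξ = ξ) ∧
      cupProd (eulerDegree p) (fun j => eulerCocycle (s j)) js unitCochain =
        cupProd (eulerDegree p) (fun j => characterCocycle u (α j)) js unitCochain +
          coboundary ξ := by
  induction js with
  | nil => exact ⟨0, rfl, fun i => map_zero _, by rw [map_zero, add_zero]; rfl⟩
  | cons j js ih =>
    obtain ⟨ξ, hnil, hinv, hξ⟩ := ih
    obtain ⟨k, hk⟩ := exists_eulerDegree_eq_succ p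
    set P := cupProd (eulerDegree p) (fun j => eulerCocycle (s j)) js unitCochain with hP
    have hPinv (i : I) : pullback (g i) P = P :=
      pullback_cupProd (fun j => pullback_eulerCocycle (hs j i)) _ _ (pullback_unitCochain _)
    refine ⟨cup k (characterHomotopy (s j) u (α j)) P +
      cup (eulerDegree p) (characterCocycle u (α j)) ξ, by simp, fun i => ?_, ?_⟩
    · rw [map_add, pullback_cup, pullback_cup, pullback_characterHomotopy hg (hs j), hPinv,
        pullback_characterCocycle hg, hinv]
    · have hhomotopy := coboundary_cup_of_sub (k := k) (b := P)
        (fun t ht => coboundary_characterHomotopy (s j) u (α j) (by rw [ht, hk]))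
        (cupProd_apply_nil _ _ _ unitCochain_nil)
        (coboundary_cupProd_unitCochain (fun j t => coboundary_eulerCocycle (s j)) js)
      have hcocycle := coboundary_cup_of_cocycle (k := eulerDegree p)
        (fun t => coboundary_characterCocycle u (α j) (l := t)) hnil
      rw [neg_one_pow_eulerDegree, one_smul] at hcocycle
      rw [cupProd_cons, Module.End.mul_apply, ← hP, cupProd_cons, Module.End.mul_apply, map_add,
        hhomotopy, hcocycle, ← hk]
      conv_rhs => rw [add_comm (_ - _), ← add_assoc, ← map_add, ← hξ]
      rw [add_sub_cancel]

end Evaluation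

/-- By `exists_cupProd_eq_add_coboundary` the product differs from the standard one by an invariant
coboundary, which is mapped to a coboundary and so vanishes on vertices. -/
theorem totalSlant_cupProd_eulerCocycle {V I J : Type*} [Finite I] {p : ℕ} [NeZero p]
    {g : I → V → V} {u : I → V → ZMod p} (hg : IsLabelledAction g u)
    {α : J → I → ZMod p} {s : J → V → ZMod p} (hs : ∀ j i x, s j (g i x) = s j x + α j i)
    {Ds : I → List (Module.End (ZMod p) (Cochain (ZMod p) V))}
    (hD : ∀ i, ∀ D ∈ Ds i, IsSlantOperator g u i D) {js : I → List J}
    (hlen : ∀ i, (js i).length = (Ds i).length) {is : List I} (hnodup : is.Nodup)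
    (his : is.Pairwise fun i i' => ∀ j ∈ js i', α j i = 0) (x : V) :
    totalSlant Ds is
        (cupProd (eulerDegree p) (fun j => eulerCocycle (s j)) (is.flatMap js) unitCochain) [x] =
      (is.map fun i => ((js i).map fun j => α j i).prod).prod := by
  cases nonempty_fintype I
  obtain ⟨ξ, hnil, hinv, hξ⟩ := exists_cupProd_eq_add_coboundary hg hs (is.flatMap js)
  obtain ⟨hnil', c, hc⟩ := totalSlant_coboundary hD hnodup
    (fun i _ => normOp_apply_of_invariant (hinv i)) hnil
  rw [hξ, map_add, totalSlant_cupProd_characterCocycle hg α hD hlen his, hc]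
  simp [coboundary_cons, hnil', unitCochain]

/-! ### Joins of copies of `ℤ/p` -/

section Join

variable {p : ℕ} [NeZero p] {M : ℕ}

variable (p M) in
/-- The join of `M + 1` copies of the discrete set `ℤ/p`: nonnegative weights of total mass one, of
which at most one is nonzero on each of the `M + 1` levels. -/
def joinPoints : Set (Fin (M + 1) → ZMod p → ℝ) :=
  {y | (∀ l g, 0 ≤ y l g) ∧ ∑ l, ∑ g, y l g = 1 ∧ ∀ l g g', g ≠ g' → y l g * y l g' = 0}

variable (p M) in
/-- The join of `M + 1` copies of `ℤ/p` as a topological space. -/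
abbrev ZModJoin := ↥(joinPoints p M)

namespace ZModJoin

theorem nonneg (y : ZModJoin p M) (l : Fin (M + 1)) (g : ZMod p) : 0 ≤ y.1 l g := y.2.1 l g

theorem sum_eq_one (y : ZModJoin p M) : ∑ l, ∑ g, y.1 l g = 1 := y.2.2.1

theorem mul_eq_zero (y : ZModJoin p M) (l : Fin (M + 1)) {g g' : ZMod p} (h : g ≠ g') :
    y.1 l g * y.1 l g' = 0 := y.2.2.2 l g g' h

theorem le_one (y : ZModJoin p M) (l : Fin (M + 1)) (g : ZMod p) : y.1 l g ≤ 1 := by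
  rw [← sum_eq_one y]
  exact (Finset.single_le_sum (fun g _ => nonneg y l g) (Finset.mem_univ g)).trans
    (Finset.single_le_sum (f := fun l => ∑ g, y.1 l g)
      (fun l _ => Finset.sum_nonneg fun g _ => nonneg y l g) (Finset.mem_univ l))

theorem isClosed_joinPoints : IsClosed (joinPoints p M) := by
  have h : joinPoints p M = (⋂ l, ⋂ g, {y | 0 ≤ y l g}) ∩ ({y | ∑ l, ∑ g, y l g = 1} ∩
      ⋂ l, ⋂ g, ⋂ g', ⋂ (_ : g ≠ g'), {y | y l g * y l g' = 0}) := by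
    ext y
    simp [joinPoints]
  rw [h]
  refine (isClosed_iInter fun l => isClosed_iInter fun g => ?_).inter
    (IsClosed.inter ?_ (isClosed_iInter fun l => isClosed_iInter fun g => isClosed_iInter fun g' =>
      isClosed_iInter fun _ => ?_))
  · exact isClosed_le continuous_const (by fun_prop)
  · exact isClosed_eq (by fun_prop) continuous_const
  · exact isClosed_eq (by fun_prop) continuous_const

instance : CompactSpace (ZModJoin p M) :=
  isCompact_iff_compactSpace.1 <|
    (isCompact_univ_pi fun _ => isCompact_univ_pi fun _ => isCompact_Icc).of_isClosed_subset
      isClosed_joinPoints fun y hy l _ g _ => ⟨nonneg ⟨y, hy⟩ l g, le_one ⟨y, hy⟩ l g⟩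

/-- The generator of the rotation action of `ℤ/p`, on all levels simultaneously. -/
def rotate (y : ZModJoin p M) : ZModJoin p M :=
  ⟨fun l g => y.1 l (g - 1), fun l _ => nonneg y l _,
    (Finset.sum_congr rfl fun l _ => Equiv.sum_comp (Equiv.subRight (1 : ZMod p)) (y.1 l)).trans
      (sum_eq_one y),
    fun l _ _ h => mul_eq_zero y l fun h' => h (sub_left_injective h')⟩

theorem rotate_apply (y : ZModJoin p M) (l : Fin (M + 1)) (g : ZMod p) :
    (rotate y).1 l g = y.1 l (g - 1) := rfl

theorem rotate_iterate_apply (y : ZModJoin p M) (k : ℕ) (l : Fin (M + 1)) (g : ZMod p) :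
    (rotate^[k] y).1 l g = y.1 l (g - k) := by
  induction k generalizing g with
  | zero => simp
  | succ k ih =>
    rw [Function.iterate_succ_apply', rotate_apply, ih, Nat.cast_succ, sub_sub,
      add_comm (k : ZMod p)]

theorem rotate_iterate_self : (rotate : ZModJoin p M → ZModJoin p M)^[p] = id := by
  ext y l g
  simp [rotate_iterate_apply]

/-- The point of the join given by the element `0` of level `t`. -/
def apex (t : Fin (M + 1)) : ZModJoin p M :=
  ⟨fun l g => if l = t ∧ g = 0 then 1 else 0, fun l g => by positivity, by
    rw [Finset.sum_eq_single t, Finset.sum_eq_single 0] <;> simp +contextual, by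
    intro l g g' h
    rcases eq_or_ne g 0 with rfl | hg
    · simp [h.symm]
    · simp [hg]⟩

theorem apex_apply_of_ne {t l : Fin (M + 1)} (h : l ≠ t) (g : ZMod p) : (apex t).1 l g = 0 := by
  simp [apex, h]

theorem apex_apply_self (t : Fin (M + 1)) : (apex t : ZModJoin p M).1 t 0 = 1 := by simp [apex]

/-- The weights of `y` vanish from level `k` on. -/
def SupportedBelow (k : ℕ) (y : ZModJoin p M) : Prop :=
  ∀ l : Fin (M + 1), k ≤ l → ∀ g, y.1 l g = 0

theorem SupportedBelow.mono {k k' : ℕ} (h : k ≤ k') {y : ZModJoin p M} (hy : SupportedBelow k y) :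
    SupportedBelow k' y := fun l hl => hy l (h.trans hl)

/-- The highest level on which `y` has a nonzero weight is `l`, where it is carried by `g`. -/
def IsTop (y : ZModJoin p M) (l : Fin (M + 1)) (g : ZMod p) : Prop :=
  y.1 l g ≠ 0 ∧ SupportedBelow (l + 1) y

theorem exists_isTop (y : ZModJoin p M) : ∃ g l, IsTop y l g := by
  classical
  have hne : (Finset.univ.filter fun l => ∃ g, y.1 l g ≠ 0).Nonempty := by
    by_contra h
    simp only [Finset.not_nonempty_iff_eq_empty, Finset.filter_eq_empty_iff, Finset.mem_univ,
      true_implies, not_exists, not_not] at h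
    simpa [h] using sum_eq_one y
  obtain ⟨l, hl, hmax⟩ := Finset.exists_max_image _ id hne
  obtain ⟨g, hg⟩ := (Finset.mem_filter.1 hl).2
  refine ⟨g, l, hg, fun l' hl' g' => ?_⟩
  by_contra hg'
  exact (hmax l' (Finset.mem_filter.2 ⟨Finset.mem_univ _, g', hg'⟩)).not_gt hl'

theorem IsTop.eq {y : ZModJoin p M} {l l' : Fin (M + 1)} {g g' : ZMod p} (h : IsTop y l g)
    (h' : IsTop y l' g') : g = g' := by
  obtain rfl : l = l' := le_antisymm (not_lt.1 fun hl => h.1 (h'.2 l hl g))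
    (not_lt.1 fun hl => h'.1 (h.2 l' hl g'))
  by_contra hg
  exact mul_ne_zero h.1 h'.1 (mul_eq_zero y l hg)

/-- The element of `ℤ/p` carrying the weight of the highest level. -/
def topLabel (y : ZModJoin p M) : ZMod p := (exists_isTop y).choose

theorem IsTop.topLabel_eq {y : ZModJoin p M} {l : Fin (M + 1)} {g : ZMod p} (h : IsTop y l g) :
    topLabel y = g :=
  let ⟨_, h'⟩ := (exists_isTop y).choose_spec
  h'.eq h

theorem topLabel_rotate (y : ZModJoin p M) : topLabel (rotate y) = topLabel y + 1 := by
  obtain ⟨g, l, h⟩ := exists_isTop y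
  have h' : IsTop (rotate y) l (g + 1) :=
    ⟨by simpa [rotate_apply] using h.1, fun l' hl' _ => h.2 l' hl' _⟩
  rw [h.topLabel_eq, h'.topLabel_eq]

/-- The point dividing the segment from `y` to the apex of level `t` in the ratio `a : 1 - a`. -/
def towardsApex (t : Fin (M + 1)) {a : ℝ} (ha : a ∈ Set.Icc (0 : ℝ) 1) {y : ZModJoin p M}
    (hy : SupportedBelow t y) : ZModJoin p M :=
  ⟨fun l g => (1 - a) * y.1 l g + a * (apex t).1 l g,
    fun l g => add_nonneg (mul_nonneg (sub_nonneg.2 ha.2) (nonneg y l g))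
      (mul_nonneg ha.1 (nonneg _ l g)), by
    simp only [Finset.sum_add_distrib, ← Finset.mul_sum, sum_eq_one]
    ring, by
    intro l g g' h
    rcases eq_or_ne l t with rfl | hl
    · simp only [hy l le_rfl]
      linear_combination a ^ 2 * mul_eq_zero (apex l) l h
    · simp only [apex_apply_of_ne hl]
      linear_combination (1 - a) ^ 2 * mul_eq_zero y l h⟩

theorem min_one_div_mem_Icc (s n : ℕ) : min (1 : ℝ) (s / n) ∈ Set.Icc (0 : ℝ) 1 :=
  ⟨le_min zero_le_one (by positivity), min_le_left _ _⟩

open Classical in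
/-- The `s`-th of `n` steps of the straight-line contraction to the apex of level `t`. For points
not supported below level `t`, where the segment need not stay in the join, every step but the
zeroth is the constant map to the apex; on them only the label matters. -/
def coneStep (t : Fin (M + 1)) (n s : ℕ) (y : ZModJoin p M) : ZModJoin p M :=
  if s = 0 then y
  else if hy : SupportedBelow t y then towardsApex t (min_one_div_mem_Icc s n) hy
  else apex t

theorem coneStep_zero (t : Fin (M + 1)) (n : ℕ) (y : ZModJoin p M) : coneStep t n 0 y = y :=
  if_pos rfl

theorem coneStep_apply (t : Fin (M + 1)) (n s : ℕ) {y : ZModJoin p M} (hy : SupportedBelow t y)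
    (l : Fin (M + 1)) (g : ZMod p) :
    (coneStep t n s y).1 l g =
      (1 - min 1 (s / n : ℝ)) * y.1 l g + min 1 (s / n : ℝ) * (apex t).1 l g := by
  rw [coneStep]
  split_ifs with h
  · simp [h]
  · rfl

theorem coneStep_self (t : Fin (M + 1)) {n : ℕ} (hn : n ≠ 0) (y : ZModJoin p M) :
    coneStep t n n y = apex t := by
  by_cases hy : SupportedBelow t y
  · ext l g
    simp [coneStep_apply t n n hy, hn]
  · simp [coneStep, hn, hy]

theorem topLabel_coneStep_succ (t : Fin (M + 1)) {n : ℕ} (hn : n ≠ 0) (s : ℕ)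
    (y : ZModJoin p M) : topLabel (coneStep t n (s + 1) y) = 0 := by
  have hapex : SupportedBelow (t + 1) (apex t : ZModJoin p M) := fun l hl =>
    apex_apply_of_ne (Fin.ne_of_gt hl)
  apply IsTop.topLabel_eq (l := t)
  by_cases hy : SupportedBelow t y
  · have hpos : (0 : ℝ) < min 1 (((s + 1 : ℕ) : ℝ) / n) := by positivity
    refine ⟨?_, fun l hl g => ?_⟩
    · simpa [coneStep_apply t n _ hy, hy t le_rfl, apex_apply_self] using hpos.ne'
    · simp [coneStep_apply t n _ hy, hy.mono t.val.le_succ l hl, hapex l hl]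
  · rw [coneStep, if_neg s.succ_ne_zero, dif_neg hy]
    exact ⟨by simp [apex_apply_self], hapex⟩

theorem SupportedBelow.coneStep {t : Fin (M + 1)} {y : ZModJoin p M} (hy : SupportedBelow t y)
    (n s : ℕ) : SupportedBelow (t + 1) (coneStep t n s y) := fun l hl g => by
  rw [coneStep_apply t n s hy, hy.mono t.val.le_succ l hl, apex_apply_of_ne (Fin.ne_of_gt hl),
    mul_zero, mul_zero, add_zero]

theorem abs_coneStep_sub_le {t : Fin (M + 1)} (n : ℕ) {s s' : ℕ} (hs : |(s : ℝ) - s'| ≤ 1) {ρ : ℝ}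
    {y z : ZModJoin p M} (hy : SupportedBelow t y) (hz : SupportedBelow t z) {l : Fin (M + 1)}
    {g : ZMod p} (h : |y.1 l g - z.1 l g| ≤ ρ) :
    |(coneStep t n s y).1 l g - (coneStep t n s' z).1 l g| ≤ ρ + 1 / n := by
  rw [coneStep_apply t n s hy, coneStep_apply t n s' hz]
  obtain ⟨ha₀, ha₁⟩ := min_one_div_mem_Icc s n
  have hab : |min (1 : ℝ) (s / n) - min (1 : ℝ) (s' / n)| ≤ 1 / n := by
    refine (abs_min_sub_min_le_max _ _ _ _).trans ?_
    rw [sub_self, abs_zero, max_eq_right (abs_nonneg _), ← sub_div, abs_div, Nat.abs_cast]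
    gcongr
  set a := min (1 : ℝ) (s / n)
  set b := min (1 : ℝ) (s' / n)
  set e := (apex t : ZModJoin p M).1 l g
  have he : |e - z.1 l g| ≤ 1 :=
    abs_sub_le_of_nonneg_of_le (nonneg _ l g) (le_one _ l g) (nonneg z l g) (le_one z l g)
  calc |(1 - a) * y.1 l g + a * e - ((1 - b) * z.1 l g + b * e)|
      = |(1 - a) * (y.1 l g - z.1 l g) + (a - b) * (e - z.1 l g)| := by ring_nf
    _ ≤ (1 - a) * |y.1 l g - z.1 l g| + |a - b| * |e - z.1 l g| := by
      grw [abs_add_le, abs_mul, abs_mul, abs_of_nonneg (sub_nonneg.2 ha₁)]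
    _ ≤ 1 * ρ + 1 / n * 1 := by gcongr; linarith
    _ = ρ + 1 / n := by ring

end ZModJoin

end Join

/-! ### Locality of cochain operators -/

section Locality

variable {R V : Type*} [CommRing R] {r r' r'' : V → V → Prop}

/-- All vertices of `l` are pairwise related by `r`, that is, `l` is an `r`-small simplex. -/
def IsSmall (r : V → V → Prop) (l : List V) : Prop := ∀ x ∈ l, ∀ y ∈ l, r x y

/-- The values of `T ω` on `r`-small simplices depend only on the values of `ω` on `r'`-small
simplices. -/
def IsLocal (T : Module.End R (Cochain R V)) (r r' : V → V → Prop) : Prop :=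
  ∀ ω : Cochain R V, (∀ l, IsSmall r' l → ω l = 0) → ∀ l, IsSmall r l → T ω l = 0

theorem IsLocal.one : IsLocal (1 : Module.End R (Cochain R V)) r r := fun _ h => h

theorem IsLocal.mul {T T' : Module.End R (Cochain R V)} (h : IsLocal T r r')
    (h' : IsLocal T' r' r'') : IsLocal (T * T') r r'' := fun ω hω => h _ (h' ω hω)

theorem IsLocal.sub {T T' : Module.End R (Cochain R V)} (h : IsLocal T r r')
    (h' : IsLocal T' r r') : IsLocal (T - T') r r' := fun ω hω l hl => by
  rw [LinearMap.sub_apply, Pi.sub_apply, h ω hω l hl, h' ω hω l hl, sub_zero]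

theorem IsLocal.sum {ι : Type*} {s : Finset ι} {T : ι → Module.End R (Cochain R V)}
    (h : ∀ i ∈ s, IsLocal (T i) r r') : IsLocal (∑ i ∈ s, T i) r r' := fun ω hω l hl => by
  rw [LinearMap.sum_apply, Finset.sum_apply]
  exact Finset.sum_eq_zero fun i hi => h i hi ω hω l hl

theorem IsLocal.pow {T : Module.End R (Cochain R V)} (h : IsLocal T r r) :
    ∀ k : ℕ, IsLocal (T ^ k) r r
  | 0 => IsLocal.one
  | k + 1 => by
    rw [pow_succ]
    exact (h.pow k).mul h

theorem IsLocal.mono {T : Module.End R (Cochain R V)} (h : IsLocal T r r')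
    (h' : ∀ x y, r' x y → r'' x y) : IsLocal T r r'' := fun ω hω =>
  h ω fun l hl => hω l fun x hx y hy => h' _ _ (hl x hx y hy)

theorem isLocal_pullback {g : V → V} (h : ∀ x y, r x y → r' (g x) (g y)) :
    IsLocal (pullback g : Module.End R (Cochain R V)) r r' := fun _ hω _ hl =>
  hω _ <| List.forall_mem_map.2 fun x hx => List.forall_mem_map.2 fun y hy => h _ _ (hl x hx y hy)

theorem isLocal_diffOp {g : V → V} (h : ∀ x y, r x y → r (g x) (g y)) :
    IsLocal (diffOp g : Module.End R (Cochain R V)) r r := (isLocal_pullback h).sub IsLocal.one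

theorem isLocal_normOp (p : ℕ) {g : V → V} (h : ∀ x y, r x y → r (g x) (g y)) :
    IsLocal (normOp p g : Module.End R (Cochain R V)) r r :=
  IsLocal.sum fun k _ => (isLocal_pullback h).pow k

theorem prism_apply_eq_zero (φ ψ : V → V) (ω : Cochain R V) (l : List V)
    (h : ∀ t : List V, (∀ z ∈ t, ∃ x ∈ l, z = φ x ∨ z = ψ x) → ω t = 0) : prism φ ψ ω l = 0 := by
  induction l generalizing ω with
  | nil => rw [prism_nil]
  | cons x l ih =>
    rw [prism_cons, h, ih, sub_zero]
    · intro t ht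
      rw [contract_apply]
      refine h _ (List.forall_mem_cons.2 ⟨⟨x, by simp⟩, fun z hz => ?_⟩)
      obtain ⟨w, hw, hz⟩ := ht z hz
      exact ⟨w, List.mem_cons_of_mem x hw, hz⟩
    · simp only [List.forall_mem_cons, List.forall_mem_map]
      exact ⟨⟨x, by simp⟩, ⟨x, by simp⟩, fun w hw => ⟨w, by simp [hw]⟩⟩

theorem isLocal_prism {φ ψ : V → V} (h : ∀ x y, r x y →
      r' (φ x) (φ y) ∧ r' (φ x) (ψ y) ∧ r' (ψ x) (φ y) ∧ r' (ψ x) (ψ y)) :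
    IsLocal (prism φ ψ : Module.End R (Cochain R V)) r r' := by
  refine fun ω hω l hl => prism_apply_eq_zero φ ψ ω l fun t ht => hω t fun z hz z' hz' => ?_
  obtain ⟨x, hx, hzx⟩ := ht z hz
  obtain ⟨y, hy, hzy⟩ := ht z' hz'
  obtain ⟨h₁, h₂, h₃, h₄⟩ := h x y (hl x hx y hy)
  rcases hzx with rfl | rfl <;> rcases hzy with rfl | rfl <;> assumption

theorem isLocal_prismSum {φ : ℕ → V → V} (h : ∀ s s' : ℕ, |(s : ℝ) - s'| ≤ 1 → ∀ x y, r x y →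
      r' (φ s x) (φ s' y)) (n : ℕ) :
    IsLocal (prismSum φ n : Module.End R (Cochain R V)) r r' :=
  IsLocal.sum fun s _ => isLocal_prism fun x y hxy =>
    ⟨h _ _ (by simp) x y hxy, h _ _ (by simp) x y hxy, h _ _ (by simp) x y hxy,
      h _ _ (by simp) x y hxy⟩

end Locality

/-! ### Slant operators on products of joins -/

section ModifyAt

variable {I : Type*} [DecidableEq I] {X : I → Type*}

/-- The self-map of a product acting by `F` on the `i`-th coordinate. -/
def modifyAt (i : I) (F : X i → X i) (x : ∀ i, X i) : ∀ i, X i := Function.update x i (F (x i))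

theorem modifyAt_self (i : I) (F : X i → X i) (x : ∀ i, X i) : modifyAt i F x i = F (x i) :=
  Function.update_self ..

theorem modifyAt_of_ne {i j : I} (h : j ≠ i) (F : X i → X i) (x : ∀ i, X i) :
    modifyAt i F x j = x j :=
  Function.update_of_ne h ..

theorem modifyAt_id (i : I) : modifyAt i (id : X i → X i) = id :=
  funext fun x => Function.update_eq_self i x

theorem modifyAt_comp (i : I) (F G : X i → X i) :
    modifyAt i F ∘ modifyAt i G = modifyAt i (F ∘ G) := by
  funext x
  simp [modifyAt]

theorem modifyAt_iterate (i : I) (F : X i → X i) (k : ℕ) :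
    (modifyAt i F)^[k] = modifyAt i F^[k] := by
  induction k with
  | zero => rw [Function.iterate_zero, Function.iterate_zero, modifyAt_id]
  | succ k ih => rw [Function.iterate_succ, ih, modifyAt_comp, Function.iterate_succ]

theorem commute_modifyAt {i j : I} (h : i ≠ j) (F : X i → X i) (G : X j → X j) :
    Function.Commute (modifyAt i F) (modifyAt j G) := fun x => by
  simp only [modifyAt, Function.update_of_ne h, Function.update_of_ne h.symm,
    Function.update_comm h]

end ModifyAt

section JoinProduct

open ZModJoin

variable {p : ℕ} [NeZero p] {I : Type*} {M : I → ℕ}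

/-- The two points of the product of joins have weights supported in levels at most `κ i` in the
`i`-th coordinate, and their weights differ by at most `ρ`. -/
def IsClose (κ : I → ℕ) (ρ : ℝ) (x y : ∀ i, ZModJoin p (M i)) : Prop :=
  ∀ i, SupportedBelow (κ i + 1) (x i) ∧ SupportedBelow (κ i + 1) (y i) ∧
    ∀ l g, |(x i).1 l g - (y i).1 l g| ≤ ρ

theorem IsClose.mono {κ κ' : I → ℕ} {ρ ρ' : ℝ} {x y : ∀ i, ZModJoin p (M i)} (h : IsClose κ ρ x y)
    (hκ : ∀ i, κ i ≤ κ' i) (hρ : ρ ≤ ρ') : IsClose κ' ρ' x y := fun i =>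
  ⟨(h i).1.mono (Nat.succ_le_succ (hκ i)), (h i).2.1.mono (Nat.succ_le_succ (hκ i)),
    fun l g => ((h i).2.2 l g).trans hρ⟩

variable [DecidableEq I]

/-- The `i`-th generator of the coordinatewise action of `(ℤ/p)^I` on a product of joins. -/
def rotateAt (i : I) : (∀ i, ZModJoin p (M i)) → ∀ i, ZModJoin p (M i) := modifyAt i rotate

/-- The contraction `coneStep` in the `i`-th coordinate of a product of joins. -/
def coneAt (i : I) (t : Fin (M i + 1)) (n s : ℕ) :
    (∀ i, ZModJoin p (M i)) → ∀ i, ZModJoin p (M i) := modifyAt i (coneStep t n s)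

theorem isLabelledAction_rotateAt : IsLabelledAction (p := p)
    (rotateAt (M := M)) fun i x => topLabel (x i) where
  iterate i := by rw [rotateAt, modifyAt_iterate, rotate_iterate_self, modifyAt_id]
  commute i j := by
    rcases eq_or_ne i j with rfl | h
    · exact Function.Commute.refl _
    · exact commute_modifyAt h _ _
  label_self i x := by rw [rotateAt, modifyAt_self, topLabel_rotate]
  label_of_ne i j x h := by rw [rotateAt, modifyAt_of_ne h.symm]

theorem isCone_coneAt (i : I) (t : Fin (M i + 1)) {n : ℕ} (hn : n ≠ 0) : IsCone (p := p)
    (rotateAt (M := M)) (fun i x => topLabel (x i)) i (coneAt i t n) n where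
  zero := by
    rw [coneAt, show coneStep t n 0 = id from funext (coneStep_zero t n), modifyAt_id]
  comp_eq := by
    have h : coneStep t n n ∘ rotate = coneStep (p := p) t n n := funext fun y => by
      rw [Function.comp_apply, coneStep_self t hn, coneStep_self t hn]
    rw [coneAt, rotateAt, modifyAt_comp, h]
  label_self s x := by rw [coneAt, modifyAt_self, topLabel_coneStep_succ t hn]
  label_of_ne j hj s x := by rw [coneAt, modifyAt_of_ne hj]
  commute j hj s := commute_modifyAt hj.symm _ _

theorem IsClose.rotateAt {κ : I → ℕ} {ρ : ℝ} (i : I) {x y : ∀ i, ZModJoin p (M i)}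
    (h : IsClose κ ρ x y) : IsClose κ ρ (rotateAt i x) (rotateAt i y) := by
  intro j
  rcases eq_or_ne j i with rfl | hj
  · simp only [TransversalTverberg.rotateAt, modifyAt_self]
    exact ⟨fun l hl g => (h j).1 l hl _, fun l hl g => (h j).2.1 l hl _, fun l g => (h j).2.2 l _⟩
  · simpa only [TransversalTverberg.rotateAt, modifyAt_of_ne hj] using h j

theorem IsClose.coneAt {κ : I → ℕ} {ρ : ℝ} {i : I} {t : Fin (M i + 1)} (ht : κ i < t) (n : ℕ)
    {s s' : ℕ} (hs : |(s : ℝ) - s'| ≤ 1) {x y : ∀ i, ZModJoin p (M i)} (h : IsClose κ ρ x y) :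
    IsClose (Function.update κ i t) (ρ + 1 / n) (coneAt i t n s x) (coneAt i t n s' y) := by
  intro j
  rcases eq_or_ne j i with rfl | hj
  · have hx := (h j).1.mono ht
    have hy := (h j).2.1.mono ht
    simp only [TransversalTverberg.coneAt, modifyAt_self, Function.update_self]
    exact ⟨hx.coneStep n s, hy.coneStep n s', fun l g => abs_coneStep_sub_le n hs hx hy
      ((h j).2.2 l g)⟩
  · simp only [TransversalTverberg.coneAt, modifyAt_of_ne hj, Function.update_of_ne hj]
    exact ⟨(h j).1, (h j).2.1, fun l g => ((h j).2.2 l g).trans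
      (le_add_of_nonneg_right (by positivity))⟩

variable {R : Type*} [CommRing R]

/-- The `k`-th slant operator of the coordinate `i`, with cones to the one or two levels following
level `eulerDegree p * k`. For `p = 2` the second cone is not used. -/
def slantAt (p : ℕ) [NeZero p] (M : I → ℕ) (n : ℕ) (i : I) (k : ℕ) :
    Module.End R (Cochain R (∀ i, ZModJoin p (M i))) :=
  slant p (rotateAt i) (coneAt i (Fin.ofNat (M i + 1) (eulerDegree p * k + 1)) n)
    (coneAt i (Fin.ofNat (M i + 1) (eulerDegree p * k + 2)) n) n

theorem isLocal_prismSum_coneAt {κ : I → ℕ} (ρ : ℝ) {i : I} {t : Fin (M i + 1)} (ht : κ i < t)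
    (n : ℕ) : IsLocal (prismSum (coneAt i t n) n : Module.End R (Cochain R _))
      (IsClose (p := p) κ ρ) (IsClose (Function.update κ i t) (ρ + 1 / n)) :=
  isLocal_prismSum (fun _ _ hs _ _ h => h.coneAt ht n hs) n

theorem isLocal_slantAt {κ : I → ℕ} (ρ : ℝ) (n : ℕ) {i : I} {k : ℕ}
    (hκ : κ i ≤ eulerDegree p * k) (hM : eulerDegree p * (k + 1) ≤ M i) :
    IsLocal (slantAt p M n i k : Module.End R (Cochain R _)) (IsClose κ ρ)
      (IsClose (Function.update κ i (eulerDegree p * (k + 1))) (ρ + 2 / n)) := by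
  have hrotate (κ : I → ℕ) (ρ : ℝ) (x y : ∀ i, ZModJoin p (M i)) (h : IsClose κ ρ x y) :=
    h.rotateAt i
  unfold slantAt slant
  rcases eq_or_ne p 2 with rfl | hp
  · simp only [eulerDegree_two, one_mul, if_true] at hκ hM ⊢
    have ht : (Fin.ofNat (M i + 1) (k + 1) : ℕ) = k + 1 := Nat.mod_eq_of_lt (by omega)
    refine ((isLocal_diffOp (hrotate κ ρ)).mul
      (isLocal_prismSum_coneAt ρ (by omega) n)).mono fun x y h => ?_
    rw [ht] at h
    exact h.mono (fun _ => le_rfl) (by gcongr; norm_num)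
  · rw [eulerDegree_of_ne_two hp] at hκ hM ⊢
    rw [if_neg hp]
    have ht : (Fin.ofNat (M i + 1) (2 * k + 1) : ℕ) = 2 * k + 1 := Nat.mod_eq_of_lt (by omega)
    have ht' : (Fin.ofNat (M i + 1) (2 * k + 2) : ℕ) = 2 * k + 2 := Nat.mod_eq_of_lt (by omega)
    refine (((isLocal_diffOp (hrotate κ ρ)).mul (isLocal_prismSum_coneAt ρ (by omega) n)).mul
      ((isLocal_normOp p (hrotate _ _)).mul (isLocal_prismSum_coneAt _ ?_ n))).mono fun x y h => ?_
    · rw [ht, ht', Function.update_self]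
      exact Nat.lt_succ_self _
    · rw [ht, ht', Function.update_idem] at h
      exact h.mono (fun _ => le_rfl) (by ring_nf; rfl)

theorem isLocal_prod_slantAt {κ : I → ℕ} (ρ : ℝ) (n : ℕ) {i : I} (hκ : κ i = 0) {a : ℕ}
    (hM : eulerDegree p * a ≤ M i) :
    IsLocal ((List.range a).map (slantAt p M n i) : List (Module.End R (Cochain R _))).prod
      (IsClose κ ρ) (IsClose (Function.update κ i (eulerDegree p * a)) (ρ + a * (2 / n))) := by
  induction a with
  | zero => exact IsLocal.one.mono fun x y h => h.mono (fun j => by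
      rw [mul_zero, ← hκ, Function.update_eq_self]) (by simp)
  | succ a ih =>
    have hle : eulerDegree p * a ≤ eulerDegree p * (a + 1) := Nat.mul_le_mul_left _ a.le_succ
    rw [List.range_succ, List.map_append, List.prod_append, List.map_singleton,
      List.prod_singleton]
    refine ((ih (hle.trans hM)).mul (isLocal_slantAt _ n (by simp) hM)).mono fun x y h => ?_
    rw [Function.update_idem] at h
    exact h.mono (fun _ => le_rfl) (by push_cast; linarith)

theorem isLocal_totalSlant_slantAt (n : ℕ) {a : I → ℕ} (hM : ∀ i, eulerDegree p * a i ≤ M i)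
    {is : List I} (his : is.Nodup) :
    IsLocal (totalSlant (p := p) (fun i => (List.range (a i)).map (slantAt p M n i)) is)
      (IsClose 0 0)
      (IsClose (fun i => if i ∈ is then eulerDegree p * a i else 0)
        ((is.map a).sum * (2 / n))) := by
  induction is with
  | nil => exact IsLocal.one.mono fun x y h => h.mono (fun _ => Nat.zero_le _) (by simp)
  | cons i is ih =>
    rw [List.nodup_cons] at his
    refine ((ih his.2).mul (isLocal_prod_slantAt _ n (by simp [his.1]) (hM i))).mono
      fun x y h => h.mono (fun j => ?_) ?_
    · rcases eq_or_ne j i with rfl | hj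
      · simp
      · simp [hj]
    · push_cast [List.map_cons, List.sum_cons]
      linarith

end JoinProduct

/-! ### Sectors of the complex plane -/

section Sectors

open Filter Topology

variable {p : ℕ}

/-- The number, as an element of `ℤ/p`, of the sector of angle `2π/p` containing `w`. A map which is
equivariant for a character of `ℤ/p` is thereby turned into a labelling by `ℤ/p`. -/
def sector (p : ℕ) (w : ℂ) : ZMod p := (⌊(p : ℝ) * w.arg / (2 * Real.pi)⌋ : ℤ)

theorem sector_eq_of_coe_arg_eq {w : ℂ} {θ : ℝ} (h : (w.arg : Real.Angle) = θ) :
    sector p w = (⌊(p : ℝ) * θ / (2 * Real.pi)⌋ : ℤ) := by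
  obtain ⟨k, hk⟩ := Real.Angle.angle_eq_iff_two_pi_dvd_sub.1 h
  have hfloor : (p : ℝ) * w.arg / (2 * Real.pi) =
      (p : ℝ) * θ / (2 * Real.pi) + ((p * k : ℤ) : ℝ) := by
    rw [sub_eq_iff_eq_add.1 hk]
    push_cast
    field_simp
    ring
  rw [sector, hfloor, Int.floor_add_intCast]
  push_cast
  simp

theorem sector_mul {w v : ℂ} (hw : w ≠ 0) (hv : v ≠ 0) :
    sector p (w * v) = (⌊(p : ℝ) * (w.arg + v.arg) / (2 * Real.pi)⌋ : ℤ) :=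
  sector_eq_of_coe_arg_eq (by rw [Complex.arg_mul_coe_angle hw hv, Real.Angle.coe_add])

theorem coe_arg_stdAddChar [NeZero p] (a : ZMod p) :
    ((ZMod.stdAddChar a : ℂ).arg : Real.Angle) = (2 * Real.pi * a.val / p : ℝ) := by
  have hexp : (ZMod.stdAddChar a : ℂ) =
      Complex.exp (((2 * Real.pi * a.val / p : ℝ) : ℂ) * Complex.I) := by
    rw [ZMod.stdAddChar_apply, ZMod.toCircle_apply]
    congr 1
    push_cast
    ring
  rw [hexp, Complex.arg_exp_mul_I, Real.Angle.coe_toIocMod]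

theorem stdAddChar_ne_zero [NeZero p] (a : ZMod p) : (ZMod.stdAddChar a : ℂ) ≠ 0 := by
  rw [ZMod.stdAddChar_apply]
  exact Circle.coe_ne_zero _

theorem sector_stdAddChar_mul [NeZero p] (a : ZMod p) {w : ℂ} (hw : w ≠ 0) :
    sector p (ZMod.stdAddChar a * w) = sector p w + a := by
  have hp : (p : ℝ) ≠ 0 := NeZero.ne _
  have harg : ((ZMod.stdAddChar a * w : ℂ).arg : Real.Angle) =
      ((w.arg + 2 * Real.pi * a.val / p : ℝ) : Real.Angle) := by
    rw [Complex.arg_mul_coe_angle (stdAddChar_ne_zero a) hw, coe_arg_stdAddChar, add_comm,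
      Real.Angle.coe_add]
  have hfloor : (p : ℝ) * (w.arg + 2 * Real.pi * a.val / p) / (2 * Real.pi) =
      (p : ℝ) * w.arg / (2 * Real.pi) + ((a.val : ℤ) : ℝ) := by
    push_cast
    field_simp
  rw [sector_eq_of_coe_arg_eq harg, hfloor, Int.floor_add_intCast]
  push_cast
  simp [sector]

/-- The label `a` equals `c` or, for `p ≠ 2`, its successor. The Euler cocycle vanishes on simplices
all of whose labels are adjacent to one `c`. -/
def IsAdjacentLabel (p : ℕ) (c a : ZMod p) : Prop := a = c ∨ p ≠ 2 ∧ a = c + 1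

theorem eventually_sector_ofReal_eq {a : ℝ} (ha : a ≠ 0) :
    ∀ᶠ b : ℝ in 𝓝 a, sector p b = sector p a := by
  rcases ha.lt_or_gt with ha | ha
  · filter_upwards [eventually_lt_nhds ha] with b hb
    rw [sector, sector, Complex.arg_ofReal_of_neg ha, Complex.arg_ofReal_of_neg hb]
  · filter_upwards [eventually_gt_nhds ha] with b hb
    rw [sector, sector, Complex.arg_ofReal_of_nonneg ha.le, Complex.arg_ofReal_of_nonneg hb.le]

theorem floor_add_eq_or {θ η : ℝ} (hη : |η| < 1 / 2) :
    ⌊θ + η⌋ = ⌊θ - 1 / 2⌋ ∨ ⌊θ + η⌋ = ⌊θ - 1 / 2⌋ + 1 := by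
  obtain ⟨hη₁, hη₂⟩ := abs_lt.1 hη
  have hle : ⌊θ - 1 / 2⌋ ≤ ⌊θ + η⌋ := Int.floor_mono (by linarith)
  have hlt : ⌊θ + η⌋ < ⌊θ - 1 / 2⌋ + 2 := by
    rw [Int.floor_lt]
    push_cast
    linarith [Int.lt_floor_add_one (θ - 1 / 2)]
  omega

theorem exists_eventually_sector_eq_or (p : ℕ) {w₀ : ℂ} (hw₀ : w₀ ≠ 0) :
    ∃ c : ZMod p, ∀ᶠ w in 𝓝 w₀, sector p w = c ∨ sector p w = c + 1 := by
  have hcont : ContinuousAt (fun w : ℂ => (p : ℝ) * (w / w₀).arg / (2 * Real.pi)) w₀ := by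
    have harg : ContinuousAt Complex.arg (w₀ / w₀) := by
      rw [div_self hw₀]
      exact Complex.continuousAt_arg (by simp)
    have hdiv : ContinuousAt (fun w : ℂ => w / w₀) w₀ := by fun_prop
    exact ((ContinuousAt.comp (f := fun w : ℂ => w / w₀) harg hdiv).const_mul _).div_const _
  have hsmall : ∀ᶠ w : ℂ in 𝓝 w₀, |(p : ℝ) * (w / w₀).arg / (2 * Real.pi)| < 1 / 2 :=
    hcont.abs.eventually_lt_const (by simp [div_self hw₀])
  refine ⟨(⌊(p : ℝ) * w₀.arg / (2 * Real.pi) - 1 / 2⌋ : ℤ), ?_⟩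
  filter_upwards [hsmall, eventually_ne_nhds hw₀] with w hw hw0
  have hsector : sector p w =
      (⌊(p : ℝ) * w₀.arg / (2 * Real.pi) + p * (w / w₀).arg / (2 * Real.pi)⌋ : ℤ) := by
    rw [← add_div, ← mul_add, ← sector_mul hw₀ (div_ne_zero hw0 hw₀), mul_div_cancel₀ _ hw₀]
  rw [hsector]
  exact (floor_add_eq_or hw).imp (congrArg _) fun h => by rw [h]; push_cast; rfl

theorem exists_eventually_isAdjacentLabel_sector {X : Type*} [TopologicalSpace X] {h : X → ℂ}
    {x₀ : X} (hc : ContinuousAt h x₀) (hre : p = 2 → ∀ x, (h x).im = 0) (hx₀ : h x₀ ≠ 0) :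
    ∃ c : ZMod p, ∀ᶠ x in 𝓝 x₀, IsAdjacentLabel p c (sector p (h x)) := by
  by_cases hp : p = 2
  · have hofReal (x : X) : ((h x).re : ℂ) = h x := Complex.ext rfl (by simp [hre hp])
    have hre₀ : (h x₀).re ≠ 0 := fun h0 => hx₀ (by rw [← hofReal, h0, Complex.ofReal_zero])
    refine ⟨sector p (h x₀), ?_⟩
    filter_upwards [(Complex.continuous_re.continuousAt.comp hc).eventually
      (eventually_sector_ofReal_eq (p := p) hre₀)] with x hx
    simp only [Function.comp_apply, hofReal] at hx
    exact Or.inl hx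
  · obtain ⟨c, hcw⟩ := exists_eventually_sector_eq_or p hx₀
    exact ⟨c, (hc.eventually hcw).mono fun x hx => hx.imp_right (And.intro hp)⟩

end Sectors

section AdjacentLabels

variable {p : ℕ} {V J : Type*}

theorem bockstein_eq_zero_of_adjacent [Fact p.Prime] (hp : p ≠ 2) {t a b c : ZMod p}
    (ha : a = t ∨ a = t + 1) (hb : b = t ∨ b = t + 1) (hc : c = t ∨ c = t + 1) :
    bockstein a b c = 0 := by
  have hp1 : Fact (1 < p) := ⟨(Fact.out : p.Prime).one_lt⟩
  have hneg : (-1 : ZMod p).valMinAbs = -(1 : ZMod p).valMinAbs :=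
    ZMod.valMinAbs_neg_of_ne_half (by rw [ZMod.val_one]; omega)
  rcases ha with rfl | rfl <;> rcases hb with rfl | rfl <;> rcases hc with rfl | rfl <;>
    simp [bockstein, bocksteinDefect, hneg]

theorem eulerCocycle_eq_zero [Fact p.Prime] {s : V → ZMod p} {c : ZMod p} {l : List V}
    (hl : l.length = eulerDegree p + 1) (h : ∀ x ∈ l, IsAdjacentLabel p c (s x)) :
    eulerCocycle s l = 0 := by
  by_cases hp : p = 2
  · subst hp
    match l, hl with
    | [x, y], _ =>
      simp only [IsAdjacentLabel, ne_eq, not_true_eq_false, false_and, or_false] at h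
      simp [eulerCocycle, universalEulerCochain, h]
  · rw [eulerDegree_of_ne_two hp] at hl
    match l, hl with
    | [x, y, z], _ =>
      simp only [IsAdjacentLabel, ne_eq, hp, not_false_eq_true, true_and] at h
      exact bockstein_eq_zero_of_adjacent hp (h x (by simp)) (h y (by simp)) (h z (by simp))

theorem cup_apply_eq_zero_left {R : Type*} [CommRing R] {k : ℕ} {a : Cochain R V}
    (b : Cochain R V) {l : List V} (h : ∀ t : List V, t.length = k + 1 → t ⊆ l → a t = 0) :
    cup k a b l = 0 := by
  induction k generalizing a l with
  | zero =>
    cases l with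
    | nil => rfl
    | cons x l => rw [cup_zero_cons, h [x] rfl (by simp), zero_mul]
  | succ k ih =>
    cases l with
    | nil => rfl
    | cons x l =>
      rw [cup_succ_cons]
      exact ih fun t ht htl => h (x :: t) (by simp [ht]) (List.cons_subset_cons x htl)

theorem cup_apply_eq_zero_right {R : Type*} [CommRing R] {k : ℕ} (a : Cochain R V)
    {b : Cochain R V} {l : List V} (h : ∀ t ⊆ l, b t = 0) : cup k a b l = 0 := by
  induction k generalizing a l with
  | zero =>
    cases l with
    | nil => rfl
    | cons x l => rw [cup_zero_cons, h _ (List.Subset.refl _), mul_zero]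
  | succ k ih =>
    cases l with
    | nil => rfl
    | cons x l =>
      rw [cup_succ_cons]
      exact ih _ fun t ht => h t (List.subset_cons_of_subset x ht)

theorem cupProd_eulerCocycle_apply_eq_zero [Fact p.Prime] {s : J → V → ZMod p} {js : List J} {j : J}
    (hj : j ∈ js) {c : ZMod p} (ω : Cochain (ZMod p) V) {l : List V}
    (h : ∀ x ∈ l, IsAdjacentLabel p c (s j x)) :
    cupProd (eulerDegree p) (fun j => eulerCocycle (s j)) js ω l = 0 := by
  induction js generalizing l with
  | nil => simp at hj
  | cons i js ih =>
    rw [cupProd_cons, Module.End.mul_apply]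
    rcases List.mem_cons.1 hj with rfl | hj
    · exact cup_apply_eq_zero_left _ fun t ht htl =>
        eulerCocycle_eq_zero ht fun x hx => h x (htl hx)
    · exact cup_apply_eq_zero_right _ fun t htl => ih hj fun x hx => h x (htl hx)

end AdjacentLabels

/-! ### A Borsuk–Ulam theorem for products of joins -/

section BorsukUlam

variable {p : ℕ} {I J X : Type*}

theorem exists_forall_dist_lt_isAdjacentLabel [PseudoMetricSpace X] [CompactSpace X] {h : J → X → ℂ}
    (hc : ∀ j, Continuous (h j)) (hre : p = 2 → ∀ j x, (h j x).im = 0)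
    (hne : ∀ x, ∃ j, h j x ≠ 0) {s : J → X → ZMod p}
    (hs : ∀ j x, h j x ≠ 0 → s j x = sector p (h j x)) :
    ∃ ε > 0, ∀ x, ∃ j c, ∀ y, dist y x < ε → IsAdjacentLabel p c (s j y) := by
  have hlocal (x : X) : ∃ j c, ∀ᶠ y in nhds x, IsAdjacentLabel p c (s j y) := by
    obtain ⟨j, hj⟩ := hne x
    obtain ⟨c, hcy⟩ := exists_eventually_isAdjacentLabel_sector (hc j).continuousAt
      (fun hp => hre hp j) hj
    refine ⟨j, c, ?_⟩
    filter_upwards [hcy, (hc j).continuousAt.eventually_ne hj] with y hy hy0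
    rwa [hs j y hy0]
  choose j c hjc using hlocal
  obtain ⟨V, hV, hVx⟩ := lebesgue_number_lemma_nhds isCompact_univ fun x _ => hjc x
  obtain ⟨ε, hε, hεV⟩ := Metric.mem_uniformity_dist.1 hV
  refine ⟨ε, hε, fun x => ?_⟩
  obtain ⟨y, hy⟩ := hVx x (Set.mem_univ x)
  exact ⟨j y, c y, fun z hz => hy (hεV (by rwa [dist_comm]))⟩

/-- The zeros of `h j` have no sector; there any equivariant label will do. -/
theorem exists_label_of_equivariant [Finite I] [NeZero p] {g : I → X → X} {u : I → X → ZMod p}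
    (hg : IsLabelledAction g u) {α : J → I → ZMod p} {h : J → X → ℂ}
    (heq : ∀ j i x, h j (g i x) = ZMod.stdAddChar (α j i) * h j x) :
    ∃ s : J → X → ZMod p, (∀ j i x, s j (g i x) = s j x + α j i) ∧
      ∀ j x, h j x ≠ 0 → s j x = sector p (h j x) := by
  classical
  cases nonempty_fintype I
  refine ⟨fun j x => if h j x = 0 then ∑ i, α j i * u i x else sector p (h j x),
    fun j i x => ?_, fun j x hx => if_neg hx⟩
  simp only [heq, mul_eq_zero, stdAddChar_ne_zero, false_or]
  split_ifs with h0
  · have hu (k : I) : u k (g i x) = u k x + if k = i then 1 else 0 := by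
      split_ifs with hk
      · rw [hk, hg.label_self]
      · rw [hg.label_of_ne i k x (Ne.symm hk), add_zero]
    simp [hu, mul_add, Finset.sum_add_distrib]
  · exact sector_stdAddChar_mul _ h0

theorem exists_nodup_list_pairwise_le [Finite I] (rank : I → ℕ) :
    ∃ is : List I, is.Nodup ∧ (∀ i, i ∈ is) ∧ is.Pairwise fun i i' => rank i' ≤ rank i := by
  classical
  cases nonempty_fintype I
  have : Std.Total fun i i' : I => rank i' ≤ rank i := ⟨fun i i' => le_total _ _⟩
  have : IsTrans I fun i i' => rank i' ≤ rank i := ⟨fun _ _ _ h h' => h'.trans h⟩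
  have hperm := List.perm_insertionSort (fun i i' : I => rank i' ≤ rank i) Finset.univ.toList
  exact ⟨_, hperm.nodup_iff.2 (Finset.nodup_toList _), fun i => hperm.mem_iff.2 (by simp),
    List.pairwise_insertionSort _ _⟩

theorem IsClose.dist_le [Fintype I] {M : I → ℕ} [NeZero p] {κ : I → ℕ} {ρ : ℝ} (hρ : 0 ≤ ρ)
    {x y : ∀ i, ZModJoin p (M i)} (h : IsClose κ ρ x y) : dist x y ≤ ρ := by
  refine (dist_pi_le_iff hρ).2 fun i => ?_
  rw [Subtype.dist_eq]
  exact (dist_pi_le_iff hρ).2 fun l => (dist_pi_le_iff hρ).2 fun g => (h i).2.2 l g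

theorem isClose_apex_zero {M : I → ℕ} [NeZero p] {x : ∀ i, ZModJoin p (M i)}
    (hx : ∀ i, x i = ZModJoin.apex 0) : IsClose 0 0 x x := by
  have hlow (i : I) : ZModJoin.SupportedBelow (0 + 1) (x i) := fun l hl g => by
    rw [hx, ZModJoin.apex_apply_of_ne (by rintro rfl; simp at hl)]
  exact fun i => ⟨hlow i, hlow i, by simp⟩

theorem isSlantOperator_slantAt [NeZero p] [DecidableEq I] {M : I → ℕ} {n : ℕ} (hn : n ≠ 0)
    (i : I) (k : ℕ) : IsSlantOperator (rotateAt (p := p) (M := M)) (fun i x => (x i).topLabel) i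
      (slantAt p M n i k) :=
  isSlantOperator_slant isLabelledAction_rotateAt hn (isCone_coneAt i _ hn) (isCone_coneAt i _ hn)

theorem exists_nat_mul_div_lt (a b : ℝ) {ε : ℝ} (hε : 0 < ε) :
    ∃ n : ℕ, n ≠ 0 ∧ a * (b / n) < ε := by
  have hlim := tendsto_const_div_atTop_nhds_zero_nat (a * b)
  obtain ⟨n, hlt, hn⟩ :=
    ((hlim.eventually_lt_const hε).and (Filter.eventually_ne_atTop 0)).exists
  exact ⟨n, hn, by rwa [← mul_div_assoc]⟩

/-- Without a common zero the product of the Euler cocycles of the sectors would vanish on all small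
simplices, but the total slant operator evaluates it to the product of the leading coefficients. -/
theorem exists_common_zero_of_equivariant [Fact p.Prime] [Finite I] [Fintype J] [DecidableEq I]
    (M rank : I → ℕ) (α : J → I → ZMod p) (lead : J → I) (hlead : ∀ j, α j (lead j) ≠ 0)
    (htri : ∀ j i, i ≠ lead j → rank (lead j) ≤ rank i → α j i = 0)
    (hM : ∀ i, eulerDegree p * (Finset.univ.filter fun j => lead j = i).card ≤ M i)
    (h : J → (∀ i, ZModJoin p (M i)) → ℂ) (hc : ∀ j, Continuous (h j))
    (heq : ∀ j i x, h j (rotateAt i x) = ZMod.stdAddChar (α j i) * h j x)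
    (hre : p = 2 → ∀ j x, (h j x).im = 0) : ∃ x, ∀ j, h j x = 0 := by
  cases nonempty_fintype I
  by_contra! hcon
  obtain ⟨s, hsg, hs⟩ := exists_label_of_equivariant isLabelledAction_rotateAt heq
  obtain ⟨ε, hε, hadj⟩ := exists_forall_dist_lt_isAdjacentLabel hc hre hcon hs
  obtain ⟨is, hnodup, hmem, hsorted⟩ := exists_nodup_list_pairwise_le rank
  let js (i : I) : List J := (Finset.univ.filter fun j => lead j = i).toList
  have hjs {j i} : j ∈ js i ↔ lead j = i := by simp [js]
  let a (i : I) : ℕ := (Finset.univ.filter fun j => lead j = i).card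
  obtain ⟨n, hn, hρ⟩ := exists_nat_mul_div_lt (is.map a).sum 2 hε
  let x₀ (i : I) : ZModJoin p (M i) := ZModJoin.apex 0
  have heval := totalSlant_cupProd_eulerCocycle (js := js) isLabelledAction_rotateAt hsg
    (Ds := fun i => (List.range (a i)).map (slantAt p M n i))
    (fun i D hD => by
      obtain ⟨k, -, rfl⟩ := List.mem_map.1 hD
      exact isSlantOperator_slantAt hn i k)
    (by simp [js, a]) hnodup
    ((hsorted.and hnodup).imp fun ⟨hle, hne⟩ j hj => by
      obtain rfl := hjs.1 hj
      exact htri j _ hne hle) x₀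
  have hne : (is.map fun i => ((js i).map fun j => α j i).prod).prod ≠ 0 := by
    refine List.prod_ne_zero fun h0 => ?_
    obtain ⟨i, -, hi⟩ := List.mem_map.1 h0
    obtain ⟨j, hj, hj0⟩ := List.mem_map.1 (List.prod_eq_zero_iff.1 hi)
    obtain rfl := hjs.1 hj
    exact hlead j hj0
  refine hne (heval.symm.trans
    (isLocal_totalSlant_slantAt n hM hnodup _ (fun l hl => ?_) [x₀] fun x hx y hy => ?_))
  · rcases l with _ | ⟨x, l⟩
    · exact cupProd_apply_nil _ _ _ unitCochain_nil
    · obtain ⟨j, c, hjc⟩ := hadj x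
      exact cupProd_eulerCocycle_apply_eq_zero
        (List.mem_flatMap.2 ⟨lead j, hmem _, hjs.2 rfl⟩) _ fun y hy => hjc y
          (((hl y hy x (by simp)).dist_le (by positivity)).trans_lt hρ)
  · rw [List.mem_singleton.1 hx, List.mem_singleton.1 hy]
    exact isClose_apex_zero fun _ => rfl

end BorsukUlam

/-! ### The staircase map -/

section Staircase

variable {p : ℕ} [NeZero p]

namespace ZModJoin

variable {M : ℕ}

/-- The total weight of the levels below `l`. The levels of `y` partition `[0, 1]` into consecutive
intervals, and this is the left end of the interval of level `l`. -/
def weightBelow (y : ZModJoin p M) (l : Fin (M + 1)) : ℝ := ∑ l' with l' < l, ∑ g, y.1 l' g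

theorem continuous_weightBelow (l : Fin (M + 1)) :
    Continuous fun y : ZModJoin p M => weightBelow y l :=
  continuous_finsetSum _ fun l _ => continuous_finsetSum _ fun g _ =>
    (continuous_apply_apply l g).comp continuous_subtype_val

theorem weightBelow_add_le (y : ZModJoin p M) {l l' : Fin (M + 1)} (h : l < l') (g : ZMod p) :
    weightBelow y l + y.1 l g ≤ weightBelow y l' :=
  calc weightBelow y l + y.1 l g
      ≤ weightBelow y l + ∑ g, y.1 l g := by
        gcongr
        exact Finset.single_le_sum (fun g _ => nonneg y l g) (Finset.mem_univ g)
    _ = ∑ k ∈ insert l (Finset.univ.filter (· < l)), ∑ g, y.1 k g := by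
        rw [Finset.sum_insert (by simp), weightBelow, add_comm]
    _ ≤ weightBelow y l' := by
        refine Finset.sum_le_sum_of_subset_of_nonneg (fun k hk => ?_)
          fun k _ _ => Finset.sum_nonneg fun g _ => nonneg y k g
        rcases Finset.mem_insert.1 hk with rfl | hk
        · simpa using h
        · simpa using (Finset.mem_filter.1 hk).2.trans h

theorem weightBelow_rotate (y : ZModJoin p M) (l : Fin (M + 1)) :
    weightBelow (rotate y) l = weightBelow y l :=
  Finset.sum_congr rfl fun l' _ =>
    Equiv.sum_comp (Equiv.subRight (1 : ZMod p)) fun g => y.1 l' g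

theorem exists_pos_weightBelow_eq_zero (y : ZModJoin p M) :
    ∃ l g, 0 < y.1 l g ∧ weightBelow y l = 0 := by
  classical
  have hne : (Finset.univ.filter fun l => ∃ g, y.1 l g ≠ 0).Nonempty :=
    let ⟨g, l, h⟩ := exists_isTop y
    ⟨l, Finset.mem_filter.2 ⟨Finset.mem_univ _, g, h.1⟩⟩
  obtain ⟨l, hl, hmin⟩ := Finset.exists_min_image _ id hne
  obtain ⟨g, hg⟩ := (Finset.mem_filter.1 hl).2
  refine ⟨l, g, (nonneg y l g).lt_of_ne' hg,
    Finset.sum_eq_zero fun l' hl' => Finset.sum_eq_zero fun g' _ => ?_⟩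
  by_contra hg'
  exact ((Finset.mem_filter.1 hl').2).not_ge
    (hmin l' (Finset.mem_filter.2 ⟨Finset.mem_univ _, g', hg'⟩))

end ZModJoin

open ZModJoin

variable {B : Type*} {M : B → ℕ}

/-- For levels `l` and group elements `g`, the right end of the interval of `(l b, g b)` in the
`b`-th coordinate minus the left end of the interval of `l b'` in the coordinate `b'`. -/
def overlap (x : ∀ b, ZModJoin p (M b)) (g : B → ZMod p) (l : ∀ b, Fin (M b + 1)) (b b' : B) : ℝ :=
  weightBelow (x b) (l b) + (x b).1 (l b) (g b) - weightBelow (x b') (l b')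

/-- The intervals carrying the elements `g b` on the levels `l b` have a common interior point. -/
def IntervalsMeet (x : ∀ b, ZModJoin p (M b)) (g : B → ZMod p) (l : ∀ b, Fin (M b + 1)) : Prop :=
  ∀ b b', 0 < overlap x g l b b'

theorem continuous_overlap (g : B → ZMod p) (l : ∀ b, Fin (M b + 1)) (b b' : B) :
    Continuous fun x : ∀ b, ZModJoin p (M b) => overlap x g l b b' := by
  have h : ∀ b, Continuous fun x : ∀ b, ZModJoin p (M b) => weightBelow (x b) (l b) := fun b =>
    (continuous_weightBelow (l b)).comp (continuous_apply b)
  exact ((h b).add ((continuous_apply_apply (l b) (g b)).comp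
    (continuous_subtype_val.comp (continuous_apply b)))).sub (h b')

theorem IntervalsMeet.le_of_lt {x : ∀ b, ZModJoin p (M b)} {g g' : B → ZMod p}
    {l l' : ∀ b, Fin (M b + 1)} (h : IntervalsMeet x g l) (h' : IntervalsMeet x g' l') {b : B}
    (hb : l b < l' b) : l ≤ l' := by
  refine fun b' => not_lt.1 fun hb' => ?_
  have h₁ := weightBelow_add_le (x b) hb (g b)
  have h₂ := weightBelow_add_le (x b') hb' (g' b')
  have h₃ := h b b'
  have h₄ := h' b' b
  unfold overlap at h₃ h₄
  linarith

theorem IntervalsMeet.eq_of_sum_eq [Fintype B] {x : ∀ b, ZModJoin p (M b)} {g g' : B → ZMod p}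
    {l l' : ∀ b, Fin (M b + 1)} (h : IntervalsMeet x g l) (h' : IntervalsMeet x g' l')
    (hs : ∑ b, (l b : ℕ) = ∑ b, (l' b : ℕ)) : l = l' := by
  have hle : l ≤ l' ∨ l' ≤ l := by
    by_cases hlt : ∃ b, l b < l' b
    · exact .inl (h.le_of_lt h' hlt.choose_spec)
    · exact .inr fun b => not_lt.1 fun hb => hlt ⟨b, hb⟩
  wlog hll : l ≤ l' generalizing l l' g g'
  · exact (this h' h hs.symm hle.symm (hle.resolve_left hll)).symm
  · exact funext fun b => Fin.ext
      ((Finset.sum_eq_sum_iff_of_le fun b _ => hll b).1 hs b (Finset.mem_univ b))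

theorem IntervalsMeet.eq {x : ∀ b, ZModJoin p (M b)} {g g' : B → ZMod p}
    {l : ∀ b, Fin (M b + 1)} (h : IntervalsMeet x g l) (h' : IntervalsMeet x g' l) : g = g' := by
  funext b
  by_contra hb
  have h₁ := h b b
  have h₂ := h' b b
  unfold overlap at h₁ h₂
  rcases _root_.mul_eq_zero.1 (ZModJoin.mul_eq_zero (x b) (l b) hb) with h₀ | h₀ <;> linarith

theorem overlap_rotateAt [DecidableEq B] (x : ∀ b, ZModJoin p (M b)) (i : B) (g : B → ZMod p)
    (l : ∀ b, Fin (M b + 1)) (b b' : B) :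
    overlap (rotateAt i x) g l b b' = overlap x (g - Pi.single i 1) l b b' := by
  have hweight : ∀ b, weightBelow (rotateAt i x b) (l b) = weightBelow (x b) (l b) := fun b => by
    rcases eq_or_ne b i with rfl | hb
    · rw [rotateAt, modifyAt_self, weightBelow_rotate]
    · rw [rotateAt, modifyAt_of_ne hb]
  have hcoord : (rotateAt i x b).1 (l b) (g b) =
      (x b).1 (l b) ((g - Pi.single i 1 : B → ZMod p) b) := by
    rcases eq_or_ne b i with rfl | hb
    · rw [rotateAt, modifyAt_self, rotate_apply, Pi.sub_apply, Pi.single_eq_same]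
    · rw [rotateAt, modifyAt_of_ne hb, Pi.sub_apply, Pi.single_eq_of_ne hb, sub_zero]
  rw [overlap, overlap, hweight, hweight, hcoord]

variable [Fintype B]

open Classical in
/-- A map from a product of joins to weights on the vertices of a simplex, one for each
`g : (ℤ/p)^B`. Vertex `s` gets positive weight in the point of index `g` exactly if the intervals of
`g` meet for some tuple of levels of sum `s`. This realizes the staircase triangulation of the
product. -/
def staircase (N : ℕ) (x : ∀ b, ZModJoin p (M b)) (g : B → ZMod p) (s : Fin (N + 1)) : ℝ :=
  ∑ l : ∀ b, Fin (M b + 1) with ∑ b, (l b : ℕ) = s, ∏ b, ∏ b', max 0 (overlap x g l b b')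

theorem continuous_staircase (N : ℕ) (g : B → ZMod p) :
    Continuous fun x : ∀ b, ZModJoin p (M b) => staircase N x g :=
  continuous_pi fun _ => continuous_finsetSum _ fun l _ => continuous_finsetProd _ fun b _ =>
    continuous_finsetProd _ fun b' _ => continuous_const.max (continuous_overlap g l b b')

theorem staircase_nonneg (N : ℕ) (x : ∀ b, ZModJoin p (M b)) (g : B → ZMod p) (s : Fin (N + 1)) :
    0 ≤ staircase N x g s :=
  Finset.sum_nonneg fun _ _ => Finset.prod_nonneg fun _ _ => Finset.prod_nonneg fun _ _ =>
    le_max_left _ _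

theorem exists_intervalsMeet_of_staircase_ne_zero {N : ℕ} {x : ∀ b, ZModJoin p (M b)}
    {g : B → ZMod p} {s : Fin (N + 1)} (h : staircase N x g s ≠ 0) :
    ∃ l, ∑ b, (l b : ℕ) = s ∧ IntervalsMeet x g l := by
  obtain ⟨l, hl, hprod⟩ := Finset.exists_ne_zero_of_sum_ne_zero h
  refine ⟨l, (Finset.mem_filter.1 hl).2, fun b b' => not_le.1 fun hle => ?_⟩
  exact Finset.prod_ne_zero_iff.1 (Finset.prod_ne_zero_iff.1 hprod b (Finset.mem_univ _)) b'
    (Finset.mem_univ _) (max_eq_left hle)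

theorem eq_of_staircase_ne_zero {N : ℕ} {x : ∀ b, ZModJoin p (M b)} {g g' : B → ZMod p}
    {s : Fin (N + 1)} (h : staircase N x g s ≠ 0) (h' : staircase N x g' s ≠ 0) : g = g' := by
  obtain ⟨l, hl, hmeet⟩ := exists_intervalsMeet_of_staircase_ne_zero h
  obtain ⟨l', hl', hmeet'⟩ := exists_intervalsMeet_of_staircase_ne_zero h'
  obtain rfl := hmeet.eq_of_sum_eq hmeet' (hl.trans hl'.symm)
  exact hmeet.eq hmeet'

theorem exists_staircase_pos {N : ℕ} (hN : ∑ b, M b ≤ N) (x : ∀ b, ZModJoin p (M b)) :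
    ∃ g s, 0 < staircase N x g s := by
  choose l g hpos hbelow using fun b => exists_pos_weightBelow_eq_zero (x b)
  have hs : ∑ b, (l b : ℕ) < N + 1 :=
    Nat.lt_succ_of_le ((Finset.sum_le_sum fun b _ => Nat.lt_succ_iff.1 (l b).2).trans hN)
  refine ⟨g, ⟨∑ b, (l b : ℕ), hs⟩, Finset.sum_pos' (fun _ _ => Finset.prod_nonneg fun _ _ =>
    Finset.prod_nonneg fun _ _ => le_max_left _ _) ⟨l, by simp, ?_⟩⟩
  refine Finset.prod_pos fun b _ => Finset.prod_pos fun b' _ => lt_max_of_lt_right ?_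
  simpa only [overlap, hbelow, zero_add, sub_zero] using hpos b

theorem staircase_rotateAt [DecidableEq B] (N : ℕ) (x : ∀ b, ZModJoin p (M b)) (i : B)
    (g : B → ZMod p) : staircase N (rotateAt i x) g = staircase N x (g - Pi.single i 1) := by
  funext s
  simp only [staircase, overlap_rotateAt]

end Staircase

section Homogenization

variable {N : ℕ}

/-- The point of the simplex with the given weights, normalized to sum one. It is meaningful only
when the sum of the weights is nonzero. -/
def normalize (y : Fin (N + 1) → ℝ) : EuclideanSpace ℝ (Fin (N + 1)) :=
  WithLp.toLp 2 fun i => y i / ∑ k, y k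

/-- The homogeneous extension of a function on the simplex to the cone of nonnegative weights. -/
def homogenize (F : EuclideanSpace ℝ (Fin (N + 1)) → ℝ) (y : Fin (N + 1) → ℝ) : ℝ :=
  (∑ k, y k) * F (normalize y)

theorem normalize_mem_stdSimp {y : Fin (N + 1) → ℝ} (hy : 0 ≤ y) (hs : ∑ k, y k ≠ 0) :
    normalize y ∈ stdSimp N :=
  ⟨fun i => div_nonneg (hy i) (Finset.sum_nonneg fun k _ => hy k), by
    simp only [normalize, ← Finset.sum_div, div_self hs]⟩

theorem isCompact_stdSimp (N : ℕ) : IsCompact (stdSimp N) := by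
  have h := (isCompact_stdSimplex ℝ (Fin (N + 1))).image
    (f := fun y : Fin (N + 1) → ℝ => (WithLp.toLp 2 y : EuclideanSpace ℝ (Fin (N + 1))))
    (by fun_prop)
  convert h using 1
  ext x
  exact ⟨fun hx => ⟨x.ofLp, hx, rfl⟩, fun ⟨_, hy, hx⟩ => hx ▸ hy⟩

theorem continuousAt_normalize {y : Fin (N + 1) → ℝ} (hs : ∑ k, y k ≠ 0) :
    ContinuousAt normalize y := by
  have h : ContinuousAt (fun (y : Fin (N + 1) → ℝ) i => y i / ∑ k, y k) y :=
    continuousAt_pi.2 fun i => (continuous_apply i).continuousAt.div (by fun_prop) hs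
  exact ContinuousAt.comp (g := fun y : Fin (N + 1) → ℝ =>
    (WithLp.toLp 2 y : EuclideanSpace ℝ (Fin (N + 1)))) (by fun_prop) h

/-- Continuity at the apex of the cone follows from boundedness of `F`. -/
theorem continuousWithinAt_homogenize_of_sum_eq_zero {F : EuclideanSpace ℝ (Fin (N + 1)) → ℝ}
    (hF : ContinuousOn F (stdSimp N)) {y : Fin (N + 1) → ℝ} (hs : ∑ k, y k = 0) :
    ContinuousWithinAt (homogenize F) (Set.Ici 0) y := by
  obtain ⟨C, hC⟩ := (isCompact_stdSimp N).exists_bound_of_continuousOn hF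
  have h₀ : homogenize F y = 0 := by simp [homogenize, hs]
  rw [ContinuousWithinAt, h₀]
  refine squeeze_zero_norm' (a := fun y => (∑ k, y k) * C) ?_ ?_
  · filter_upwards [self_mem_nhdsWithin] with z (hz : 0 ≤ z)
    rcases eq_or_ne (∑ k, z k) 0 with hz₀ | hz₀
    · simp [homogenize, hz₀]
    · have hsum : 0 ≤ ∑ k, z k := Finset.sum_nonneg fun k _ => hz k
      rw [homogenize, norm_mul, Real.norm_of_nonneg hsum]
      exact mul_le_mul_of_nonneg_left (hC _ (normalize_mem_stdSimp hz hz₀)) hsum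
  · have hc : Continuous fun y : Fin (N + 1) → ℝ => (∑ k, y k) * C := by fun_prop
    have h := hc.tendsto y
    rw [hs, zero_mul] at h
    exact h.mono_left nhdsWithin_le_nhds

theorem continuousWithinAt_homogenize_of_sum_ne_zero {F : EuclideanSpace ℝ (Fin (N + 1)) → ℝ}
    (hF : ContinuousOn F (stdSimp N)) {y : Fin (N + 1) → ℝ} (hy : 0 ≤ y) (hs : ∑ k, y k ≠ 0) :
    ContinuousWithinAt (homogenize F) (Set.Ici 0) y := by
  have hc : Continuous fun y : Fin (N + 1) → ℝ => ∑ k, y k := by fun_prop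
  have hF' : Filter.Tendsto (F ∘ normalize) (nhdsWithin y (Set.Ici 0))
      (nhds (F (normalize y))) := by
    refine (hF _ (normalize_mem_stdSimp hy hs)).tendsto.comp (tendsto_nhdsWithin_iff.2
      ⟨(continuousAt_normalize hs).tendsto.mono_left nhdsWithin_le_nhds, ?_⟩)
    filter_upwards [self_mem_nhdsWithin,
      (hc.continuousAt.eventually_ne hs).filter_mono nhdsWithin_le_nhds] with z hz hz₀
    exact normalize_mem_stdSimp hz hz₀
  exact hc.continuousWithinAt.mul hF'

theorem continuousOn_homogenize {F : EuclideanSpace ℝ (Fin (N + 1)) → ℝ}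
    (hF : ContinuousOn F (stdSimp N)) : ContinuousOn (homogenize F) (Set.Ici 0) := fun y hy =>
  if hs : ∑ k, y k = 0 then continuousWithinAt_homogenize_of_sum_eq_zero hF hs
  else continuousWithinAt_homogenize_of_sum_ne_zero hF hy hs

end Homogenization

/-! ### An equivariant map from a join to a complex vector space -/

section JoinCoord

theorem stdAddChar_im (a : ZMod 2) : (ZMod.stdAddChar a : ℂ).im = 0 := by
  have h : (ZMod.stdAddChar a : ℂ) ^ 2 = 1 := by
    rw [← AddChar.map_nsmul_eq_pow, two_nsmul, CharTwo.add_self_eq_zero, AddChar.map_zero_eq_one]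
  rcases sq_eq_one_iff.1 h with h | h <;> simp [h]

namespace ZModJoin

variable {p : ℕ} [NeZero p] {M : ℕ}

/-- The point of `ℂ` determined by level `l`: a nonnegative multiple of a `p`-th root of unity. -/
def levelPoint (y : ZModJoin p M) (l : Fin (M + 1)) : ℂ :=
  ∑ g, ZMod.stdAddChar g * (y.1 l g : ℂ)

/-- The `b`-th coordinate of an equivariant map from the join to a complex vector space, which adds
up the points of one level for `p = 2` and of two consecutive levels for other `p`. -/
def blockPoint (y : ZModJoin p M) (b : ℕ) : ℂ :=
  ∑ l with (l : Fin (M + 1)).1 / eulerDegree p = b, levelPoint y l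

theorem continuous_blockPoint (b : ℕ) : Continuous fun y : ZModJoin p M => blockPoint y b :=
  continuous_finsetSum _ fun l _ => continuous_finsetSum _ fun g _ => continuous_const.mul <|
    Complex.continuous_ofReal.comp ((continuous_apply_apply l g).comp continuous_subtype_val)

theorem levelPoint_rotate (y : ZModJoin p M) (l : Fin (M + 1)) :
    levelPoint (rotate y) l = ZMod.stdAddChar (1 : ZMod p) * levelPoint y l := by
  rw [levelPoint, levelPoint, Finset.mul_sum, ← Equiv.sum_comp (Equiv.addRight (1 : ZMod p))]
  refine Finset.sum_congr rfl fun g _ => ?_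
  rw [Equiv.coe_addRight, rotate_apply, add_sub_cancel_right, AddChar.map_add_eq_mul]
  ring

theorem blockPoint_rotate (y : ZModJoin p M) (b : ℕ) :
    blockPoint (rotate y) b = ZMod.stdAddChar (1 : ZMod p) * blockPoint y b := by
  simp only [blockPoint, levelPoint_rotate, Finset.mul_sum]

theorem blockPoint_im (y : ZModJoin 2 M) (b : ℕ) : (blockPoint y b).im = 0 := by
  simp [blockPoint, levelPoint, Complex.im_sum, stdAddChar_im]

theorem levelPoint_eq {y : ZModJoin p M} {l : Fin (M + 1)} {g : ZMod p} (hg : y.1 l g ≠ 0) :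
    levelPoint y l = ZMod.stdAddChar g * (y.1 l g : ℂ) := by
  refine Finset.sum_eq_single g (fun g' _ hg' => ?_) (by simp)
  rw [(_root_.mul_eq_zero.1 (mul_eq_zero y l hg')).resolve_right hg, Complex.ofReal_zero, mul_zero]

theorem levelPoint_ne_zero {y : ZModJoin p M} {l : Fin (M + 1)} {g : ZMod p} (hg : y.1 l g ≠ 0) :
    levelPoint y l ≠ 0 := by
  rw [levelPoint_eq hg]
  exact mul_ne_zero (stdAddChar_ne_zero g) (Complex.ofReal_ne_zero.2 hg)

theorem exists_levelPoint_pow_eq (y : ZModJoin p M) (l : Fin (M + 1)) :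
    ∃ r : ℝ, 0 ≤ r ∧ levelPoint y l ^ p = r := by
  by_cases h : ∃ g, y.1 l g ≠ 0
  · obtain ⟨g, hg⟩ := h
    refine ⟨y.1 l g ^ p, pow_nonneg (nonneg y l g) p, ?_⟩
    rw [levelPoint_eq hg, mul_pow, ← AddChar.map_nsmul_eq_pow, nsmul_eq_mul, CharP.cast_eq_zero,
      zero_mul, AddChar.map_zero_eq_one, one_mul, Complex.ofReal_pow]
  · push Not at h
    exact ⟨0, le_rfl, by simp [levelPoint, h, NeZero.ne p]⟩

/-- Two multiples of `p`-th roots of unity cannot cancel for odd `p`, as `-1` is not a `p`-th root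
of unity. -/
theorem levelPoint_add_ne_zero (hp : Odd p) {y : ZModJoin p M} {l : Fin (M + 1)}
    (hl : levelPoint y l ≠ 0) (l' : Fin (M + 1)) : levelPoint y l + levelPoint y l' ≠ 0 := by
  intro h
  obtain ⟨r, hr, hpow⟩ := exists_levelPoint_pow_eq y l
  obtain ⟨r', hr', hpow'⟩ := exists_levelPoint_pow_eq y l'
  have hsum : -r' = r := by
    rw [eq_neg_of_add_eq_zero_left h, hp.neg_pow, hpow'] at hpow
    exact_mod_cast hpow
  obtain rfl : r = 0 := by linarith
  exact pow_ne_zero p hl (by rw [hpow, Complex.ofReal_zero])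

theorem exists_blockPoint_ne_zero [Fact p.Prime] (y : ZModJoin p M) :
    ∃ b ≤ M / eulerDegree p, blockPoint y b ≠ 0 := by
  obtain ⟨g, l, hg, -⟩ := exists_isTop y
  have hl := levelPoint_ne_zero hg
  refine ⟨l / eulerDegree p, Nat.div_le_div_right (Nat.lt_succ_iff.1 l.2), ?_⟩
  rcases eq_or_ne p 2 with rfl | hp
  · rwa [blockPoint, Finset.sum_eq_single l (fun l' hl' hne => ?_) (by simp)]
    simp only [eulerDegree_two, Nat.div_one, Finset.mem_filter, Finset.mem_univ, true_and] at hl'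
    exact absurd (Fin.ext hl') hne
  · have hodd : Odd p := (Fact.out : p.Prime).odd_of_ne_two hp
    rw [blockPoint, eulerDegree_of_ne_two hp, ← Finset.add_sum_erase _ _ (a := l) (by simp)]
    have hcard : ((Finset.univ.filter fun l' : Fin (M + 1) =>
        (l' : ℕ) / 2 = l / 2).erase l).card ≤ 1 := by
      refine Finset.card_le_one.2 fun a ha b hb => ?_
      simp only [Finset.mem_erase, Finset.mem_filter, Finset.mem_univ, true_and] at ha hb
      omega
    rcases Finset.card_le_one_iff_subset_singleton.1 hcard with ⟨l', hl'⟩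
    rcases Finset.subset_singleton_iff.1 hl' with h | h
    · rwa [h, Finset.sum_empty, add_zero]
    · rw [h, Finset.sum_singleton]
      exact levelPoint_add_ne_zero hodd hl l'

end ZModJoin

end JoinCoord

/-! ### Fourier inversion on `(ℤ/p)^B` -/

section Fourier

variable {p : ℕ} [NeZero p] {B : Type*} [Fintype B]

/-- The character of `(ℤ/p)^B` given by the dot product with `χ`. -/
def pairing (χ : B → ZMod p) : AddChar (B → ZMod p) ℂ where
  toFun g := ZMod.stdAddChar (χ ⬝ᵥ g)
  map_zero_eq_one' := by rw [dotProduct_zero, AddChar.map_zero_eq_one]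
  map_add_eq_mul' g g' := by rw [dotProduct_add, AddChar.map_add_eq_mul]

theorem pairing_apply (χ g : B → ZMod p) : pairing χ g = ZMod.stdAddChar (χ ⬝ᵥ g) := rfl

theorem pairing_comm (χ g : B → ZMod p) : pairing χ g = pairing g χ := by
  rw [pairing_apply, pairing_apply, dotProduct_comm]

theorem pairing_zero (g : B → ZMod p) : pairing 0 g = 1 := by
  rw [pairing_comm, AddChar.map_zero_eq_one]

theorem pairing_single [DecidableEq B] (χ : B → ZMod p) (b : B) :
    pairing χ (Pi.single b 1) = ZMod.stdAddChar (χ b) := by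
  rw [pairing_apply, dotProduct_single, mul_one]

theorem pairing_neg (χ g : B → ZMod p) : pairing (-χ) g = (starRingEnd ℂ) (pairing χ g) := by
  rw [pairing_apply, neg_dotProduct, AddChar.map_neg_eq_conj, pairing_apply]

variable [DecidableEq B]

theorem sum_pairing_eq_zero {v : B → ZMod p} (hv : v ≠ 0) : ∑ χ, pairing χ v = 0 := by
  simp_rw [pairing_comm _ v]
  refine AddChar.sum_eq_zero_of_ne_one fun h => hv (funext fun b => ?_)
  have hb : (ZMod.stdAddChar (v b) : ℂ) = ZMod.stdAddChar (0 : ZMod p) := by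
    rw [← pairing_single, h, AddChar.one_apply, AddChar.map_zero_eq_one]
  exact ZMod.injective_stdAddChar hb

theorem card_mul_eq_sum_of_fourier_eq_zero {φ : (B → ZMod p) → ℂ}
    (h : ∀ χ, χ ≠ 0 → ∑ g, pairing χ g * φ g = 0) (a : B → ZMod p) :
    (Nat.card (B → ZMod p) : ℂ) * φ a = ∑ g, φ g :=
  calc (Nat.card (B → ZMod p) : ℂ) * φ a
      = ∑ χ, pairing χ (a - a) * φ a := by simp
    _ = ∑ g, ∑ χ, pairing χ (g - a) * φ g := by
        refine Eq.symm (Finset.sum_eq_single a (fun g _ hg => ?_) (by simp))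
        rw [← Finset.sum_mul, sum_pairing_eq_zero (sub_ne_zero.2 hg), zero_mul]
    _ = ∑ χ, pairing χ (-a) * ∑ g, pairing χ g * φ g := by
        rw [Finset.sum_comm]
        simp only [Finset.mul_sum, sub_eq_neg_add, AddChar.map_add_eq_mul, mul_assoc]
    _ = ∑ g, φ g := by
        rw [Finset.sum_eq_single 0 (fun χ _ hχ => by rw [h χ hχ, mul_zero]) (by simp)]
        simp only [pairing_zero, one_mul]

theorem eq_of_fourier_eq_zero {φ : (B → ZMod p) → ℂ}
    (h : ∀ χ, χ ≠ 0 → ∑ g, pairing χ g * φ g = 0) (a a' : B → ZMod p) : φ a = φ a' :=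
  mul_left_cancel₀ (Nat.cast_ne_zero.2 Nat.card_pos.ne')
    ((card_mul_eq_sum_of_fourier_eq_zero h a).trans (card_mul_eq_sum_of_fourier_eq_zero h a').symm)

end Fourier

section HalfCharacters

theorem exists_finset_mem_or_neg_mem {G : Type*} [AddGroup G] [Finite G]
    (hG : ∀ g : G, g = -g → g = 0) :
    ∃ H : Finset G, 0 ∉ H ∧ 2 * H.card < Nat.card G ∧ ∀ g, g ≠ 0 → g ∈ H ∨ -g ∈ H := by
  classical
  cases nonempty_fintype G
  let o := Fintype.equivFin G
  let H : Finset G := {g | o g < o (-g)}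
  have h₀ : 0 ∉ H := by simp [H]
  have hdisj : Disjoint H (H.image Neg.neg) := Finset.disjoint_left.2 fun g hg hg' => by
    obtain ⟨g', hmem, rfl⟩ := Finset.mem_image.1 hg'
    have hlt := (Finset.mem_filter.1 hg).2
    rw [neg_neg] at hlt
    exact hlt.not_gt (Finset.mem_filter.1 hmem).2
  refine ⟨H, h₀, ?_, fun g hg => ?_⟩
  · have hcard : (H ∪ H.image Neg.neg).card = 2 * H.card := by
      rw [Finset.card_union_of_disjoint hdisj, Finset.card_image_of_injective _ neg_injective,
        two_mul]
    rw [← hcard, Nat.card_eq_fintype_card]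
    refine Finset.card_lt_univ_of_notMem (x := 0) ?_
    simp [h₀]
  · simp only [H, Finset.mem_filter, Finset.mem_univ, true_and, neg_neg]
    exact lt_or_gt_of_ne fun h => hg (hG g (o.injective h))

/-- For real-valued functions the Fourier coefficients at the characters of `H` determine the
others. -/
theorem exists_half_characters (p : ℕ) [Fact p.Prime] (B : Type*) [Finite B] :
    ∃ H : Finset (B → ZMod p), 0 ∉ H ∧ eulerDegree p * H.card < p ^ Nat.card B ∧
      ∀ χ, χ ≠ 0 → χ ∈ H ∨ -χ ∈ H := by
  classical
  cases nonempty_fintype B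
  have hcard : Nat.card (B → ZMod p) = p ^ Nat.card B := by simp
  rw [← hcard]
  rcases eq_or_ne p 2 with rfl | hp
  · refine ⟨Finset.univ.erase 0, by simp, ?_, fun χ hχ => .inl (by simp [hχ])⟩
    rw [eulerDegree_two, one_mul, Nat.card_eq_fintype_card, ← Finset.card_univ]
    exact Finset.card_erase_lt_of_mem (Finset.mem_univ 0)
  · rw [eulerDegree_of_ne_two hp]
    have : Fact (2 < p) := ⟨(Fact.out : p.Prime).two_le.lt_of_ne' hp⟩
    exact exists_finset_mem_or_neg_mem fun χ hχ => funext fun b =>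
      ZMod.neg_eq_self_iff (χ b) |>.1 (congrFun hχ b).symm |>.resolve_right fun h => by
        have := (Fact.out : p.Prime).eq_one_or_self_of_dvd 2 ⟨_, h.symm⟩
        omega

theorem exists_last_ne_zero {R : Type*} [Zero R] {ι : Type*} [LinearOrder ι] [Finite ι] {χ : ι → R}
    (h : χ ≠ 0) : ∃ i, χ i ≠ 0 ∧ ∀ i', i < i' → χ i' = 0 := by
  classical
  cases nonempty_fintype ι
  obtain ⟨j, hj⟩ := Function.ne_iff.1 h
  obtain ⟨i, hi, hmax⟩ := Finset.exists_max_image (Finset.univ.filter (χ · ≠ 0)) id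
    ⟨j, by simpa using hj⟩
  refine ⟨i, (Finset.mem_filter.1 hi).2, fun i' hlt => ?_⟩
  by_contra h'
  exact hlt.not_ge (hmax i' (by simpa using h'))

end HalfCharacters

/-! ### The system of equations -/

section EquivariantFunctions

open ZModJoin

variable {p : ℕ} [NeZero p] {I : Type*} [DecidableEq I] {M : I → ℕ}

/-- Continuous functions on a product of joins that are equivariant with character `α`, and
real-valued if `p = 2`. -/
structure IsEquivariant (α : I → ZMod p) (h : (∀ i, ZModJoin p (M i)) → ℂ) : Prop where
  continuous : Continuous h
  map_rotateAt : ∀ i x, h (rotateAt i x) = ZMod.stdAddChar (α i) * h x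
  im_eq_zero : p = 2 → ∀ x, (h x).im = 0

namespace IsEquivariant

variable {α β : I → ZMod p} {h h' : (∀ i, ZModJoin p (M i)) → ℂ}

theorem mul (hh : IsEquivariant α h) (hh' : IsEquivariant β h') :
    IsEquivariant (α + β) fun x => h x * h' x where
  continuous := hh.continuous.mul hh'.continuous
  map_rotateAt i x := by
    rw [hh.map_rotateAt, hh'.map_rotateAt, Pi.add_apply, AddChar.map_add_eq_mul]
    ring
  im_eq_zero hp x := by simp [hh.im_eq_zero hp x, hh'.im_eq_zero hp x]

theorem sum {ι : Type*} {s : Finset ι} {h : ι → (∀ i, ZModJoin p (M i)) → ℂ}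
    (hh : ∀ a ∈ s, IsEquivariant α (h a)) : IsEquivariant α fun x => ∑ a ∈ s, h a x where
  continuous := continuous_finsetSum _ fun a ha => (hh a ha).continuous
  map_rotateAt i x := by
    rw [Finset.mul_sum]
    exact Finset.sum_congr rfl fun a ha => (hh a ha).map_rotateAt i x
  im_eq_zero hp x := by
    rw [Complex.im_sum]
    exact Finset.sum_eq_zero fun a ha => (hh a ha).im_eq_zero hp x

theorem conj (hh : IsEquivariant α h) : IsEquivariant (-α) fun x => (starRingEnd ℂ) (h x) where
  continuous := Complex.continuous_conj.comp hh.continuous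
  map_rotateAt i x := by rw [hh.map_rotateAt, map_mul, Pi.neg_apply, AddChar.map_neg_eq_conj]
  im_eq_zero hp x := by simp [hh.im_eq_zero hp x]

theorem sub (hh : IsEquivariant α h) (hh' : IsEquivariant α h') :
    IsEquivariant α fun x => h x - h' x where
  continuous := hh.continuous.sub hh'.continuous
  map_rotateAt i x := by rw [hh.map_rotateAt, hh'.map_rotateAt, mul_sub]
  im_eq_zero hp x := by simp [hh.im_eq_zero hp x, hh'.im_eq_zero hp x]

theorem div (hh : IsEquivariant α h) (hh' : IsEquivariant 0 h') (hne : ∀ x, h' x ≠ 0) :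
    IsEquivariant α fun x => h x / h' x where
  continuous := hh.continuous.div hh'.continuous hne
  map_rotateAt i x := by
    rw [hh.map_rotateAt, hh'.map_rotateAt, Pi.zero_apply, AddChar.map_zero_eq_one, one_mul,
      mul_div_assoc]
  im_eq_zero hp x := by simp [Complex.div_im, hh.im_eq_zero hp x, hh'.im_eq_zero hp x]

end IsEquivariant

theorem isEquivariant_blockPoint (i : I) (b : ℕ) :
    IsEquivariant (Pi.single i 1) fun x : ∀ i, ZModJoin p (M i) => blockPoint (x i) b where
  continuous := (continuous_blockPoint b).comp (continuous_apply i)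
  map_rotateAt j x := by
    rcases eq_or_ne j i with rfl | hj
    · rw [rotateAt, modifyAt_self, blockPoint_rotate, Pi.single_eq_same]
    · rw [rotateAt, modifyAt_of_ne hj.symm, Pi.single_eq_of_ne hj, AddChar.map_zero_eq_one,
        one_mul]
  im_eq_zero hp x := by
    subst hp
    exact blockPoint_im _ _

end EquivariantFunctions

section System

variable {p k m : ℕ} {e ρ : Fin (m + 1) → ℕ}

/-- The index set of the group: one coordinate for each of `k` directions, and `e ℓ` coordinates for
the `ℓ`-th simplex. -/
abbrev ActionIndex (k : ℕ) (e : Fin (m + 1) → ℕ) := Fin k ⊕ Σ ℓ : Fin (m + 1), Fin (e ℓ)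

/-- The equations led by a direction `z j`: Hermitian orthogonality to `z i` for `i < j`, for odd
`p` also bilinear orthogonality to `z i` for `i ≤ j`, and the equality of the averages of
`z j ∘ f ℓ` for `ℓ = 0` and `ℓ ≠ 0`. -/
abbrev DirectionEq (p k m : ℕ) :=
  Σ j : Fin k, Fin (j : ℕ) ⊕ (Fin (j + 1 : ℕ) × Fin (eulerDegree p - 1)) ⊕ Fin m

/-- The equations led by a coordinate of the `ℓ`-th simplex: the vanishing of the nontrivial Fourier
coefficients of the complex functions `z i ∘ f ℓ`, and of those in `H ℓ` of `ρ ℓ + 1` real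
functions. -/
abbrev FourierEq (k : ℕ) (ρ : Fin (m + 1) → ℕ) (H : ∀ ℓ, Finset (Fin (e ℓ) → ZMod p)) :=
  Σ ℓ : Fin (m + 1), {χ : Fin (e ℓ) → ZMod p // χ ≠ 0} × Fin k ⊕ H ℓ × Fin (ρ ℓ + 1)

/-- The character `χ` of the `ℓ`-th factor as a character of the whole group. -/
def extendChar (k : ℕ) (ℓ : Fin (m + 1)) (χ : Fin (e ℓ) → ZMod p) : ActionIndex k e → ZMod p :=
  Sum.elim 0 fun s => (Pi.single ℓ χ : ∀ ℓ, Fin (e ℓ) → ZMod p) s.1 s.2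

/-- The characters of the equations led by a direction. -/
def directionChar (e : Fin (m + 1) → ℕ) : DirectionEq p k m → ActionIndex k e → ZMod p
  | ⟨j, .inl i⟩ => Pi.single (.inl j) 1 + -Pi.single (.inl ⟨i, i.2.trans j.2⟩) 1
  | ⟨j, .inr (.inl i)⟩ =>
      Pi.single (.inl j) 1 + Pi.single (.inl ⟨i.1, (Nat.lt_succ_iff.1 i.1.2).trans_lt j.2⟩) 1
  | ⟨j, .inr (.inr _)⟩ => Pi.single (.inl j) 1

variable {H : ∀ ℓ, Finset (Fin (e ℓ) → ZMod p)}

/-- The characters of the equations led by a coordinate of a simplex. -/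
def fourierChar : FourierEq k ρ H → ActionIndex k e → ZMod p
  | ⟨ℓ, .inl χ⟩ => extendChar k ℓ χ.1.1 + Pi.single (.inl χ.2) 1
  | ⟨ℓ, .inr χ⟩ => extendChar k ℓ χ.1.1

/-- The component of `fourierChar a` in its simplex factor. -/
def simplexChar : (a : FourierEq k ρ H) → Fin (e a.1) → ZMod p
  | ⟨_, .inl χ⟩ => χ.1.1
  | ⟨_, .inr χ⟩ => χ.1.1

theorem fourierChar_inr (a : FourierEq k ρ H) (s : Σ ℓ : Fin (m + 1), Fin (e ℓ)) :
    fourierChar a (.inr s) = (Pi.single a.1 (simplexChar a) : ∀ ℓ, Fin (e ℓ) → ZMod p) s.1 s.2 := by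
  rcases a with ⟨ℓ, χ | χ⟩ <;> simp [fourierChar, simplexChar, extendChar]

theorem simplexChar_ne_zero (hH : ∀ ℓ, 0 ∉ H ℓ) : ∀ a : FourierEq k ρ H, simplexChar a ≠ 0
  | ⟨_, .inl χ⟩ => χ.1.2
  | ⟨ℓ, .inr χ⟩ => fun h => hH ℓ (h ▸ χ.1.2)

/-- The rank for triangularity: directions in their given order, then the positions within the
simplex factors, which are independent of each other. -/
def actionRank : ActionIndex k e → ℕ := Sum.elim (fun i => i) fun s => k + s.2

theorem directionChar_lead_ne_zero [Fact p.Prime] (a : DirectionEq p k m) :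
    directionChar e a (.inl a.1) ≠ 0 := by
  rcases a with ⟨j, i | ⟨i, c⟩ | i⟩
  · have hj : j ≠ ⟨i, i.2.trans j.2⟩ := fun h => i.2.ne' (congrArg Fin.val h)
    simp [directionChar, hj]
  · have hp : p ≠ 2 := by
      rintro rfl
      exact c.elim0
    have htwo : (1 + 1 : ZMod p) ≠ 0 := fun h => hp <|
      (Nat.prime_dvd_prime_iff_eq Fact.out Nat.prime_two).1 <|
        (ZMod.natCast_eq_zero_iff 2 p).1 (by rw [Nat.cast_two, ← one_add_one_eq_two, h])
    simp only [directionChar, Pi.add_apply, Pi.single_apply, if_true, Sum.inl.injEq]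
    split_ifs
    · exact htwo
    · simp
  · simp [directionChar]

theorem directionChar_eq_zero (a : DirectionEq p k m) {i : ActionIndex k e} (hi : i ≠ .inl a.1)
    (hrank : actionRank (.inl a.1 : ActionIndex k e) ≤ actionRank i) : directionChar e a i = 0 := by
  have hne : ∀ {b : Fin k}, b ≤ a.1 → i ≠ .inl b := by
    rintro b hb rfl
    exact hi (congrArg _ (le_antisymm hb hrank))
  rcases a with ⟨j, b | ⟨b, c⟩ | b⟩
  · have hb : i ≠ .inl ⟨b, b.2.trans j.2⟩ := hne b.2.le
    simp [directionChar, hi, hb]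
  · have hb : i ≠ .inl ⟨b, (Nat.lt_succ_iff.1 b.2).trans_lt j.2⟩ := hne (Nat.lt_succ_iff.1 b.2)
    simp [directionChar, hi, hb]
  · simp [directionChar, hi]

/-- The leading coordinate of the character of an equation, where `top a` is the last coordinate in
which the character `simplexChar a` is nontrivial. -/
def leadIndex (top : ∀ a : FourierEq k ρ H, Fin (e a.1)) :
    DirectionEq p k m ⊕ FourierEq k ρ H → ActionIndex k e :=
  Sum.elim (fun a => .inl a.1) fun a => .inr ⟨a.1, top a⟩

theorem card_leadIndex_eq_inl_le [NeZero p] (top : ∀ a : FourierEq k ρ H, Fin (e a.1))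
    (i : Fin k) : (Finset.univ.filter fun a => leadIndex top a = .inl i).card ≤
      i + ((i + 1) * (eulerDegree p - 1) + m) := by
  have hsurj := Finset.card_le_card_of_surjOn
    (s := (Finset.univ : Finset (Fin (i : ℕ) ⊕
      (Fin (i + 1 : ℕ) × Fin (eulerDegree p - 1)) ⊕ Fin m)))
    (t := Finset.univ.filter fun a => leadIndex top a = .inl i) (fun b => .inl ⟨i, b⟩) <| by
      rintro (⟨j, b⟩ | a) ha
      · obtain rfl : j = i := Sum.inl.inj (Finset.mem_filter.1 ha).2
        exact ⟨b, by simp⟩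
      · exact absurd (Finset.mem_filter.1 ha).2 Sum.inr_ne_inl
  simpa [Fintype.card_sum] using hsurj

theorem sum_card_leadIndex_eq_inr_le [NeZero p] (top : ∀ a : FourierEq k ρ H, Fin (e a.1))
    (ℓ : Fin (m + 1)) :
    ∑ ι, (Finset.univ.filter fun a => leadIndex top a = .inr ⟨ℓ, ι⟩).card ≤
      (p ^ e ℓ - 1) * k + (H ℓ).card * (ρ ℓ + 1) := by
  have hcard : Fintype.card {χ : Fin (e ℓ) → ZMod p // χ ≠ 0} = p ^ e ℓ - 1 := by
    rw [Fintype.card_subtype_compl]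
    simp
  calc ∑ ι, (Finset.univ.filter fun a => leadIndex top a = .inr ⟨ℓ, ι⟩).card
      ≤ ∑ ι, (Finset.univ.filter fun b => top ⟨ℓ, b⟩ = ι).card :=
        Finset.sum_le_sum fun ι _ =>
          Finset.card_le_card_of_surjOn (fun b => .inr ⟨ℓ, b⟩) <| by
            rintro (a | ⟨ℓ', b⟩) ha
            · exact absurd (Finset.mem_filter.1 ha).2 Sum.inl_ne_inr
            · have h : (⟨ℓ', top ⟨ℓ', b⟩⟩ : Σ ℓ, Fin (e ℓ)) = ⟨ℓ, ι⟩ :=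
                Sum.inr.inj (Finset.mem_filter.1 ha).2
              obtain rfl : ℓ' = ℓ := congrArg Sigma.fst h
              exact ⟨b, Finset.mem_filter.2 ⟨Finset.mem_univ _, eq_of_heq (Sigma.mk.inj h).2⟩, rfl⟩
    _ = (Finset.univ : Finset ({χ : Fin (e ℓ) → ZMod p // χ ≠ 0} × Fin k ⊕
          H ℓ × Fin (ρ ℓ + 1))).card :=
        (Finset.card_eq_sum_card_fiberwise fun _ _ => Finset.mem_coe.2 (Finset.mem_univ _)).symm
    _ = (p ^ e ℓ - 1) * k + (H ℓ).card * (ρ ℓ + 1) := by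
        rw [Finset.card_univ, Fintype.card_sum, Fintype.card_prod, Fintype.card_prod, hcard,
          Fintype.card_fin, Fintype.card_fin, Fintype.card_coe]

theorem leadIndex_ne_zero [Fact p.Prime] {top : ∀ a : FourierEq k ρ H, Fin (e a.1)}
    (htop : ∀ a, simplexChar a (top a) ≠ 0) (a : DirectionEq p k m ⊕ FourierEq k ρ H) :
    Sum.elim (directionChar e) fourierChar a (leadIndex top a) ≠ 0 := by
  rcases a with a | a
  · exact directionChar_lead_ne_zero a
  · simpa [leadIndex, fourierChar_inr] using htop a

theorem eq_zero_of_leadIndex_rank_le {top : ∀ a : FourierEq k ρ H, Fin (e a.1)}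
    (htop : ∀ a ι, top a < ι → simplexChar a ι = 0) (a : DirectionEq p k m ⊕ FourierEq k ρ H)
    (i : ActionIndex k e) (hi : i ≠ leadIndex top a)
    (hrank : actionRank (leadIndex top a) ≤ actionRank i) :
    Sum.elim (directionChar e) fourierChar a i = 0 := by
  rcases a with a | a
  · exact directionChar_eq_zero a hi hrank
  rcases i with i | ⟨ℓ, ι⟩
  · have h : k + (top a : ℕ) ≤ i := hrank
    omega
  · rw [Sum.elim_inr, fourierChar_inr]
    rcases eq_or_ne ℓ a.1 with rfl | hℓ
    · have hle : k + (top a : ℕ) ≤ k + ι := hrank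
      have hne : top a ≠ ι := fun h => hi (by rw [← h]; rfl)
      rw [Pi.single_eq_same, htop a ι (lt_of_le_of_ne (Nat.le_of_add_le_add_left hle) hne)]
    · rw [Pi.single_eq_of_ne hℓ, Pi.zero_apply]

/-- The joins of the directions map to `ℂ^d` (`ℝ^d` if `p = 2`), and the dimensions of those of the
`ℓ`-th factor add up to at most `N ℓ`, so that their product maps to configurations in `Δ_{N ℓ}`. -/
theorem exists_common_zero_of_system [Fact p.Prime] {d : ℕ} {N : Fin (m + 1) → ℕ}
    (hH : ∀ ℓ, 0 ∉ H ℓ)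
    (hcard : ∀ ℓ, eulerDegree p * (H ℓ).card < p ^ e ℓ) (hd : m + eulerDegree p * k ≤ d)
    (hN : ∀ ℓ, (p ^ e ℓ - 1) * (eulerDegree p * k + ρ ℓ + 1) ≤ N ℓ) :
    ∃ M : ActionIndex k e → ℕ, (∀ i : Fin k, M (.inl i) / eulerDegree p < d) ∧
      (∀ ℓ, ∑ ι, M (.inr ⟨ℓ, ι⟩) ≤ N ℓ) ∧
      ∀ (h : DirectionEq p k m → (∀ i, ZModJoin p (M i)) → ℂ)
        (h' : FourierEq k ρ H → (∀ i, ZModJoin p (M i)) → ℂ),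
        (∀ a, IsEquivariant (directionChar e a) (h a)) →
        (∀ a, IsEquivariant (fourierChar a) (h' a)) →
        ∃ x, (∀ a, h a x = 0) ∧ ∀ a, h' a x = 0 := by
  choose top htop htop' using fun a : FourierEq k ρ H =>
    exists_last_ne_zero (simplexChar_ne_zero hH a)
  obtain ⟨q, hq⟩ := exists_eulerDegree_eq_succ p
  refine ⟨fun i => eulerDegree p * (Finset.univ.filter fun a => leadIndex top a = i).card,
    fun i => ?_, fun ℓ => ?_, fun h h' hh hh' => ?_⟩
  · rw [Nat.mul_div_cancel_left _ (by omega)]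
    have hle := card_leadIndex_eq_inl_le top i
    have hi : (i + 1 : ℕ) * eulerDegree p ≤ k * eulerDegree p := Nat.mul_le_mul_right _ i.2
    refine hle.trans_lt ?_
    rw [hq] at hi hd ⊢
    rw [Nat.add_sub_cancel]
    nlinarith
  · have hle := Nat.mul_le_mul_left (eulerDegree p) (sum_card_leadIndex_eq_inr_le top ℓ)
    have hH' := Nat.mul_le_mul_right (ρ ℓ + 1) (Nat.le_sub_one_of_lt (hcard ℓ))
    rw [← Finset.mul_sum]
    refine hle.trans (le_trans ?_ (hN ℓ))
    nlinarith
  · have heq : ∀ a, IsEquivariant (Sum.elim (directionChar e) fourierChar a) (Sum.elim h h' a) :=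
      Sum.rec hh hh'
    obtain ⟨x, hx⟩ := exists_common_zero_of_equivariant _ actionRank
      (Sum.elim (directionChar e) fourierChar) (leadIndex top) (leadIndex_ne_zero htop)
      (eq_zero_of_leadIndex_rank_le htop') (fun i => le_rfl) (Sum.elim h h')
      (fun a => (heq a).continuous) (fun a => (heq a).map_rotateAt)
      fun hp a => (heq a).im_eq_zero hp
    exact ⟨x, fun a => hx (.inl a), fun a => hx (.inr a)⟩

end System

/-! ### Configurations with constant values -/

section FourierCoefficients

variable {p : ℕ} [NeZero p] {B : Type*} [Fintype B] [DecidableEq B] {N : ℕ}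

theorem homogenize_one (y : Fin (N + 1) → ℝ) : homogenize (fun _ => 1) y = ∑ s, y s := mul_one _

/-- The Fourier coefficient at `χ` of the homogenized values of `F` on a family of weights. -/
def fourierCoeff (χ : B → ZMod p) (F : EuclideanSpace ℝ (Fin (N + 1)) → ℝ)
    (y : (B → ZMod p) → Fin (N + 1) → ℝ) : ℂ :=
  ∑ g, pairing χ g * (homogenize F (y g) : ℂ)

/-- The average of `F` over the normalizations of a family of weights, each counted according to its
mass. It is meaningful only when the total mass is nonzero. -/
def average (F : EuclideanSpace ℝ (Fin (N + 1)) → ℝ) (y : (B → ZMod p) → Fin (N + 1) → ℝ) : ℂ :=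
  fourierCoeff 0 F y / fourierCoeff 0 (fun _ => 1) y

variable {y : (B → ZMod p) → Fin (N + 1) → ℝ}

theorem fourierCoeff_neg (χ : B → ZMod p) (F : EuclideanSpace ℝ (Fin (N + 1)) → ℝ) :
    fourierCoeff (-χ) F y = (starRingEnd ℂ) (fourierCoeff χ F y) := by
  simp [fourierCoeff, pairing_neg]

theorem fourierCoeff_zero_one :
    fourierCoeff 0 (fun _ => 1) y = ((∑ g, ∑ s, y g s : ℝ) : ℂ) := by
  simp [fourierCoeff, homogenize_one, pairing_zero]

theorem sum_fourierCoeff_mul {β : Type*} [Fintype β] (χ : B → ZMod p) (z : β → ℂ)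
    (F : β → EuclideanSpace ℝ (Fin (N + 1)) → ℝ) :
    ∑ b, fourierCoeff χ (F b) y * z b =
      ∑ g, pairing χ g * ((∑ s, y g s : ℝ) * ∑ b, z b * (F b (normalize (y g)) : ℂ)) := by
  simp only [fourierCoeff, Finset.sum_mul, Finset.mul_sum (Finset.univ : Finset β)]
  rw [Finset.sum_comm]
  refine Finset.sum_congr rfl fun g _ => Finset.sum_congr rfl fun b _ => ?_
  rw [homogenize, Complex.ofReal_mul]
  ring

theorem homogenize_eq_of_fourierCoeff_eq_zero {H : Finset (B → ZMod p)}
    (hH : ∀ χ, χ ≠ 0 → χ ∈ H ∨ -χ ∈ H) {F : EuclideanSpace ℝ (Fin (N + 1)) → ℝ}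
    (h : ∀ χ ∈ H, fourierCoeff χ F y = 0) (g g' : B → ZMod p) :
    homogenize F (y g) = homogenize F (y g') := by
  refine Complex.ofReal_injective (eq_of_fourier_eq_zero
    (φ := fun g => (homogenize F (y g) : ℂ)) (fun χ hχ => ?_) g g')
  change fourierCoeff χ F y = 0
  rcases hH χ hχ with hmem | hmem
  · exact h χ hmem
  · rw [← neg_neg χ, fourierCoeff_neg, h _ hmem, map_zero]

theorem sum_mul_average_eq {β : Type*} [Fintype β] {z : β → ℂ}
    {F : β → EuclideanSpace ℝ (Fin (N + 1)) → ℝ} {t : ℝ} (ht : t ≠ 0) (hy : ∀ g, ∑ s, y g s = t)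
    (h : ∀ χ, χ ≠ 0 → ∑ b, fourierCoeff χ (F b) y * z b = 0) (g : B → ZMod p) :
    ∑ b, z b * average (F b) y = ∑ b, z b * (F b (normalize (y g)) : ℂ) := by
  have hcard : (Nat.card (B → ZMod p) : ℂ) ≠ 0 := Nat.cast_ne_zero.2 Nat.card_pos.ne'
  have ht' : (t : ℂ) ≠ 0 := Complex.ofReal_ne_zero.2 ht
  have hmass : fourierCoeff 0 (fun _ => 1) y = (Nat.card (B → ZMod p) : ℂ) * t := by
    simp [fourierCoeff_zero_one, hy]
  simp only [sum_fourierCoeff_mul, hy] at h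
  have hsum := card_mul_eq_sum_of_fourier_eq_zero h g
  calc ∑ b, z b * average (F b) y
      = (∑ b, fourierCoeff 0 (F b) y * z b) / fourierCoeff 0 (fun _ => 1) y := by
        rw [Finset.sum_div]
        exact Finset.sum_congr rfl fun b _ => by rw [average, mul_div_assoc', mul_comm]
    _ = ∑ b, z b * (F b (normalize (y g)) : ℂ) := by
        simp only [sum_fourierCoeff_mul, hy, pairing_zero, one_mul, ← hsum, hmass]
        field_simp

end FourierCoefficients

section EquivariantConfigurations

variable {p k m : ℕ} [NeZero p] {e : Fin (m + 1) → ℕ} {M : ActionIndex k e → ℕ}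

/-- The staircase configuration in the `ℓ`-th simplex of a point of the product of joins. -/
def configuration (N : ℕ) (ℓ : Fin (m + 1)) (x : ∀ i, ZModJoin p (M i)) :
    (Fin (e ℓ) → ZMod p) → Fin (N + 1) → ℝ :=
  staircase N fun ι => x (.inr ⟨ℓ, ι⟩)

theorem configuration_rotateAt_inr (N : ℕ) (ℓ : Fin (m + 1)) (ι : Fin (e ℓ))
    (x : ∀ i, ZModJoin p (M i)) (g : Fin (e ℓ) → ZMod p) :
    configuration N ℓ (rotateAt (.inr ⟨ℓ, ι⟩) x) g =
      configuration N ℓ x (g - Pi.single ι 1) := by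
  rw [configuration, configuration, ← staircase_rotateAt]
  congr 1
  funext ι'
  rcases eq_or_ne ι' ι with rfl | h
  · simp only [rotateAt, modifyAt_self]
  · have h' : (.inr ⟨ℓ, ι'⟩ : ActionIndex k e) ≠ .inr ⟨ℓ, ι⟩ := by simpa using h
    simp only [rotateAt, modifyAt_of_ne h, modifyAt_of_ne h']

theorem configuration_rotateAt_of_ne (N : ℕ) {ℓ : Fin (m + 1)} {i : ActionIndex k e}
    (hi : ∀ ι, i ≠ .inr ⟨ℓ, ι⟩) (x : ∀ i, ZModJoin p (M i)) :
    configuration N ℓ (rotateAt i x) = configuration N ℓ x := by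
  simp only [configuration, rotateAt, modifyAt_of_ne (hi _).symm]

theorem continuous_configuration (N : ℕ) (ℓ : Fin (m + 1)) (g : Fin (e ℓ) → ZMod p) :
    Continuous fun x : ∀ i, ZModJoin p (M i) => configuration N ℓ x g :=
  (continuous_staircase N g).comp (continuous_pi fun _ => continuous_apply _)

theorem isEquivariant_fourierCoeff {N : ℕ} (ℓ : Fin (m + 1)) (χ : Fin (e ℓ) → ZMod p)
    {F : EuclideanSpace ℝ (Fin (N + 1)) → ℝ} (hF : ContinuousOn F (stdSimp N)) :
    IsEquivariant (extendChar k ℓ χ) fun x : ∀ i, ZModJoin p (M i) =>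
      fourierCoeff χ F (configuration N ℓ x) where
  continuous := continuous_finsetSum _ fun g _ => continuous_const.mul <|
    Complex.continuous_ofReal.comp <| (continuousOn_homogenize hF).comp_continuous
      (continuous_configuration N ℓ g) fun _ => staircase_nonneg _ _ g
  map_rotateAt i x := by
    by_cases h : ∃ ι, i = .inr ⟨ℓ, ι⟩
    · obtain ⟨ι, rfl⟩ := h
      have hχ : extendChar k ℓ χ (.inr ⟨ℓ, ι⟩) = χ ι := by simp [extendChar]
      rw [hχ, fourierCoeff, fourierCoeff,
        ← Equiv.sum_comp (Equiv.addRight (Pi.single ι 1 : Fin (e ℓ) → ZMod p)), Finset.mul_sum]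
      refine Finset.sum_congr rfl fun g _ => ?_
      rw [Equiv.coe_addRight, configuration_rotateAt_inr, add_sub_cancel_right,
        AddChar.map_add_eq_mul, pairing_single]
      ring
    · push Not at h
      have hχ : extendChar k ℓ χ i = 0 := by
        rcases i with i | ⟨ℓ', ι⟩
        · rfl
        · have hℓ : ℓ' ≠ ℓ := by
            rintro rfl
            exact h ι rfl
          simp [extendChar, hℓ]
      rw [hχ, AddChar.map_zero_eq_one, one_mul, configuration_rotateAt_of_ne N h]
  im_eq_zero hp x := by
    subst hp
    simp [fourierCoeff, Complex.im_sum, pairing_apply, stdAddChar_im]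

theorem sum_configuration_pos {N : ℕ} {ℓ : Fin (m + 1)} (hN : ∑ ι, M (.inr ⟨ℓ, ι⟩) ≤ N)
    (x : ∀ i, ZModJoin p (M i)) : 0 < ∑ g, ∑ s, configuration N ℓ x g s := by
  obtain ⟨g, s, h⟩ := exists_staircase_pos hN fun ι => x (.inr ⟨ℓ, ι⟩)
  exact Finset.sum_pos' (fun g _ => Finset.sum_nonneg fun s _ => staircase_nonneg _ _ g s)
    ⟨g, Finset.mem_univ _, Finset.sum_pos' (fun s _ => staircase_nonneg _ _ g s)
      ⟨s, Finset.mem_univ _, h⟩⟩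

theorem isEquivariant_average {N : ℕ} {ℓ : Fin (m + 1)} (hN : ∑ ι, M (.inr ⟨ℓ, ι⟩) ≤ N)
    {F : EuclideanSpace ℝ (Fin (N + 1)) → ℝ} (hF : ContinuousOn F (stdSimp N)) :
    IsEquivariant 0 fun x : ∀ i, ZModJoin p (M i) => average F (configuration N ℓ x) := by
  have h₀ : extendChar (p := p) k ℓ (0 : Fin (e ℓ) → ZMod p) = 0 := by
    funext i
    rcases i with i | i <;> simp [extendChar]
  have hnum := isEquivariant_fourierCoeff (p := p) (M := M) ℓ 0 hF
  have hden := isEquivariant_fourierCoeff (p := p) (M := M) (N := N) ℓ 0 (F := fun _ => 1)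
    continuousOn_const
  rw [h₀] at hnum hden
  refine hnum.div hden fun x => ?_
  rw [fourierCoeff_zero_one]
  exact Complex.ofReal_ne_zero.2 (sum_configuration_pos hN x).ne'

end EquivariantConfigurations

section Directions

variable {κ β : Type*} [Fintype β] {p : ℕ}

/-- Orthogonal nonzero complex vectors that are real for `p = 2`, and isotropic and bilinearly
orthogonal for odd `p`. In the latter case their real and imaginary parts are mutually orthogonal,
so that in both cases they contain `eulerDegree p` nonzero real vectors each. -/
structure IsDirectionSystem (p : ℕ) (z : κ → β → ℂ) : Prop where
  ne_zero : ∀ i, z i ≠ 0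
  im_eq_zero : p = 2 → ∀ i b, (z i b).im = 0
  sum_mul_conj : ∀ i j, i ≠ j → ∑ b, z i b * (starRingEnd ℂ) (z j b) = 0
  sum_mul : p ≠ 2 → ∀ i j, ∑ b, z i b * z j b = 0

theorem IsDirectionSystem.of_lt [LinearOrder κ] {z : κ → β → ℂ} (hne : ∀ i, z i ≠ 0)
    (him : p = 2 → ∀ i b, (z i b).im = 0)
    (horth : ∀ i j, j < i → ∑ b, z i b * (starRingEnd ℂ) (z j b) = 0)
    (hiso : p ≠ 2 → ∀ i j, j ≤ i → ∑ b, z i b * z j b = 0) : IsDirectionSystem p z where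
  ne_zero := hne
  im_eq_zero := him
  sum_mul_conj i j hij := by
    rcases lt_or_gt_of_ne hij with h | h
    · have hconj := congrArg (starRingEnd ℂ) (horth j i h)
      simpa only [map_sum, map_mul, Complex.conj_conj, map_zero, mul_comm] using hconj
    · exact horth i j h
  sum_mul hp i j := by
    rcases le_total i j with h | h
    · simpa only [mul_comm] using hiso hp j i h
    · exact hiso hp i j h

/-- A family of points of the simplex with pairwise disjoint supports. -/
structure IsDisjointConfiguration {G : Type*} {N : ℕ} (X : G → EuclideanSpace ℝ (Fin (N + 1))) :
    Prop where
  mem_stdSimp : ∀ g, X g ∈ stdSimp N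
  eq_of_ne_zero : ∀ g g' s, X g s ≠ 0 → X g' s ≠ 0 → g = g'

end Directions

section Equations

open ZModJoin

variable {p k m d : ℕ} [NeZero p] {e N ρ : Fin (m + 1) → ℕ} {M : ActionIndex k e → ℕ}

/-- The functions of the equations led by a direction, where the functions `f ℓ b` are the
components of the `ℓ`-th map. -/
def directionFun (f : ∀ ℓ, Fin d → EuclideanSpace ℝ (Fin (N ℓ + 1)) → ℝ) :
    DirectionEq p k m → (∀ i, ZModJoin p (M i)) → ℂ
  | ⟨j, .inl i⟩, x => ∑ b : Fin d, blockPoint (x (.inl j)) b *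
      (starRingEnd ℂ) (blockPoint (x (.inl ⟨i, i.2.trans j.2⟩)) b)
  | ⟨j, .inr (.inl i)⟩, x => ∑ b : Fin d, blockPoint (x (.inl j)) b *
      blockPoint (x (.inl ⟨i.1, (Nat.lt_succ_iff.1 i.1.2).trans_lt j.2⟩)) b
  | ⟨j, .inr (.inr l)⟩, x => ∑ b : Fin d, blockPoint (x (.inl j)) b *
      (average (f 0 b) (configuration (N 0) 0 x) -
        average (f l.succ b) (configuration (N l.succ) l.succ x))

variable {H : ∀ ℓ, Finset (Fin (e ℓ) → ZMod p)}

/-- The functions of the equations led by a coordinate of a simplex. -/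
def fourierFun (f : ∀ ℓ, Fin d → EuclideanSpace ℝ (Fin (N ℓ + 1)) → ℝ)
    (F : ∀ ℓ, Fin (ρ ℓ + 1) → EuclideanSpace ℝ (Fin (N ℓ + 1)) → ℝ) :
    FourierEq k ρ H → (∀ i, ZModJoin p (M i)) → ℂ
  | ⟨ℓ, .inl (χ, i)⟩, x => ∑ b, fourierCoeff χ.1 (f ℓ b) (configuration (N ℓ) ℓ x) *
      blockPoint (x (.inl i)) b
  | ⟨ℓ, .inr (χ, u)⟩, x => fourierCoeff χ.1 (F ℓ u) (configuration (N ℓ) ℓ x)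

variable {f : ∀ ℓ, Fin d → EuclideanSpace ℝ (Fin (N ℓ + 1)) → ℝ}
  {F : ∀ ℓ, Fin (ρ ℓ) → EuclideanSpace ℝ (Fin (N ℓ + 1)) → ℝ}

theorem isEquivariant_directionFun (hM : ∀ ℓ, ∑ ι, M (.inr ⟨ℓ, ι⟩) ≤ N ℓ)
    (hf : ∀ ℓ b, ContinuousOn (f ℓ b) (stdSimp (N ℓ))) (a : DirectionEq p k m) :
    IsEquivariant (directionChar e a) (directionFun (M := M) f a) := by
  rcases a with ⟨j, i | i | l⟩
  · exact .sum fun b _ => (isEquivariant_blockPoint _ _).mul (isEquivariant_blockPoint _ _).conj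
  · exact .sum fun b _ => (isEquivariant_blockPoint _ _).mul (isEquivariant_blockPoint _ _)
  · refine .sum fun b _ => ?_
    simpa only [directionChar, add_zero] using
      (isEquivariant_blockPoint (p := p) (M := M) (.inl j) b).mul
        ((isEquivariant_average (hM 0) (hf 0 b)).sub (isEquivariant_average (hM _) (hf _ b)))

theorem isEquivariant_fourierFun {F : ∀ ℓ, Fin (ρ ℓ + 1) → EuclideanSpace ℝ (Fin (N ℓ + 1)) → ℝ}
    (hf : ∀ ℓ b, ContinuousOn (f ℓ b) (stdSimp (N ℓ)))
    (hF : ∀ ℓ u, ContinuousOn (F ℓ u) (stdSimp (N ℓ))) (a : FourierEq k ρ H) :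
    IsEquivariant (fourierChar a) (fourierFun (M := M) f F a) := by
  rcases a with ⟨ℓ, ⟨χ, i⟩ | ⟨χ, u⟩⟩
  · exact .sum fun b _ => (isEquivariant_fourierCoeff ℓ _ (hf ℓ b)).mul
      (isEquivariant_blockPoint _ _)
  · exact isEquivariant_fourierCoeff ℓ _ (hF ℓ u)

variable {x : ∀ i, ZModJoin p (M i)}

theorem isDirectionSystem_of_directionFun_eq_zero [Fact p.Prime]
    (hM : ∀ i : Fin k, M (.inl i) / eulerDegree p < d) (hx : ∀ a, directionFun f a x = 0) :
    IsDirectionSystem p fun (i : Fin k) (b : Fin d) => blockPoint (x (.inl i)) b := by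
  refine .of_lt (fun i h₀ => ?_) (fun hp i b => ?_) (fun i j hij => hx ⟨i, .inl ⟨j, hij⟩⟩)
    fun hp i j hij => ?_
  · obtain ⟨b, hb, hne⟩ := exists_blockPoint_ne_zero (x (.inl i))
    exact hne (congrFun h₀ ⟨b, hb.trans_lt (hM i)⟩)
  · subst hp
    exact blockPoint_im _ _
  · have hpos : 0 < eulerDegree p - 1 := by simp [eulerDegree_of_ne_two hp]
    exact hx ⟨i, .inr (.inl (⟨j, Nat.lt_succ_of_le hij⟩, ⟨0, hpos⟩))⟩

theorem isDisjointConfiguration_configuration {ℓ : Fin (m + 1)} {t : ℝ} (ht : t ≠ 0)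
    (hmass : ∀ g, ∑ s, configuration (N ℓ) ℓ x g s = t) :
    IsDisjointConfiguration fun g => normalize (configuration (N ℓ) ℓ x g) where
  mem_stdSimp g := normalize_mem_stdSimp (staircase_nonneg _ _ g) (hmass g ▸ ht)
  eq_of_ne_zero _ _ s h h' :=
    eq_of_staircase_ne_zero (N := N ℓ) (x := fun ι => x (.inr ⟨ℓ, ι⟩)) (s := s)
      (left_ne_zero_of_mul h) (left_ne_zero_of_mul h')

theorem exists_mass_of_fourierCoeff_eq_zero {ℓ : Fin (m + 1)} {N : ℕ}
    (hM : ∑ ι, M (.inr ⟨ℓ, ι⟩) ≤ N) {H : Finset (Fin (e ℓ) → ZMod p)}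
    (hH : ∀ χ, χ ≠ 0 → χ ∈ H ∨ -χ ∈ H)
    (h : ∀ χ ∈ H, fourierCoeff χ (fun _ => 1) (configuration N ℓ x) = 0) :
    ∃ t ≠ 0, ∀ g, ∑ s, configuration N ℓ x g s = t := by
  have hconst : ∀ g, ∑ s, configuration N ℓ x g s = ∑ s, configuration N ℓ x 0 s := fun g => by
    simpa only [homogenize_one] using homogenize_eq_of_fourierCoeff_eq_zero hH h g 0
  refine ⟨_, fun h₀ => (sum_configuration_pos hM x).ne' ?_, hconst⟩
  simp only [hconst, h₀, Finset.sum_const_zero]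

theorem sum_blockPoint_mul_average_eq (hx : ∀ a, directionFun f a x = 0) (i : Fin k)
    (ℓ : Fin (m + 1)) :
    ∑ b : Fin d, blockPoint (x (.inl i)) b * average (f ℓ b) (configuration (N ℓ) ℓ x) =
      ∑ b : Fin d, blockPoint (x (.inl i)) b * average (f 0 b) (configuration (N 0) 0 x) := by
  refine Fin.cases rfl (fun l => ?_) ℓ
  have h := hx ⟨i, .inr (.inr l)⟩
  simp only [directionFun, mul_sub, Finset.sum_sub_distrib] at h
  exact (sub_eq_zero.1 h).symm

/-- Besides the given functions `F ℓ u`, the system involves the constant function `1`, which makes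
all members of a configuration have the same mass before normalization. -/
theorem exists_configurations_of_constant_values (p : ℕ) [Fact p.Prime]
    (hd : m + eulerDegree p * k ≤ d)
    (hN : ∀ ℓ, (p ^ e ℓ - 1) * (eulerDegree p * k + ρ ℓ + 1) ≤ N ℓ)
    (hf : ∀ ℓ b, ContinuousOn (f ℓ b) (stdSimp (N ℓ)))
    (hF : ∀ ℓ u, ContinuousOn (F ℓ u) (stdSimp (N ℓ))) :
    ∃ (z : Fin k → Fin d → ℂ) (X : ∀ ℓ, (Fin (e ℓ) → ZMod p) → EuclideanSpace ℝ (Fin (N ℓ + 1))),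
      IsDirectionSystem p z ∧ (∀ ℓ, IsDisjointConfiguration (X ℓ)) ∧
      (∀ ℓ u g g', F ℓ u (X ℓ g) = F ℓ u (X ℓ g')) ∧
      ∀ i ℓ ℓ' g g', ∑ b, z i b * (f ℓ b (X ℓ g) : ℂ) = ∑ b, z i b * (f ℓ' b (X ℓ' g') : ℂ) := by
  choose H hH₀ hHcard hH using fun ℓ => exists_half_characters p (Fin (e ℓ))
  simp only [Nat.card_fin] at hHcard
  obtain ⟨M, hMd, hMN, hsys⟩ := exists_common_zero_of_system hH₀ hHcard hd hN
  let F' : ∀ ℓ, Fin (ρ ℓ + 1) → EuclideanSpace ℝ (Fin (N ℓ + 1)) → ℝ :=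
    fun ℓ => Fin.cons (fun _ => 1) (F ℓ)
  have hF' : ∀ ℓ u, ContinuousOn (F' ℓ u) (stdSimp (N ℓ)) := fun ℓ =>
    Fin.cases continuousOn_const (hF ℓ)
  obtain ⟨x, hdir, hfour⟩ := hsys (directionFun f) (fourierFun f F')
    (isEquivariant_directionFun hMN hf) (isEquivariant_fourierFun hf hF')
  choose t ht hmass using fun ℓ => exists_mass_of_fourierCoeff_eq_zero (hMN ℓ) (hH ℓ)
    fun χ hχ => hfour ⟨ℓ, .inr (⟨χ, hχ⟩, 0)⟩
  have hvalue : ∀ i ℓ g, ∑ b : Fin d, blockPoint (x (.inl i)) b *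
      (f ℓ b (normalize (configuration (N ℓ) ℓ x g)) : ℂ) =
        ∑ b : Fin d, blockPoint (x (.inl i)) b * average (f 0 b) (configuration (N 0) 0 x) := by
    intro i ℓ g
    rw [← sum_blockPoint_mul_average_eq hdir i ℓ]
    exact Eq.symm (sum_mul_average_eq (ht ℓ) (hmass ℓ)
      (fun χ hχ => hfour ⟨ℓ, .inl (⟨χ, hχ⟩, i)⟩) g)
  refine ⟨fun i b => blockPoint (x (.inl i)) b, fun ℓ g => normalize (configuration (N ℓ) ℓ x g),
    isDirectionSystem_of_directionFun_eq_zero hMd hdir,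
    fun ℓ => isDisjointConfiguration_configuration (ht ℓ) (hmass ℓ), fun ℓ u g g' => ?_,
    fun i ℓ ℓ' g g' => by rw [hvalue, hvalue]⟩
  have h := homogenize_eq_of_fourierCoeff_eq_zero (hH ℓ)
    (fun χ hχ => hfour ⟨ℓ, .inr (⟨χ, hχ⟩, u.succ)⟩) g g'
  rw [homogenize, homogenize, hmass, hmass] at h
  exact mul_left_cancel₀ (ht ℓ) h

end Equations

/-! ### Constraint functions -/

section Constraints

variable {N : ℕ} {x : EuclideanSpace ℝ (Fin (N + 1))}

/-- The vertex set of the smallest face containing a point. -/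
def vertexSupport (x : EuclideanSpace ℝ (Fin (N + 1))) : Finset (Fin (N + 1)) := {s | x s ≠ 0}

open Classical in
/-- The sum of the monomials of the nonempty non-faces of `K`. It plays the role of the distance to
`K`: on the simplex it is continuous, nonnegative, and vanishes exactly on the faces in `K`. -/
def nonFaceSum (K : Set (Finset (Fin (N + 1)))) (x : EuclideanSpace ℝ (Fin (N + 1))) : ℝ :=
  ∑ T : Finset (Fin (N + 1)) with T.Nonempty ∧ T ∉ K, ∏ i ∈ T, x i

theorem mem_vertexSupport {s : Fin (N + 1)} : s ∈ vertexSupport x ↔ x s ≠ 0 := by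
  simp [vertexSupport]

theorem continuous_nonFaceSum (K : Set (Finset (Fin (N + 1)))) : Continuous (nonFaceSum K) :=
  continuous_finsetSum _ fun _ _ => continuous_finsetProd _ fun _ _ => by fun_prop

theorem vertexSupport_nonempty (hx : x ∈ stdSimp N) : (vertexSupport x).Nonempty := by
  obtain ⟨s, -, hs⟩ := Finset.exists_ne_zero_of_sum_ne_zero (hx.2 ▸ one_ne_zero)
  exact ⟨s, mem_vertexSupport.2 hs⟩

theorem mem_simpFace_vertexSupport (hx : x ∈ stdSimp N) : x ∈ simpFace N (vertexSupport x) :=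
  ⟨hx, fun _ => mem_vertexSupport.2⟩

theorem nonFaceSum_eq_zero_iff {K : Set (Finset (Fin (N + 1)))} (hK : IsSubcomplex N K)
    (hx : x ∈ stdSimp N) : nonFaceSum K x = 0 ↔ vertexSupport x ∈ K := by
  rw [nonFaceSum, Finset.sum_eq_zero_iff_of_nonneg fun T _ => Finset.prod_nonneg fun i _ => hx.1 i]
  simp only [Finset.mem_filter, Finset.mem_univ, true_and, and_imp, Finset.prod_eq_zero_iff]
  refine ⟨fun h => ?_, fun h T hT hTK => ?_⟩
  · by_contra hnot
    obtain ⟨i, hi, hi₀⟩ := h _ (vertexSupport_nonempty hx) hnot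
    exact mem_vertexSupport.1 hi hi₀
  · by_contra! hne
    exact hTK (hK.2 _ h T (fun i hi => mem_vertexSupport.2 (hne i hi)) hT)

theorem IsDisjointConfiguration.disjoint_vertexSupport {G : Type*}
    {X : G → EuclideanSpace ℝ (Fin (N + 1))} (hX : IsDisjointConfiguration X) {g g' : G}
    (h : g ≠ g') : Disjoint (vertexSupport (X g)) (vertexSupport (X g')) :=
  Finset.disjoint_left.2 fun s hs hs' =>
    h (hX.eq_of_ne_zero g g' s (mem_vertexSupport.1 hs) (mem_vertexSupport.1 hs'))

/-- The supports are a Tverberg partition of a constant map, so one of them lies in the subcomplex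
and the common value is `0`. -/
theorem vertexSupport_mem_of_nonFaceSum_eq {d r : ℕ} {G : Type*} (i : Fin r ≃ G)
    {K : Set (Finset (Fin (N + 1)))} (hK : IsSubcomplex N K) {v : EuclideanSpace ℝ (Fin d)}
    (hv : TverbergUnavoidable (fun _ => v) r K) {X : G → EuclideanSpace ℝ (Fin (N + 1))}
    (hX : IsDisjointConfiguration X) (hc : ∀ g g', nonFaceSum K (X g) = nonFaceSum K (X g'))
    (g : G) : vertexSupport (X g) ∈ K := by
  have hmem := hX.mem_stdSimp
  obtain ⟨j, hj⟩ := hv (fun j => vertexSupport (X (i j)))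
    ⟨fun j => vertexSupport_nonempty (hmem _),
      fun j j' h => hX.disjoint_vertexSupport (i.injective.ne h),
      v, Set.mem_iInter.2 fun j => ⟨X (i j), mem_simpFace_vertexSupport (hmem _), rfl⟩⟩
  rw [← nonFaceSum_eq_zero_iff hK (hmem _)] at hj ⊢
  rw [hc g (i j), hj]

theorem exists_faces_of_configuration {d r c : ℕ} {G : Type*} (i : Fin r ≃ G)
    {K : Fin (c + 1) → Set (Finset (Fin (N + 1)))} (hK₀ : K 0 = {S | S.Nonempty})
    (hK : ∀ j, IsSubcomplex N (K j)) {v : EuclideanSpace ℝ (Fin d)}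
    (hv : ∀ j, TverbergUnavoidable (fun _ => v) r (K j))
    {f : EuclideanSpace ℝ (Fin (N + 1)) → EuclideanSpace ℝ (Fin d)}
    {X : G → EuclideanSpace ℝ (Fin (N + 1))} (hX : IsDisjointConfiguration X)
    (hc : ∀ (u : Fin c) g g', nonFaceSum (K u.succ) (X g) = nonFaceSum (K u.succ) (X g'))
    {L : Set (EuclideanSpace ℝ (Fin d))} (hL : ∀ g, f (X g) ∈ L) :
    ∃ σ : Fin r → Finset (Fin (N + 1)), (∀ j, (σ j).Nonempty) ∧
      (∀ j j', j ≠ j' → Disjoint (σ j) (σ j')) ∧ (∀ j i, σ j ∈ K i) ∧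
      ∀ j, (f '' simpFace N (σ j) ∩ L).Nonempty := by
  have hmem := hX.mem_stdSimp
  refine ⟨fun j => vertexSupport (X (i j)), fun j => vertexSupport_nonempty (hmem _),
    fun j j' h => hX.disjoint_vertexSupport (i.injective.ne h), fun j => Fin.cases ?_ fun u => ?_,
    fun j => ⟨f (X (i j)), ⟨_, mem_simpFace_vertexSupport (hmem _), rfl⟩, hL _⟩⟩
  · rw [hK₀]
    exact vertexSupport_nonempty (hmem _)
  · exact vertexSupport_mem_of_nonFaceSum_eq i (hK _) (hv _) hX (hc u) _

end Constraints

/-! ### The transversal -/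

section DualVectors

variable {κ : Type*} {d p q : ℕ} {z : κ → Fin d → ℂ}

/-- The real parts (for index `0`) and imaginary parts (for the other indices) of the vectors
`z i`. -/
def dualVec (q : ℕ) (z : κ → Fin d → ℂ) (a : κ × Fin q) : EuclideanSpace ℝ (Fin d) :=
  WithLp.toLp 2 fun b => if (a.2 : ℕ) = 0 then (z a.1 b).re else (z a.1 b).im

theorem inner_dualVec (a a' : κ × Fin q) : inner ℝ (dualVec q z a) (dualVec q z a') =
    ∑ b, (if (a.2 : ℕ) = 0 then (z a.1 b).re else (z a.1 b).im) *
      (if (a'.2 : ℕ) = 0 then (z a'.1 b).re else (z a'.1 b).im) := by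
  simp only [PiLp.inner_apply, dualVec, RCLike.inner_apply, conj_trivial]
  exact Finset.sum_congr rfl fun b _ => mul_comm _ _

namespace IsDirectionSystem

variable (hz : IsDirectionSystem p z)
include hz

theorem sum_re_mul_re_add {i j : κ} (hij : i ≠ j) :
    ∑ b, (z i b).re * (z j b).re + ∑ b, (z i b).im * (z j b).im = 0 := by
  simpa [Complex.re_sum, Finset.sum_add_distrib] using
    congrArg Complex.re (hz.sum_mul_conj i j hij)

theorem sum_im_mul_re_sub {i j : κ} (hij : i ≠ j) :
    ∑ b, (z i b).im * (z j b).re - ∑ b, (z i b).re * (z j b).im = 0 := by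
  simpa [Complex.im_sum, Finset.sum_add_distrib, ← sub_eq_neg_add] using
    congrArg Complex.im (hz.sum_mul_conj i j hij)

theorem sum_re_mul_re_sub (hp : p ≠ 2) (i j : κ) :
    ∑ b, (z i b).re * (z j b).re - ∑ b, (z i b).im * (z j b).im = 0 := by
  simpa [Complex.re_sum, Finset.sum_sub_distrib] using congrArg Complex.re (hz.sum_mul hp i j)

theorem sum_re_mul_im_add (hp : p ≠ 2) (i j : κ) :
    ∑ b, (z i b).re * (z j b).im + ∑ b, (z i b).im * (z j b).re = 0 := by
  simpa [Complex.im_sum, Finset.sum_add_distrib] using congrArg Complex.im (hz.sum_mul hp i j)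

theorem inner_dualVec_eq_zero_of_eq_two (hp : p = 2) {a a' : κ × Fin 1} (h : a ≠ a') :
    inner ℝ (dualVec 1 z a) (dualVec 1 z a') = 0 := by
  have hij : a.1 ≠ a'.1 := fun hij => h (Prod.ext hij (Subsingleton.elim _ _))
  simpa only [inner_dualVec, Fin.val_eq_zero, if_true, hz.im_eq_zero hp, mul_zero,
    Finset.sum_const_zero, add_zero] using hz.sum_re_mul_re_add hij

theorem inner_dualVec_eq_zero_of_ne_two (hp : p ≠ 2) {a a' : κ × Fin 2} (h : a ≠ a') :
    inner ℝ (dualVec 2 z a) (dualVec 2 z a') = 0 := by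
  obtain ⟨i, u⟩ := a
  obtain ⟨j, v⟩ := a'
  rw [inner_dualVec]
  have hre := hz.sum_re_mul_re_sub hp i j
  have him := hz.sum_re_mul_im_add hp i j
  rcases eq_or_ne i j with rfl | hij
  · have hcomm : ∑ b, (z i b).re * (z i b).im = ∑ b, (z i b).im * (z i b).re :=
      Finset.sum_congr rfl fun b _ => mul_comm _ _
    have huv : u ≠ v := fun huv => h (congrArg _ huv)
    fin_cases u <;> fin_cases v <;>
      simp only [ne_eq, not_true, Fin.zero_eta, Fin.mk_one, if_true, one_ne_zero,
        if_false] at huv ⊢ <;> linarith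
  · have hre' := hz.sum_re_mul_re_add hij
    have him' := hz.sum_im_mul_re_sub hij
    fin_cases u <;> fin_cases v <;>
      simp only [if_true, one_ne_zero, if_false] <;> linarith

theorem inner_dualVec_eq_zero {a a' : κ × Fin (eulerDegree p)} (h : a ≠ a') :
    inner ℝ (dualVec _ z a) (dualVec _ z a') = 0 := by
  generalize hq : eulerDegree p = q at a a'
  rcases eq_or_ne p 2 with hp | hp
  · obtain rfl : 1 = q := by rw [← hq, hp, eulerDegree_two]
    exact hz.inner_dualVec_eq_zero_of_eq_two hp h
  · obtain rfl : 2 = q := by rw [← hq, eulerDegree_of_ne_two hp]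
    exact hz.inner_dualVec_eq_zero_of_ne_two hp h

theorem dualVec_ne_zero (a : κ × Fin (eulerDegree p)) : dualVec _ z a ≠ 0 := by
  intro h₀
  have hself := inner_dualVec (z := z) a a
  rw [h₀, inner_zero_left] at hself
  have hsq : ∑ b, (z a.1 b).re * (z a.1 b).re = 0 ∧ ∑ b, (z a.1 b).im * (z a.1 b).im = 0 := by
    rcases eq_or_ne p 2 with hp | hp
    · have hu : (a.2 : ℕ) = 0 := Nat.lt_one_iff.1 (a.2.2.trans_eq (by rw [hp, eulerDegree_two]))
      simpa only [hu, if_true, hz.im_eq_zero hp, mul_zero, Finset.sum_const_zero, and_true]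
        using hself.symm
    · have := hz.sum_re_mul_re_sub hp a.1 a.1
      split_ifs at hself <;> constructor <;> linarith
  simp only [Finset.sum_eq_zero_iff_of_nonneg fun _ _ => mul_self_nonneg _, mul_self_eq_zero,
    Finset.mem_univ, true_imp_iff] at hsq
  exact hz.ne_zero a.1 (funext fun b => Complex.ext (hsq.1 b) (hsq.2 b))

end IsDirectionSystem

/-- The affine subspace through `y₀` orthogonal to the dual vectors of `z`. -/
def transversal (q : ℕ) (z : κ → Fin d → ℂ) (y₀ : EuclideanSpace ℝ (Fin d)) :
    AffineSubspace ℝ (EuclideanSpace ℝ (Fin d)) :=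
  AffineSubspace.mk' y₀ (Submodule.span ℝ (Set.range (dualVec q z)))ᗮ

theorem mem_transversal {y y₀ : EuclideanSpace ℝ (Fin d)}
    (h : ∀ i, ∑ b, z i b * (y b : ℂ) = ∑ b, z i b * (y₀ b : ℂ)) : y ∈ transversal q z y₀ := by
  rw [transversal, AffineSubspace.mem_mk', vsub_eq_sub, Submodule.mem_orthogonal]
  suffices h : Submodule.span ℝ (Set.range (dualVec q z)) ≤ (ℝ ∙ (y - y₀))ᗮ from
    fun w hw => Submodule.mem_orthogonal_singleton_iff_inner_left.1 (h hw)
  rw [Submodule.span_le]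
  rintro _ ⟨⟨i, u⟩, rfl⟩
  have hre := congrArg Complex.re (h i)
  have him := congrArg Complex.im (h i)
  simp only [Complex.re_sum, Complex.im_sum, Complex.re_mul_ofReal, Complex.im_mul_ofReal]
    at hre him
  rw [SetLike.mem_coe, Submodule.mem_orthogonal_singleton_iff_inner_left, inner_sub_right,
    sub_eq_zero]
  simp only [PiLp.inner_apply, dualVec, RCLike.inner_apply, conj_trivial]
  split_ifs
  · simpa only [mul_comm] using hre
  · simpa only [mul_comm] using him

theorem IsDirectionSystem.finrank_direction_transversal [Fintype κ] (hz : IsDirectionSystem p z)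
    (y₀ : EuclideanSpace ℝ (Fin d)) :
    eulerDegree p * Fintype.card κ +
      Module.finrank ℝ (transversal (eulerDegree p) z y₀).direction = d := by
  have hli : LinearIndependent ℝ (dualVec (eulerDegree p) z) :=
    linearIndependent_of_ne_zero_of_inner_eq_zero hz.dualVec_ne_zero
      fun a a' h => hz.inner_dualVec_eq_zero h
  have hcard := finrank_span_eq_card hli
  rw [Fintype.card_prod, Fintype.card_fin, mul_comm] at hcard
  rw [transversal, AffineSubspace.direction_mk', ← hcard,
    Submodule.finrank_add_finrank_orthogonal, finrank_euclideanSpace_fin]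

end DualVectors

section Transversal

/-- The affine subspace `L` contains the images under `f ℓ` of the points of the disjoint
configuration `X ℓ`, on which the constraint functions `F ℓ u` are constant. -/
structure IsConstrainedTransversal {ι : Type*} {G : ι → Type*} {N ρ : ι → ℕ} {d : ℕ}
    (f : ∀ ℓ, EuclideanSpace ℝ (Fin (N ℓ + 1)) → EuclideanSpace ℝ (Fin d))
    (F : ∀ ℓ, Fin (ρ ℓ) → EuclideanSpace ℝ (Fin (N ℓ + 1)) → ℝ)
    (L : AffineSubspace ℝ (EuclideanSpace ℝ (Fin d)))
    (X : ∀ ℓ, G ℓ → EuclideanSpace ℝ (Fin (N ℓ + 1))) : Prop where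
  isDisjointConfiguration : ∀ ℓ, IsDisjointConfiguration (X ℓ)
  constraint_eq : ∀ ℓ u g g', F ℓ u (X ℓ g) = F ℓ u (X ℓ g')
  map_mem : ∀ ℓ g, f ℓ (X ℓ g) ∈ L

variable {m d p : ℕ} {e ρ N : Fin (m + 1) → ℕ}
  {f : ∀ ℓ, EuclideanSpace ℝ (Fin (N ℓ + 1)) → EuclideanSpace ℝ (Fin d)}
  {F : ∀ ℓ, Fin (ρ ℓ) → EuclideanSpace ℝ (Fin (N ℓ + 1)) → ℝ}

theorem eulerDegree_dvd_of_even_mul {n : ℕ} (hp : p.Prime) (h : Even (p * n)) :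
    eulerDegree p ∣ n := by
  rcases eq_or_ne p 2 with rfl | h2
  · exact one_dvd n
  · rw [eulerDegree_of_ne_two h2]
    exact ((Nat.even_mul.1 h).resolve_left (mt hp.even_iff.1 h2)).two_dvd

theorem exists_transversal_of_eulerDegree_dvd [Fact p.Prime] (hmd : m ≤ d)
    (hdvd : eulerDegree p ∣ d - m) (hN : ∀ ℓ, (p ^ e ℓ - 1) * (d - m + ρ ℓ + 1) ≤ N ℓ)
    (hf : ∀ ℓ, ContinuousOn (f ℓ) (stdSimp (N ℓ)))
    (hF : ∀ ℓ u, ContinuousOn (F ℓ u) (stdSimp (N ℓ))) :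
    ∃ (L : AffineSubspace ℝ (EuclideanSpace ℝ (Fin d)))
      (X : ∀ ℓ, (Fin (e ℓ) → ZMod p) → EuclideanSpace ℝ (Fin (N ℓ + 1))),
      Module.finrank ℝ L.direction = m ∧ IsConstrainedTransversal f F L X := by
  obtain ⟨k, hk⟩ := hdvd
  obtain ⟨z, X, hz, hX, hFX, hfX⟩ := exists_configurations_of_constant_values (k := k) p (by omega)
    (by simpa only [← hk] using hN) (f := fun ℓ b x => f ℓ x b) (fun ℓ b => by fun_prop) hF
  refine ⟨transversal (eulerDegree p) z (f 0 (X 0 0)), X, ?_, hX, hFX,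
    fun ℓ g => mem_transversal fun i => hfX i ℓ 0 g 0⟩
  have hrank := hz.finrank_direction_transversal (f 0 (X 0 0))
  rw [Fintype.card_fin, ← hk] at hrank
  omega

/-- A single map needs no directions: its coordinates are added to the functions `F`. -/
theorem exists_transversal_of_eq_zero [Fact p.Prime] (hm : m = 0)
    (hN : ∀ ℓ, (p ^ e ℓ - 1) * (d + ρ ℓ + 1) ≤ N ℓ)
    (hf : ∀ ℓ, ContinuousOn (f ℓ) (stdSimp (N ℓ)))
    (hF : ∀ ℓ u, ContinuousOn (F ℓ u) (stdSimp (N ℓ))) :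
    ∃ (L : AffineSubspace ℝ (EuclideanSpace ℝ (Fin d)))
      (X : ∀ ℓ, (Fin (e ℓ) → ZMod p) → EuclideanSpace ℝ (Fin (N ℓ + 1))),
      Module.finrank ℝ L.direction = m ∧ IsConstrainedTransversal f F L X := by
  subst hm
  let F' : ∀ ℓ, Fin (d + ρ ℓ) → EuclideanSpace ℝ (Fin (N ℓ + 1)) → ℝ :=
    fun ℓ => Fin.append (fun b x => f ℓ x b) (F ℓ)
  have hF' : ∀ ℓ u, ContinuousOn (F' ℓ u) (stdSimp (N ℓ)) := fun ℓ =>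
    Fin.addCases (fun b => by simpa only [F', Fin.append_left] using by fun_prop)
      fun u => by simpa only [F', Fin.append_right] using hF ℓ u
  obtain ⟨-, X, -, hX, hFX, -⟩ := exists_configurations_of_constant_values (k := 0) (d := 0) p
    (by omega) (by simpa using hN) (f := fun _ => Fin.elim0) (fun _ b => b.elim0) hF'
  refine ⟨AffineSubspace.mk' (f 0 (X 0 0)) ⊥, X, by simp, hX, fun ℓ u g g' => ?_, fun ℓ g => ?_⟩
  · simpa only [F', Fin.append_right] using hFX ℓ (Fin.natAdd d u) g g'
  · obtain rfl := Fin.fin_one_eq_zero ℓ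
    have hconst : f 0 (X 0 g) = f 0 (X 0 0) := by
      ext b
      simpa only [F', Fin.append_left] using hFX 0 (Fin.castAdd (ρ 0) b) g 0
    rw [hconst]
    exact AffineSubspace.self_mem_mk' _ _

theorem exists_transversal [Fact p.Prime] (hmd : m ≤ d) (h : Even (p * (d - m)) ∨ m = 0)
    (hN : ∀ ℓ, (p ^ e ℓ - 1) * (d - m + ρ ℓ + 1) ≤ N ℓ)
    (hf : ∀ ℓ, ContinuousOn (f ℓ) (stdSimp (N ℓ)))
    (hF : ∀ ℓ u, ContinuousOn (F ℓ u) (stdSimp (N ℓ))) :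
    ∃ (L : AffineSubspace ℝ (EuclideanSpace ℝ (Fin d)))
      (X : ∀ ℓ, (Fin (e ℓ) → ZMod p) → EuclideanSpace ℝ (Fin (N ℓ + 1))),
      Module.finrank ℝ L.direction = m ∧ IsConstrainedTransversal f F L X := by
  rcases h with heven | hm
  · have hdvd := eulerDegree_dvd_of_even_mul (Fact.out : p.Prime) heven
    exact exists_transversal_of_eulerDegree_dvd hmd hdvd hN hf hF
  · exact exists_transversal_of_eq_zero hm (by simpa only [hm, Nat.sub_zero] using hN) hf hF

end Transversal

end TransversalTverberg

/-- A constraint topological transversal Tverberg theorem. -/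
theorem constraint_topological_transversal_tverberg
    (m d p : ℕ) (hp : p.Prime) (hmd : m < d)
    (e : Fin (m + 1) → ℕ) (c : Fin (m + 1) → ℕ)
    (heven : Even (p * (d - m)) ∨ m = 0)
    (N : Fin (m + 1) → ℕ) (hN : ∀ ℓ, N ℓ = (p ^ e ℓ - 1) * (d + 1 + c ℓ - m))
    (K : ∀ ℓ : Fin (m + 1), Fin (c ℓ + 1) → Set (Finset (Fin (N ℓ + 1))))
    (hKzero : ∀ ℓ, K ℓ 0 = {S : Finset (Fin (N ℓ + 1)) | S.Nonempty})
    (hKsub : ∀ ℓ j, IsSubcomplex (N ℓ) (K ℓ j))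
    (hKunavoid : ∀ ℓ j,
      ∀ g : EuclideanSpace ℝ (Fin (N ℓ + 1)) → EuclideanSpace ℝ (Fin d),
        ContinuousOn g (stdSimp (N ℓ)) → TverbergUnavoidable g (p ^ e ℓ) (K ℓ j))
    (f : ∀ ℓ : Fin (m + 1), EuclideanSpace ℝ (Fin (N ℓ + 1)) → EuclideanSpace ℝ (Fin d))
    (hf : ∀ ℓ, ContinuousOn (f ℓ) (stdSimp (N ℓ))) :
    ∃ L : AffineSubspace ℝ (EuclideanSpace ℝ (Fin d)),
      (L : Set (EuclideanSpace ℝ (Fin d))).Nonempty ∧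
      Module.finrank ℝ L.direction = m ∧
      ∀ ℓ : Fin (m + 1), ∃ σ : Fin (p ^ e ℓ) → Finset (Fin (N ℓ + 1)),
        (∀ j, (σ j).Nonempty) ∧
        (∀ j j', j ≠ j' → Disjoint (σ j) (σ j')) ∧
        (∀ j, ∀ i : Fin (c ℓ + 1), σ j ∈ K ℓ i) ∧
        (∀ j, (f ℓ '' simpFace (N ℓ) (σ j) ∩ (L : Set (EuclideanSpace ℝ (Fin d)))).Nonempty) := by
  have : Fact p.Prime := ⟨hp⟩
  obtain ⟨L, X, hrank, hX⟩ := TransversalTverberg.exists_transversal (e := e) hmd.le heven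
    (fun ℓ => (Nat.mul_le_mul_left _ (by omega)).trans_eq (hN ℓ).symm) hf
    (F := fun ℓ u => TransversalTverberg.nonFaceSum (K ℓ u.succ))
    fun ℓ u => (TransversalTverberg.continuous_nonFaceSum _).continuousOn
  refine ⟨L, ⟨_, hX.map_mem 0 0⟩, hrank, fun ℓ => ?_⟩
  have hcard : Fintype.card (Fin (e ℓ) → ZMod p) = p ^ e ℓ := by
    rw [Fintype.card_fun, ZMod.card, Fintype.card_fin]
  exact TransversalTverberg.exists_faces_of_configuration (Fintype.equivFinOfCardEq hcard).symm
    (hKzero ℓ) (hKsub ℓ) (fun j => hKunavoid ℓ j (fun _ => 0) continuousOn_const)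
    (hX.isDisjointConfiguration ℓ) (hX.constraint_eq ℓ) (hX.map_mem ℓ)
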